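/- arXiv:2003.08083 — 4 statements merged into one kernel-verified Lean document; each statement's English description precedes it below -/
import Mathlib

section
/- For every prime q with 3 < q < 10^5, every integer greater than two can be written as the sum of a prime and a square-free number co-prime to q. -/
namespace PSF

/-! ### Part 1: the finite verification -/

/-- `f x`, written so that the kernel evaluates `x` to a literal first. -/
def force (x : ℕ) (f : ℕ → ℕ) : ℕ := Nat.rec (f 0) (fun n _ => f (Nat.succ n)) x

/-- `k` doublings of a bit pattern of length `D`. -/
def dbl (k : ℕ) : ℕ → ℕ → ℕ :=
  Nat.rec (fun P _ => P) (fun _ ih P D =>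
    force (Nat.lor P (Nat.shiftLeft P D)) (fun Q => ih Q (Nat.add D D))) k

/-- Add to `acc` the bits of the multiples of `D` in the window `[A, A + W)`, seen from `A`. -/
def addm (A W D acc : ℕ) (cont : ℕ → ℕ) : ℕ :=
  force (Nat.mod (Nat.sub D (Nat.mod A D)) D) (fun o =>
    Bool.rec (cont acc) (force (Nat.lor acc (Nat.shiftLeft
      (dbl (Nat.log2 (Nat.succ (Nat.mul 2 (Nat.div W D)))) 1 D) o)) cont) (Nat.ble o W))

/-- Add the multiples of the squares of `t, t + 2, …`. -/
def nsq (A W : ℕ) (k : ℕ) : ℕ → ℕ → ℕ := Nat.rec (fun _ acc => acc)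
  (fun _ ih t acc => force t (fun t => force (Nat.mul t t)
    (fun D => addm A W D acc (ih (Nat.succ (Nat.succ t)))))) k

/-- The mask of the non-square-free numbers in a window. -/
def mask (A W k : ℕ) : ℕ := addm A W 4 0 (nsq A W k 3)

/-- Pairs of primes whose difference has no prime factor above 3. -/
def prs : List (ℕ × ℕ) := [(37, 73), (11, 83), (5, 113), (31, 67), (53, 89), (43, 79), (29, 101),
  (71, 107), (61, 97), (19, 127), (23, 59), (13, 109), (17, 41), (3, 7), (2, 29), (101, 109),
  (2, 3), (13, 17), (43, 59), (2, 5)]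

/-- Combine shifted masks. -/
def comb (M : ℕ) (l : List (ℕ × ℕ)) (B : ℕ) : ℕ :=
  List.foldr (fun a acc => Nat.land acc (Nat.lor (Nat.shiftLeft M a.1) (Nat.shiftLeft M a.2))) B l

/-- Check of a window. -/
def chkw (W k w : ℕ) : Bool :=
  Nat.beq (force (Nat.mul w W) (fun A => force (mask A (Nat.add W 128) k) (fun M =>
    Nat.shiftRight (comb M prs (2 ^ (Nat.add W 128) - 1)) 128))) 0

/-- Check of several windows. -/
def chkl (W k : ℕ) (s : ℕ) (j : ℕ) : Bool :=
  Nat.rec true (fun i ih => Bool.rec false ih (chkw W k (Nat.add s i))) j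

theorem force_eq (x : ℕ) (f : ℕ → ℕ) : force x f = f x := by cases x <;> rfl

theorem dbl_spec (D k : ℕ) : ∀ P E, D ∣ E → (∀ m < E, D ∣ m → P.testBit m = true) →
    ∀ m < E * 2 ^ k, D ∣ m → (dbl k P E).testBit m = true := by
  induction k with
  | zero => intro P E _ h m hm; simpa [dbl] using h m (by simpa using hm)
  | succ k ih =>
    intro P E hE h m hm hd
    have e : dbl (k + 1) P E = dbl k (P ||| (P <<< E)) (E + E) := by
      change force (P ||| (P <<< E)) (fun Q => dbl k Q (E + E)) = _
      rw [force_eq]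
    rw [e]
    apply ih _ _ (dvd_add hE hE) _ m (by rw [pow_succ] at hm; linarith) hd
    intro m hm hd
    rw [Nat.testBit_or, Nat.testBit_shiftLeft]
    by_cases h1 : m < E
    · rw [h m h1 hd]; rfl
    · rw [h (m - E) (by omega) (Nat.dvd_sub hd hE)]
      have : m ≥ E := by omega
      simp [this]

theorem addm_spec (A W D acc : ℕ) (hD : 0 < D) (cont : ℕ → ℕ) :
    ∃ acc', addm A W D acc cont = cont acc' ∧ (∀ i, acc.testBit i = true → acc'.testBit i = true) ∧
      ∀ i < W, D ∣ A + i → acc'.testBit i = true := by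
  unfold addm
  rw [force_eq]
  set o := Nat.mod (Nat.sub D (Nat.mod A D)) D with ho
  have ho' : o = (D - A % D) % D := ho
  have key : ∀ i, D ∣ A + i → o ≤ i ∧ D ∣ i - o := by
    intro i hi
    have h1 : D ∣ A + o := by
      rw [ho', Nat.dvd_iff_mod_eq_zero, Nat.add_mod, Nat.mod_mod, ← Nat.add_mod]
      have := Nat.mod_lt A hD
      have h2 := Nat.div_add_mod A D
      rw [← Nat.dvd_iff_mod_eq_zero]
      refine ⟨A / D + 1, ?_⟩
      rw [mul_add, mul_one]; omega
    have hlt : o < D := by rw [ho']; exact Nat.mod_lt _ hD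
    have hle : o ≤ i := by
      by_contra hcon
      have h3 : D ∣ (A + o) - (A + i) := Nat.dvd_sub h1 hi
      have := Nat.le_of_dvd (by omega) h3
      omega
    refine ⟨hle, ?_⟩
    have h3 : D ∣ (A + i) - (A + o) := Nat.dvd_sub hi h1
    rwa [Nat.add_sub_add_left] at h3
  cases hb : Nat.ble o W with
  | false =>
    refine ⟨acc, rfl, fun i h => h, fun i hi hd => ?_⟩
    have h1 : ¬ (o ≤ W) := by
      intro h; rw [Nat.ble_eq_true_of_le h] at hb; exact absurd hb (by simp)
    have := (key i hd).1
    omega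
  | true =>
    simp only
    rw [force_eq]
    refine ⟨_, rfl, fun i h => ?_, fun i hi hd => ?_⟩
    · change (acc ||| _).testBit i = true
      rw [Nat.testBit_or, h]; rfl
    · change (acc ||| (_ <<< o)).testBit i = true
      obtain ⟨h1, h2⟩ := key i hd
      rw [Nat.testBit_or, Nat.testBit_shiftLeft]
      have h3 := dbl_spec D (Nat.log2 (Nat.succ (Nat.mul 2 (Nat.div W D)))) 1 D dvd_rfl
        (by
          intro m hm hd
          rw [Nat.eq_zero_of_dvd_of_lt hd hm]; rfl) (i - o)
        (by
          have h4 : Nat.succ (Nat.mul 2 (Nat.div W D)) = 2 * (W / D) + 1 := rfl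
          rw [h4]
          have h5 : 2 * (W / D) + 1 < 2 ^ (Nat.log2 (2 * (W / D) + 1) + 1) := Nat.lt_log2_self
          rw [pow_succ] at h5
          have h6 : W / D + 1 ≤ 2 ^ (Nat.log2 (2 * (W / D) + 1)) := by omega
          have h7 : W < D * (W / D + 1) := by
            have := Nat.lt_mul_div_succ W hD; simpa using this
          have h8 : D * (W / D + 1) ≤ D * 2 ^ (Nat.log2 (2 * (W / D) + 1)) :=
            Nat.mul_le_mul_left _ h6
          omega) h2
      rw [h3]; simp [h1]

theorem nsq_spec (A W k : ℕ) : ∀ t acc, 0 < t →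
    (∀ i, acc.testBit i = true → (nsq A W k t acc).testBit i = true) ∧
    (∀ j < k, ∀ i < W, (t + 2 * j) * (t + 2 * j) ∣ A + i →
      (nsq A W k t acc).testBit i = true) := by
  induction k with
  | zero => intro t acc _; exact ⟨fun i h => h, fun j hj => absurd hj (by omega)⟩
  | succ k ih =>
    intro t acc ht
    have e : nsq A W (k + 1) t acc = addm A W (t * t) acc (nsq A W k (t + 2)) := by
      change force t (fun t => force (t * t) (fun D => addm A W D acc (nsq A W k (t + 2)))) = _
      rw [force_eq, force_eq]
    rw [e]
    obtain ⟨acc', h1, h2, h3⟩ := addm_spec A W (t * t) acc (by positivity) (nsq A W k (t + 2))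
    rw [h1]
    obtain ⟨h4, h5⟩ := ih (t + 2) acc' (by omega)
    refine ⟨fun i h => h4 i (h2 i h), fun j hj i hi hd => ?_⟩
    rcases j with _ | j
    · exact h4 i (h3 i hi (by simpa using hd))
    · apply h5 j (by omega) i hi
      have : t + 2 + 2 * j = t + 2 * (j + 1) := by ring
      rwa [this]

theorem mask_spec (A W k i : ℕ) (hi : i < W) (hk : A + i < (2 * k + 3) * (2 * k + 3))
    (h : (mask A W k).testBit i = false) : Squarefree (A + i) := by
  unfold mask at h
  obtain ⟨acc', h1, h2, h3⟩ := addm_spec A W 4 0 (by norm_num) (nsq A W k 3)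
  rw [h1] at h
  obtain ⟨h4, h5⟩ := nsq_spec A W k 3 acc' (by norm_num)
  have hpos : 0 < A + i := by
    rcases Nat.eq_zero_or_pos (A + i) with h0 | h0
    · have := h4 i (h3 i hi (by rw [h0]; exact dvd_zero 4))
      rw [h] at this; exact absurd this (by simp)
    · exact h0
  rw [Nat.squarefree_iff_prime_squarefree]
  intro p hp hd
  rcases hp.eq_two_or_odd' with h2' | hodd
  · subst h2'
    have := h4 i (h3 i hi hd)
    rw [h] at this; exact absurd this (by simp)
  · have hle := Nat.le_of_dvd hpos hd
    have hlt : p < 2 * k + 3 := by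
      by_contra hcon
      have := Nat.mul_le_mul (not_lt.mp hcon) (not_lt.mp hcon)
      omega
    obtain ⟨m, hm⟩ := hodd
    have hp2 := hp.two_le
    have := h5 (m - 1) (by omega) i hi (by
      have : 3 + 2 * (m - 1) = p := by omega
      rwa [this])
    rw [h] at this; exact absurd this (by simp)

theorem comb_spec (M B i : ℕ) (hB : B.testBit i = true) (l : List (ℕ × ℕ))
    (h : (comb M l B).testBit i = false) :
    ∃ a ∈ l, (a.1 ≤ i → M.testBit (i - a.1) = false) ∧ (a.2 ≤ i → M.testBit (i - a.2) = false) := by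
  induction l with
  | nil => change B.testBit i = false at h; rw [hB] at h; exact absurd h (by simp)
  | cons a l ih =>
    change (comb M l B &&& ((M <<< a.1) ||| (M <<< a.2))).testBit i = false at h
    rw [Nat.testBit_and, Bool.and_eq_false_iff] at h
    rcases h with h | h
    · obtain ⟨b, hb, h⟩ := ih h
      exact ⟨b, List.mem_cons_of_mem _ hb, h⟩
    · refine ⟨a, List.mem_cons_self, ?_⟩
      rw [Nat.testBit_or, Bool.or_eq_false_iff, Nat.testBit_shiftLeft, Nat.testBit_shiftLeft] at h
      refine ⟨fun h1 => ?_, fun h1 => ?_⟩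
      · simpa [h1] using h.1
      · simpa [h1] using h.2

theorem chkw_spec (W k w : ℕ) (h : chkw W k w = true) (i : ℕ) (hi : 128 ≤ i) (hi' : i < W + 128)
    (hk : w * W + i < (2 * k + 3) * (2 * k + 3)) :
    ∃ a ∈ prs, (a.1 ≤ i → Squarefree (w * W + (i - a.1))) ∧
      (a.2 ≤ i → Squarefree (w * W + (i - a.2))) := by
  unfold chkw at h
  rw [force_eq, force_eq] at h
  have h := Nat.eq_of_beq_eq_true h
  change (comb (mask (w * W) (W + 128) k) prs (2 ^ (W + 128) - 1)) >>> 128 = 0 at h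
  have hb : (comb (mask (w * W) (W + 128) k) prs (2 ^ (W + 128) - 1)).testBit i = false := by
    have : i = 128 + (i - 128) := by omega
    rw [this, ← Nat.testBit_shiftRight, h, Nat.zero_testBit]
  obtain ⟨a, ha, h1, h2⟩ := comb_spec _ _ i (by
    rw [Nat.testBit_two_pow_sub_one]; simpa using hi') _ hb
  refine ⟨a, ha, fun h => ?_, fun h => ?_⟩
  · exact mask_spec _ _ k _ (by omega) (by omega) (h1 h)
  · exact mask_spec _ _ k _ (by omega) (by omega) (h2 h)

theorem chkl_spec (W k s j : ℕ) (h : chkl W k s j = true) : ∀ i < j, chkw W k (s + i) = true := by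
  induction j with
  | zero => intro i hi; omega
  | succ j ih =>
    change Bool.rec false (chkl W k s j) (chkw W k (s + j)) = true at h
    cases hc : chkw W k (s + j) with
    | false => rw [hc] at h; exact absurd h (by simp)
    | true =>
      rw [hc] at h
      intro i hi
      rcases Nat.lt_succ_iff_lt_or_eq.mp hi with h1 | h1
      · exact ih h i h1
      · rw [h1]; exact hc

theorem prs_spec : ∀ a ∈ prs, (a.1.Prime ∧ a.2.Prime) ∧ (a.1 < a.2 ∧ a.2 < 128) ∧
    a.2 - a.1 ∣ 6 ^ 7 := by
  intro a ha
  simp only [prs, List.mem_cons, List.not_mem_nil, or_false] at ha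
  rcases ha with h | h | h | h | h | h | h | h | h | h | h | h | h | h | h | h | h | h | h | h <;>
    (subst h; norm_num)

set_option maxRecDepth 100000 in
theorem chk0 : chkl 65536 2048 0 32 = true := by decide +kernel
set_option maxRecDepth 100000 in
theorem chk1 : chkl 65536 2048 32 32 = true := by decide +kernel
set_option maxRecDepth 100000 in
theorem chk2 : chkl 65536 2048 64 32 = true := by decide +kernel
set_option maxRecDepth 100000 in
theorem chk3 : chkl 65536 2048 96 32 = true := by decide +kernel
set_option maxRecDepth 100000 in
theorem chk4 : chkl 65536 2048 128 32 = true := by decide +kernel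
set_option maxRecDepth 100000 in
theorem chk5 : chkl 65536 2048 160 32 = true := by decide +kernel
set_option maxRecDepth 100000 in
theorem chk6 : chkl 65536 2048 192 32 = true := by decide +kernel
set_option maxRecDepth 100000 in
theorem chk7 : chkl 65536 2048 224 32 = true := by decide +kernel

theorem chk_all (w : ℕ) (hw : w < 256) : chkw 65536 2048 w = true := by
  have h0 := chkl_spec _ _ _ _ chk0
  have h1 := chkl_spec _ _ _ _ chk1
  have h2 := chkl_spec _ _ _ _ chk2
  have h3 := chkl_spec _ _ _ _ chk3
  have h4 := chkl_spec _ _ _ _ chk4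
  have h5 := chkl_spec _ _ _ _ chk5
  have h6 := chkl_spec _ _ _ _ chk6
  have h7 := chkl_spec _ _ _ _ chk7
  have e : w = w / 32 * 32 + w % 32 := by omega
  have hm : w % 32 < 32 := Nat.mod_lt _ (by norm_num)
  have hd : w / 32 < 8 := by omega
  rw [e]
  generalize w % 32 = m at *
  generalize w / 32 = d at *
  interval_cases d
  exacts [h0 m hm, h1 m hm, h2 m hm, h3 m hm, h4 m hm, h5 m hm, h6 m hm, h7 m hm]

/-- Bad small case check. -/
def smallOK (n : ℕ) : Bool :=
  [2, 3, 5, 7, 11, 13, 17, 19, 23].any fun p => [2, 3, 5, 7, 11, 13, 17, 19, 23].any fun p' =>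
    decide (p < n) && decide (p' < n) && decide (Nat.gcd (n - p) (n - p') ∣ 6) &&
    [2, 3, 5, 7, 11].all fun r => decide (¬ r * r ∣ n - p) && decide (¬ r * r ∣ n - p')

theorem small_all : ∀ n < 128, 2 < n → smallOK n = true := by decide +kernel

theorem sqf_of_small (m : ℕ) (h0 : 0 < m) (hm : m < 128)
    (h : ∀ r ∈ [2, 3, 5, 7, 11], ¬ r * r ∣ m) : Squarefree m := by
  rw [Nat.squarefree_iff_prime_squarefree]
  intro p hp hd
  have hle := Nat.le_of_dvd h0 hd
  have : p < 12 := by by_contra hc; have := Nat.mul_le_mul (not_lt.mp hc) (not_lt.mp hc); omega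
  have hp2 := hp.two_le
  have hm : p ∈ [2, 3, 5, 7, 11] := by
    interval_cases p <;> revert hp <;> norm_num
  exact h p hm hd

theorem finite_part (q : ℕ) (hq : q.Prime) (hq3 : 3 < q) (n : ℕ) (hn : 2 < n)
    (hN : n < 2 ^ 24) :
    ∃ p k : ℕ, p.Prime ∧ Squarefree k ∧ Nat.gcd k q = 1 ∧ n = p + k := by
  have nq6 : ∀ e, ¬ q ∣ 6 ^ e := by
    intro e h
    have h1 := hq.dvd_of_dvd_pow h
    have := Nat.le_of_dvd (by norm_num) h1
    interval_cases q <;> revert h1 hq <;> norm_num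
  have fin : ∀ p p', p.Prime → p'.Prime → p < n → p' < n → Squarefree (n - p) →
      Squarefree (n - p') → ¬ (q ∣ n - p ∧ q ∣ n - p') →
      ∃ p k : ℕ, p.Prime ∧ Squarefree k ∧ Nat.gcd k q = 1 ∧ n = p + k := by
    intro p p' hp hp' hpn hpn' hs hs' hnd
    by_cases h : q ∣ n - p
    · have h' : ¬ q ∣ n - p' := fun h2 => hnd ⟨h, h2⟩
      exact ⟨p', n - p', hp', hs', ((hq.coprime_iff_not_dvd).mpr h').symm, by omega⟩
    · exact ⟨p, n - p, hp, hs, ((hq.coprime_iff_not_dvd).mpr h).symm, by omega⟩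
  by_cases hs : n < 128
  · have h := small_all n hs hn
    simp only [smallOK, List.any_eq_true, Bool.and_eq_true, decide_eq_true_eq,
      List.all_eq_true] at h
    obtain ⟨p, hp, p', hp', ⟨⟨h1, h2⟩, h3⟩, h4⟩ := h
    have pr : ∀ x ∈ [2, 3, 5, 7, 11, 13, 17, 19, 23], Nat.Prime x := by
      intro x hx
      simp only [List.mem_cons, List.not_mem_nil, or_false] at hx
      rcases hx with h | h | h | h | h | h | h | h | h <;> (subst h; norm_num)
    refine fin p p' (pr p hp) (pr p' hp') h1 h2 ?_ ?_ ?_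
    · exact sqf_of_small _ (by omega) (by omega) fun r hr => (h4 r hr).1
    · exact sqf_of_small _ (by omega) (by omega) fun r hr => (h4 r hr).2
    · rintro ⟨ha, hb⟩
      exact nq6 1 (((Nat.dvd_gcd ha hb).trans h3).trans (by norm_num))
  · set w := (n - 128) / 65536 with hw
    set i := (n - 128) % 65536 + 128 with hi
    have e : w * 65536 + i = n := by omega
    have hi2 : i < 65536 + 128 := by omega
    have hw2 : w < 256 := by omega
    obtain ⟨a, ha, h1, h2⟩ := chkw_spec 65536 2048 w (chk_all w hw2) i (by omega) hi2 (by omega)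
    obtain ⟨⟨hp1, hp2⟩, ⟨h3, h4⟩, h5⟩ := prs_spec a ha
    have e1 : w * 65536 + (i - a.1) = n - a.1 := by omega
    have e2 : w * 65536 + (i - a.2) = n - a.2 := by omega
    rw [e1] at h1
    rw [e2] at h2
    refine fin a.1 a.2 hp1 hp2 (by omega) (by omega) (h1 (by omega)) (h2 (by omega)) ?_
    rintro ⟨ha, hb⟩
    have : q ∣ (n - a.1) - (n - a.2) := Nat.dvd_sub ha hb
    have e3 : (n - a.1) - (n - a.2) = a.2 - a.1 := by omega
    rw [e3] at this
    exact nq6 7 (this.trans h5)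

end PSF
namespace PSF
open Finset

/-! ### Part 2: an upper bound for primes in a residue class -/

/-- The weight of a modulus. -/
noncomputable def wt (K : ℕ) : ℝ :=
  Real.log K + ∑ p ∈ K.primeFactors, Real.log p / ((p : ℝ) - 1)

theorem wt_nonneg (K : ℕ) : 0 ≤ wt K := by
  unfold wt
  have h1 : 0 ≤ Real.log K := Real.log_natCast_nonneg K
  have h2 : 0 ≤ ∑ p ∈ K.primeFactors, Real.log p / ((p : ℝ) - 1) := by
    apply Finset.sum_nonneg
    intro p hp
    have : (2 : ℝ) ≤ p := by exact_mod_cast (Nat.prime_of_mem_primeFactors hp).two_le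
    exact div_nonneg (Real.log_natCast_nonneg p) (by linarith)
  linarith

theorem dvd_progression (K a J B : ℕ) (hB : B ∣ J.factorial) (hBK : Nat.Coprime K B) :
    B ∣ ∏ j ∈ range (J + 1), (a + K * j) := by
  have hB0 : B ≠ 0 := fun h => by
    rw [h] at hB; exact J.factorial_ne_zero (Nat.eq_zero_of_zero_dvd hB)
  have : NeZero B := ⟨hB0⟩
  rw [← ZMod.natCast_eq_zero_iff]
  set c : ℕ := ((a : ZMod B) * (K : ZMod B)⁻¹).val with hc
  have hcc : (c : ZMod B) = (a : ZMod B) * (K : ZMod B)⁻¹ := by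
    rw [hc, ZMod.natCast_val, ZMod.cast_id', id]
  have hK := ZMod.coe_mul_inv_eq_one K hBK
  have h1 : ∀ j ∈ range (J + 1), ((a : ZMod B) + K * j) = K * ((c + j : ℕ) : ZMod B) := by
    intro j _
    push_cast
    rw [hcc]
    linear_combination (-(a : ZMod B)) * hK
  push_cast
  rw [Finset.prod_congr rfl h1, Finset.prod_mul_distrib,
    ← Nat.cast_prod (fun j => c + j), ← Nat.ascFactorial_eq_prod_range]
  have h2 : B ∣ c.ascFactorial (J + 1) :=
    hB.trans ((Nat.factorial_dvd_factorial (Nat.le_succ J)).trans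
      (Nat.factorial_dvd_ascFactorial c (J + 1)))
  rw [(ZMod.natCast_eq_zero_iff _ _).mpr h2, mul_zero]

theorem coprime_part (K J : ℕ) (hK : 0 < K) : ∃ B, B ∣ J.factorial ∧ Nat.Coprime K B ∧
    (∀ p, p.Prime → p ∣ B → p ≤ J) ∧ 0 < B ∧
    Real.log (J.factorial) ≤
      Real.log B + J * ∑ p ∈ K.primeFactors, Real.log p / ((p : ℝ) - 1) := by
  have hJ := J.factorial_ne_zero
  set f := J.factorial.factorization with hf
  have hprod : ∏ p ∈ J.factorial.primeFactors, p ^ f p = J.factorial :=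
    Nat.prod_factorization_pow_eq_self hJ
  set D := ∏ p ∈ J.factorial.primeFactors with p ∣ K, p ^ f p with hD
  set B := ∏ p ∈ J.factorial.primeFactors with ¬ p ∣ K, p ^ f p with hB
  have hDB : D * B = J.factorial := by
    rw [hD, hB, Finset.prod_filter_mul_prod_filter_not, hprod]
  have hBd : B ∣ J.factorial := ⟨D, by rw [← hDB, mul_comm]⟩
  have hB0 : 0 < B := Nat.pos_of_dvd_of_pos hBd (Nat.pos_of_ne_zero hJ)
  have hD0 : 0 < D := Nat.pos_of_dvd_of_pos ⟨B, hDB.symm⟩ (Nat.pos_of_ne_zero hJ)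
  refine ⟨B, hBd, ?_, ?_, hB0, ?_⟩
  · apply Nat.Coprime.prod_right
    intro p hp
    simp only [mem_filter] at hp
    exact Nat.Coprime.pow_right _
      (((Nat.prime_of_mem_primeFactors hp.1).coprime_iff_not_dvd.mpr hp.2).symm)
  · intro p hp hd
    exact (hp.dvd_factorial).mp (hd.trans hBd)
  · rw [← hDB]
    push_cast
    rw [Real.log_mul (by positivity) (by positivity), add_comm]
    gcongr
    rw [hD]
    push_cast
    rw [Real.log_prod (fun p hp => by
      have := (Nat.prime_of_mem_primeFactors (mem_filter.mp hp).1).pos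
      positivity), Finset.mul_sum]
    have hsub : (J.factorial.primeFactors.filter (· ∣ K)) ⊆ K.primeFactors := by
      intro p hp
      simp only [mem_filter] at hp
      exact Nat.mem_primeFactors.mpr ⟨Nat.prime_of_mem_primeFactors hp.1, hp.2, hK.ne'⟩
    refine le_trans (Finset.sum_le_sum ?_) (Finset.sum_le_sum_of_subset_of_nonneg hsub ?_)
    · intro p hp
      have hpp := Nat.prime_of_mem_primeFactors (mem_filter.mp hp).1
      have : Fact p.Prime := ⟨hpp⟩
      have h2 : (2 : ℝ) ≤ p := by exact_mod_cast hpp.two_le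
      have h3 : ((p : ℝ) - 1) * f p ≤ J := by
        have h4 := sub_one_mul_padicValNat_factorial (p := p) J
        have h5 : (p - 1) * f p ≤ J := by
          rw [hf, Nat.factorization_def _ hpp, h4]; omega
        have h6 : (((p - 1) * f p : ℕ) : ℝ) ≤ J := by exact_mod_cast h5
        rw [Nat.cast_mul, Nat.cast_sub hpp.one_le] at h6
        simpa using h6
      have hl : 0 ≤ Real.log p := Real.log_natCast_nonneg p
      rw [Real.log_pow, mul_div_assoc', le_div_iff₀ (by linarith)]
      nlinarith
    · intro p hp _
      have : (2 : ℝ) ≤ p := by exact_mod_cast (Nat.prime_of_mem_primeFactors hp).two_le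
      have := Real.log_natCast_nonneg p
      have h : (0 : ℝ) ≤ (p : ℝ) - 1 := by linarith
      positivity

theorem upper_one (K x : ℕ) (hK : 1 < K) (A : Finset ℕ)
    (hA : ∀ p ∈ A, p.Prime ∧ x / K < p ∧ p ≤ x)
    (hc : ∀ p ∈ A, ∀ p' ∈ A, p % K = p' % K) :
    ∑ p ∈ A, Real.log p ≤ ((x / K : ℕ) : ℝ) * wt K + Real.log (x + K) := by
  have hw := wt_nonneg K
  have hK1 : (1 : ℝ) < K := by exact_mod_cast hK
  have hlog0 : 0 ≤ Real.log ((x : ℝ) + K) := by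
    apply Real.log_nonneg
    have : (0 : ℝ) ≤ x := Nat.cast_nonneg x
    linarith
  have hJw : 0 ≤ ((x / K : ℕ) : ℝ) * wt K := mul_nonneg (Nat.cast_nonneg _) hw
  rcases A.eq_empty_or_nonempty with rfl | ⟨p0, hp0⟩
  · simp; linarith
  obtain ⟨hp0p, hp0l, hp0u⟩ := hA p0 hp0
  by_cases hcop : Nat.Coprime p0 K
  swap
  · have hd : p0 ∣ K := by
      by_contra h; exact hcop ((hp0p.coprime_iff_not_dvd).mpr h)
    have hs : A ⊆ {p0} := by
      intro p hp
      have h1 : p ≡ p0 [MOD p0] := Nat.ModEq.of_dvd hd (hc p hp p0 hp0)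
      have h2 : p0 ∣ p := by
        have : p % p0 = 0 := by rw [h1]; simp
        exact Nat.dvd_of_mod_eq_zero this
      rw [mem_singleton]
      exact ((Nat.prime_dvd_prime_iff_eq hp0p (hA p hp).1).mp h2).symm
    calc ∑ p ∈ A, Real.log p ≤ ∑ p ∈ {p0}, Real.log p :=
          Finset.sum_le_sum_of_subset_of_nonneg hs fun p _ _ => Real.log_natCast_nonneg p
      _ = Real.log p0 := by simp
      _ ≤ Real.log (x + K) := by
          apply Real.log_le_log (by exact_mod_cast hp0p.pos)
          have : (p0 : ℝ) ≤ x := by exact_mod_cast hp0u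
          linarith
      _ ≤ _ := by linarith
  set J := x / K with hJ
  set a := p0 % K with ha
  have ha0 : 0 < a := by
    rcases Nat.eq_zero_or_pos a with h | h
    · have : K ∣ p0 := Nat.dvd_of_mod_eq_zero h
      have := Nat.eq_one_of_dvd_coprimes hcop this dvd_rfl
      omega
    · exact h
  have haK : a ≤ K := (Nat.mod_lt _ (by omega)).le
  set P := ∏ j ∈ range (J + 1), (a + K * j) with hP
  have hP0 : 0 < P := Finset.prod_pos fun j _ => by omega
  have hPle : P ≤ K ^ (J + 1) * (J + 1).factorial := by
    have e : K ^ (J + 1) = ∏ j ∈ range (J + 1), K := by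
      rw [Finset.prod_const, Finset.card_range]
    rw [hP, ← Finset.prod_range_add_one_eq_factorial, e, ← Finset.prod_mul_distrib]
    apply Finset.prod_le_prod'
    intro j _
    rw [mul_add, mul_one]; omega
  obtain ⟨B, hBJ, hBK, hBp, hB0, hBlog⟩ := coprime_part K J (by omega)
  have hBP : B ∣ P := dvd_progression K a J B hBJ hBK
  have hAP : ∏ p ∈ A, p ∣ P := by
    apply Finset.prod_primes_dvd
    · intro p hp; exact (hA p hp).1.prime
    · intro p hp
      have e : p = a + K * (p / K) := by
        rw [ha, ← hc p hp p0 hp0]; exact (Nat.mod_add_div p K).symm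
      have hm : p / K ∈ range (J + 1) := by
        rw [mem_range, Nat.lt_succ_iff]; exact Nat.div_le_div_right (hA p hp).2.2
      have := Finset.dvd_prod_of_mem (fun j => a + K * j) hm
      simp only [← e] at this
      exact this
  have hcopr : Nat.Coprime B (∏ p ∈ A, p) := by
    apply Nat.Coprime.prod_right
    intro p hp
    apply Nat.Coprime.symm
    rw [(hA p hp).1.coprime_iff_not_dvd]
    intro h
    have := hBp p (hA p hp).1 h
    have := (hA p hp).2.1
    omega
  have hdvd := Nat.Coprime.mul_dvd_of_dvd_of_dvd hcopr hBP hAP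
  have hle : B * ∏ p ∈ A, p ≤ K ^ (J + 1) * (J + 1).factorial :=
    (Nat.le_of_dvd hP0 hdvd).trans hPle
  have hprod0 : 0 < ∏ p ∈ A, p := Finset.prod_pos fun p hp => (hA p hp).1.pos
  have hR : (B : ℝ) * ((∏ p ∈ A, p : ℕ) : ℝ) ≤ (K : ℝ) ^ (J + 1) * (((J : ℝ) + 1) * J.factorial) := by
    have : ((B * ∏ p ∈ A, p : ℕ) : ℝ) ≤ ((K ^ (J + 1) * (J + 1).factorial : ℕ) : ℝ) := by
      exact_mod_cast hle
    rw [Nat.factorial_succ] at this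
    push_cast at this ⊢
    exact this
  have hBr : (0 : ℝ) < B := by exact_mod_cast hB0
  have hpr : (0 : ℝ) < ((∏ p ∈ A, p : ℕ) : ℝ) := by exact_mod_cast hprod0
  have hl := Real.log_le_log (by positivity) hR
  rw [Real.log_mul hBr.ne' hpr.ne', Real.log_mul (by positivity) (by positivity),
    Real.log_mul (by positivity) (by positivity), Real.log_pow] at hl
  have hs : Real.log ((∏ p ∈ A, p : ℕ) : ℝ) = ∑ p ∈ A, Real.log p := by
    rw [Nat.cast_prod, Real.log_prod]
    intro p hp
    exact_mod_cast (hA p hp).1.ne_zero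
  rw [hs] at hl
  have h1 : Real.log K + Real.log ((J : ℝ) + 1) ≤ Real.log (x + K) := by
    rw [← Real.log_mul (by positivity) (by positivity)]
    apply Real.log_le_log (by positivity)
    have : K * (J + 1) ≤ x + K := by
      have := Nat.mul_div_le x K
      rw [← hJ] at this
      rw [mul_add]; omega
    exact_mod_cast this
  unfold wt
  push_cast at hl
  linarith

theorem upper_two (K x : ℕ) (hK : 1 < K) (A : Finset ℕ)
    (hA : ∀ p ∈ A, p.Prime ∧ x / K / K < p ∧ p ≤ x)
    (hc : ∀ p ∈ A, ∀ p' ∈ A, p % K = p' % K) :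
    ∑ p ∈ A, Real.log p ≤ (x : ℝ) * (wt K / K * (1 + 1 / K)) + 2 * Real.log (x + K) := by
  have h1 := upper_one K x hK (A.filter (fun p => x / K < p))
    (fun p hp => ⟨(hA p (mem_filter.mp hp).1).1, (mem_filter.mp hp).2, (hA p (mem_filter.mp hp).1).2.2⟩)
    (fun p hp p' hp' => hc p (mem_filter.mp hp).1 p' (mem_filter.mp hp').1)
  have h2 := upper_one K (x / K) hK (A.filter (fun p => ¬ x / K < p))
    (fun p hp => ⟨(hA p (mem_filter.mp hp).1).1, (hA p (mem_filter.mp hp).1).2.1,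
      not_lt.mp (mem_filter.mp hp).2⟩)
    (fun p hp p' hp' => hc p (mem_filter.mp hp).1 p' (mem_filter.mp hp').1)
  rw [← Finset.sum_filter_add_sum_filter_not A (fun p => x / K < p)]
  have hK0 : (0 : ℝ) < K := by exact_mod_cast (by omega : 0 < K)
  have hw := wt_nonneg K
  have hx : (0 : ℝ) ≤ x := Nat.cast_nonneg x
  have e1 : ((x / K : ℕ) : ℝ) ≤ x / K := Nat.cast_div_le
  have e2 : ((x / K / K : ℕ) : ℝ) ≤ x / K / K :=
    Nat.cast_div_le.trans (div_le_div_of_nonneg_right e1 hK0.le)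
  have e3 : Real.log (((x / K : ℕ) : ℝ) + K) ≤ Real.log (x + K) := by
    apply Real.log_le_log (by positivity)
    have : ((x / K : ℕ) : ℝ) ≤ x := by exact_mod_cast Nat.div_le_self x K
    linarith
  have e4 := mul_le_mul_of_nonneg_right e1 hw
  have e5 := mul_le_mul_of_nonneg_right e2 hw
  have e6 : (x : ℝ) / K * wt K + x / K / K * wt K = (x : ℝ) * (wt K / K * (1 + 1 / K)) := by
    field_simp
  linarith

end PSF
namespace PSF
open Finset ArithmeticFunction

/-! ### Part 3: a lower bound for primes in a residue class modulo 4 -/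

/-- The sum of `log m` over `m ≤ u`, `m ≡ b` modulo 4. -/
noncomputable def TT (b u : ℕ) : ℝ := ∑ m ∈ Ioc 0 u with m % 4 = b, Real.log m

/-- Number of multiples. -/
def NN (b d v : ℕ) : ℕ := #{e ∈ Ioc 0 v | d * e % 4 = b}

theorem TT_eq (b X u : ℕ) (hu : u ≤ X) :
    TT b u = ∑ d ∈ Ioc 0 X, Λ d * (NN b d (u / d) : ℝ) := by
  unfold TT
  have h1 : ∀ m ∈ (Ioc 0 u).filter (fun m => m % 4 = b), Real.log m =
      ∑ d ∈ Ioc 0 X, if d ∣ m then Λ d else 0 := by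
    intro m hm
    simp only [mem_filter, mem_Ioc] at hm
    rw [← vonMangoldt_sum, ← Finset.sum_filter]
    apply Finset.sum_congr _ (fun _ _ => rfl)
    ext d
    simp only [Nat.mem_divisors, mem_filter, mem_Ioc]
    constructor
    · rintro ⟨h, h0⟩
      have := Nat.le_of_dvd hm.1.1 h
      have := Nat.pos_of_dvd_of_pos h hm.1.1
      exact ⟨⟨by omega, by omega⟩, h⟩
    · rintro ⟨_, h⟩
      exact ⟨h, by omega⟩
  rw [Finset.sum_congr rfl h1, Finset.sum_comm]
  apply Finset.sum_congr rfl
  intro d hd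
  have hd0 : 0 < d := (mem_Ioc.mp hd).1
  rw [← Finset.sum_filter, Finset.sum_const, nsmul_eq_mul, mul_comm]
  congr 2
  unfold NN
  symm
  apply Finset.card_bij (fun e _ => d * e)
  · intro e he
    simp only [mem_filter, mem_Ioc] at he ⊢
    refine ⟨⟨⟨Nat.mul_pos hd0 he.1.1, ?_⟩, he.2⟩, dvd_mul_right _ _⟩
    rw [mul_comm]; exact (Nat.le_div_iff_mul_le hd0).mp he.1.2
  · intro e _ e' _ h
    exact Nat.eq_of_mul_eq_mul_left hd0 h
  · intro m hm
    simp only [mem_filter, mem_Ioc] at hm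
    obtain ⟨⟨⟨h0, hle⟩, hb⟩, e, rfl⟩ := hm
    refine ⟨e, ?_, rfl⟩
    simp only [mem_filter, mem_Ioc]
    refine ⟨⟨Nat.pos_of_mul_pos_left h0, ?_⟩, hb⟩
    rw [Nat.le_div_iff_mul_le hd0, mul_comm]; exact hle

theorem card1 (v : ℕ) : #{e ∈ Ioc 0 v | e % 4 = 1} = (v + 3) / 4 := by
  induction v with
  | zero => simp
  | succ v ih =>
    rw [Finset.card_filter, Finset.sum_Ioc_succ_top (by omega), ← Finset.card_filter, ih]
    split_ifs <;> omega

theorem card3 (v : ℕ) : #{e ∈ Ioc 0 v | e % 4 = 3} = (v + 1) / 4 := by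
  induction v with
  | zero => simp
  | succ v ih =>
    rw [Finset.card_filter, Finset.sum_Ioc_succ_top (by omega), ← Finset.card_filter, ih]
    split_ifs <;> omega

theorem NN_eq (b d v : ℕ) (hb : b = 1 ∨ b = 3) :
    NN b d v = if d % 2 = 0 then 0 else if d % 4 = b then (v + 3) / 4 else (v + 1) / 4 := by
  unfold NN
  split_ifs with h1 h2
  · rw [Finset.card_eq_zero, Finset.filter_eq_empty_iff]
    intro e _ h
    have : d * e % 2 = 0 := by rw [Nat.mul_mod, h1]; simp
    omega
  · rw [← card1]
    congr 1
    apply Finset.filter_congr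
    intro e _
    rw [Nat.mul_mod, h2]
    have : e % 4 < 4 := Nat.mod_lt _ (by norm_num)
    rcases hb with rfl | rfl <;> interval_cases e % 4 <;> simp
  · rw [← card3]
    congr 1
    apply Finset.filter_congr
    intro e _
    have h3 : d % 4 = 4 - b := by omega
    rw [Nat.mul_mod, h3]
    have : e % 4 < 4 := Nat.mod_lt _ (by norm_num)
    rcases hb with rfl | rfl <;> interval_cases e % 4 <;> simp

def Sj : Finset ℕ := {1, 3, 5, 7, 10, 12, 15, 21, 28, 30, 35, 60, 70, 84, 105, 140, 210, 420}

def al : ℕ → ℤ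
  | 1 => 5
  | 5 => -5
  | 12 => -5
  | 15 => -5
  | 21 => 5
  | 28 => -5
  | 30 => 4
  | 35 => -9
  | 70 => 1
  | 84 => 1
  | 105 => -5
  | 140 => 5
  | 210 => 3
  | 420 => -3
  | _ => 0

def be : ℕ → ℤ
  | 3 => -5
  | 7 => -5
  | 10 => -5
  | 21 => -5
  | 30 => -5
  | 35 => 5
  | 60 => -5
  | 70 => -8
  | 84 => 6
  | 105 => 9
  | 140 => -1
  | 210 => 2
  | 420 => -11
  | _ => 0

def C1 (t : ℕ) : ℤ :=
    (5) * ((((t / 1 + 3) / 4 : ℕ)) : ℤ) + (-5) * ((((t / 3 + 1) / 4 : ℕ)) : ℤ) +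
    (-5) * ((((t / 5 + 3) / 4 : ℕ)) : ℤ) + (-5) * ((((t / 7 + 1) / 4 : ℕ)) : ℤ) +
    (-5) * ((((t / 10 + 1) / 4 : ℕ)) : ℤ) + (-5) * ((((t / 12 + 3) / 4 : ℕ)) : ℤ) +
    (-5) * ((((t / 15 + 3) / 4 : ℕ)) : ℤ) + (5) * ((((t / 21 + 3) / 4 : ℕ)) : ℤ) +
    (-5) * ((((t / 21 + 1) / 4 : ℕ)) : ℤ) + (-5) * ((((t / 28 + 3) / 4 : ℕ)) : ℤ) +
    (4) * ((((t / 30 + 3) / 4 : ℕ)) : ℤ) + (-5) * ((((t / 30 + 1) / 4 : ℕ)) : ℤ) +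
    (-9) * ((((t / 35 + 3) / 4 : ℕ)) : ℤ) + (5) * ((((t / 35 + 1) / 4 : ℕ)) : ℤ) +
    (-5) * ((((t / 60 + 1) / 4 : ℕ)) : ℤ) + (1) * ((((t / 70 + 3) / 4 : ℕ)) : ℤ) +
    (-8) * ((((t / 70 + 1) / 4 : ℕ)) : ℤ) + (1) * ((((t / 84 + 3) / 4 : ℕ)) : ℤ) +
    (6) * ((((t / 84 + 1) / 4 : ℕ)) : ℤ) + (-5) * ((((t / 105 + 3) / 4 : ℕ)) : ℤ) +
    (9) * ((((t / 105 + 1) / 4 : ℕ)) : ℤ) + (5) * ((((t / 140 + 3) / 4 : ℕ)) : ℤ) +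
    (-1) * ((((t / 140 + 1) / 4 : ℕ)) : ℤ) + (3) * ((((t / 210 + 3) / 4 : ℕ)) : ℤ) +
    (2) * ((((t / 210 + 1) / 4 : ℕ)) : ℤ) + (-3) * ((((t / 420 + 3) / 4 : ℕ)) : ℤ) +
    (-11) * ((((t / 420 + 1) / 4 : ℕ)) : ℤ)

def C3 (t : ℕ) : ℤ :=
    (5) * ((((t / 1 + 1) / 4 : ℕ)) : ℤ) + (-5) * ((((t / 3 + 3) / 4 : ℕ)) : ℤ) +
    (-5) * ((((t / 5 + 1) / 4 : ℕ)) : ℤ) + (-5) * ((((t / 7 + 3) / 4 : ℕ)) : ℤ) +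
    (-5) * ((((t / 10 + 3) / 4 : ℕ)) : ℤ) + (-5) * ((((t / 12 + 1) / 4 : ℕ)) : ℤ) +
    (-5) * ((((t / 15 + 1) / 4 : ℕ)) : ℤ) + (-5) * ((((t / 21 + 3) / 4 : ℕ)) : ℤ) +
    (5) * ((((t / 21 + 1) / 4 : ℕ)) : ℤ) + (-5) * ((((t / 28 + 1) / 4 : ℕ)) : ℤ) +
    (-5) * ((((t / 30 + 3) / 4 : ℕ)) : ℤ) + (4) * ((((t / 30 + 1) / 4 : ℕ)) : ℤ) +
    (5) * ((((t / 35 + 3) / 4 : ℕ)) : ℤ) + (-9) * ((((t / 35 + 1) / 4 : ℕ)) : ℤ) +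
    (-5) * ((((t / 60 + 3) / 4 : ℕ)) : ℤ) + (-8) * ((((t / 70 + 3) / 4 : ℕ)) : ℤ) +
    (1) * ((((t / 70 + 1) / 4 : ℕ)) : ℤ) + (6) * ((((t / 84 + 3) / 4 : ℕ)) : ℤ) +
    (1) * ((((t / 84 + 1) / 4 : ℕ)) : ℤ) + (9) * ((((t / 105 + 3) / 4 : ℕ)) : ℤ) +
    (-5) * ((((t / 105 + 1) / 4 : ℕ)) : ℤ) + (-1) * ((((t / 140 + 3) / 4 : ℕ)) : ℤ) +
    (5) * ((((t / 140 + 1) / 4 : ℕ)) : ℤ) + (2) * ((((t / 210 + 3) / 4 : ℕ)) : ℤ) +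
    (3) * ((((t / 210 + 1) / 4 : ℕ)) : ℤ) + (-11) * ((((t / 420 + 3) / 4 : ℕ)) : ℤ) +
    (-3) * ((((t / 420 + 1) / 4 : ℕ)) : ℤ)

theorem C1_eq (t : ℕ) : ∑ j ∈ Sj, (al j * (((t / j + 3) / 4 : ℕ) : ℤ) +
    be j * (((t / j + 1) / 4 : ℕ) : ℤ)) = C1 t := by
  simp [Sj, al, be, C1]
  ring

theorem C3_eq (t : ℕ) : ∑ j ∈ Sj, (al j * (((t / j + 1) / 4 : ℕ) : ℤ) +
    be j * (((t / j + 3) / 4 : ℕ) : ℤ)) = C3 t := by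
  simp [Sj, al, be, C3]
  ring

def VV (t : ℕ) : ℤ := (if 83 ≤ t then 2 else 0) + (if 163 ≤ t then 4 else 0) +
  (if 200 ≤ t then 7 else 0)

theorem VV_mono {s t : ℕ} (h : s ≤ t) : VV s ≤ VV t := by
  unfold VV; split_ifs <;> omega

theorem C1_per (t : ℕ) : C1 (t + 1680) = C1 t := by
  have h : ∀ j c i, 0 < j → 4 * c * j = 1680 → ((t + 1680) / j + i) / 4 = (t / j + i) / 4 + c := by
    intro j c i hj hc
    rw [← hc, Nat.add_mul_div_right _ _ hj]; omega
  unfold C1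
  rw [h 1 420 3 (by norm_num) (by norm_num),
    h 3 140 1 (by norm_num) (by norm_num),
    h 5 84 3 (by norm_num) (by norm_num),
    h 7 60 1 (by norm_num) (by norm_num),
    h 10 42 1 (by norm_num) (by norm_num),
    h 12 35 3 (by norm_num) (by norm_num),
    h 15 28 3 (by norm_num) (by norm_num),
    h 21 20 3 (by norm_num) (by norm_num),
    h 21 20 1 (by norm_num) (by norm_num),
    h 28 15 3 (by norm_num) (by norm_num),
    h 30 14 3 (by norm_num) (by norm_num),
    h 30 14 1 (by norm_num) (by norm_num),
    h 35 12 3 (by norm_num) (by norm_num),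
    h 35 12 1 (by norm_num) (by norm_num),
    h 60 7 1 (by norm_num) (by norm_num),
    h 70 6 3 (by norm_num) (by norm_num),
    h 70 6 1 (by norm_num) (by norm_num),
    h 84 5 3 (by norm_num) (by norm_num),
    h 84 5 1 (by norm_num) (by norm_num),
    h 105 4 3 (by norm_num) (by norm_num),
    h 105 4 1 (by norm_num) (by norm_num),
    h 140 3 3 (by norm_num) (by norm_num),
    h 140 3 1 (by norm_num) (by norm_num),
    h 210 2 3 (by norm_num) (by norm_num),
    h 210 2 1 (by norm_num) (by norm_num),
    h 420 1 3 (by norm_num) (by norm_num),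
    h 420 1 1 (by norm_num) (by norm_num)]
  push_cast
  ring

theorem C3_per (t : ℕ) : C3 (t + 1680) = C3 t := by
  have h : ∀ j c i, 0 < j → 4 * c * j = 1680 → ((t + 1680) / j + i) / 4 = (t / j + i) / 4 + c := by
    intro j c i hj hc
    rw [← hc, Nat.add_mul_div_right _ _ hj]; omega
  unfold C3
  rw [h 1 420 1 (by norm_num) (by norm_num),
    h 3 140 3 (by norm_num) (by norm_num),
    h 5 84 1 (by norm_num) (by norm_num),
    h 7 60 3 (by norm_num) (by norm_num),
    h 10 42 3 (by norm_num) (by norm_num),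
    h 12 35 1 (by norm_num) (by norm_num),
    h 15 28 1 (by norm_num) (by norm_num),
    h 21 20 3 (by norm_num) (by norm_num),
    h 21 20 1 (by norm_num) (by norm_num),
    h 28 15 1 (by norm_num) (by norm_num),
    h 30 14 3 (by norm_num) (by norm_num),
    h 30 14 1 (by norm_num) (by norm_num),
    h 35 12 3 (by norm_num) (by norm_num),
    h 35 12 1 (by norm_num) (by norm_num),
    h 60 7 3 (by norm_num) (by norm_num),
    h 70 6 3 (by norm_num) (by norm_num),
    h 70 6 1 (by norm_num) (by norm_num),
    h 84 5 3 (by norm_num) (by norm_num),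
    h 84 5 1 (by norm_num) (by norm_num),
    h 105 4 3 (by norm_num) (by norm_num),
    h 105 4 1 (by norm_num) (by norm_num),
    h 140 3 3 (by norm_num) (by norm_num),
    h 140 3 1 (by norm_num) (by norm_num),
    h 210 2 3 (by norm_num) (by norm_num),
    h 210 2 1 (by norm_num) (by norm_num),
    h 420 1 3 (by norm_num) (by norm_num),
    h 420 1 1 (by norm_num) (by norm_num)]
  push_cast
  ring

theorem C_small : ∀ t < 1680, C1 t ≤ 5 + VV t ∧ C3 t ≤ VV t := by
  decide +kernel

theorem C_le (t : ℕ) : C1 t ≤ 5 + VV t ∧ C3 t ≤ VV t := by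
  induction t using Nat.strong_induction_on with
  | _ t ih =>
    rcases lt_or_ge t 1680 with h | h
    · exact C_small t h
    · obtain ⟨s, rfl⟩ : ∃ s, t = s + 1680 := ⟨t - 1680, by omega⟩
      have := ih s (by omega)
      have hm := VV_mono (show s ≤ s + 1680 by omega)
      rw [C1_per, C3_per]
      constructor <;> linarith [this.1, this.2]

theorem comb_le (b X : ℕ) (hb : b = 1 ∨ b = 3) :
    ∑ j ∈ Sj, ((al j : ℝ) * TT b (X / j) + (be j : ℝ) * TT (4 - b) (X / j)) ≤
    5 * ∑ d ∈ Ioc 0 X with d % 4 = b, Λ d + 2 * Chebyshev.psi (X / 83) +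
      4 * Chebyshev.psi (X / 163) + 7 * Chebyshev.psi (X / 200) := by
  have hb' : 4 - b = 1 ∨ 4 - b = 3 := by omega
  have key : ∀ d ∈ Ioc 0 X, ∑ j ∈ Sj, ((al j : ℝ) * (Λ d * (NN b d (X / j / d) : ℝ)) +
      (be j : ℝ) * (Λ d * (NN (4 - b) d (X / j / d) : ℝ))) ≤
      5 * (if d % 4 = b then Λ d else 0) + Λ d * (VV (X / d) : ℝ) := by
    intro d hd
    have hL : 0 ≤ Λ d := vonMangoldt_nonneg
    have e1 : ∑ j ∈ Sj, ((al j : ℝ) * (Λ d * (NN b d (X / j / d) : ℝ)) +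
      (be j : ℝ) * (Λ d * (NN (4 - b) d (X / j / d) : ℝ))) =
      Λ d * ((∑ j ∈ Sj, (al j * (NN b d (X / d / j) : ℤ) +
        be j * (NN (4 - b) d (X / d / j) : ℤ)) : ℤ) : ℝ) := by
      push_cast
      rw [Finset.mul_sum]
      apply Finset.sum_congr rfl
      intro j _
      rw [Nat.div_div_eq_div_mul, Nat.div_div_eq_div_mul, mul_comm j d]
      ring
    rw [e1]
    have hC := C_le (X / d)
    have hV0 : 0 ≤ VV (X / d) := by unfold VV; split_ifs <;> norm_num
    simp only [NN_eq _ _ _ hb, NN_eq _ _ _ hb']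
    by_cases h2 : d % 2 = 0
    · have h3 : d % 4 ≠ b := by omega
      simp only [h2, h3, if_true, if_false]
      simp
      apply mul_nonneg hL
      exact_mod_cast hV0
    · by_cases h3 : d % 4 = b
      · have h4 : d % 4 ≠ 4 - b := by omega
        simp only [h2, if_false, if_pos h3, if_neg h4]
        rw [C1_eq]
        have : ((C1 (X / d) : ℤ) : ℝ) ≤ 5 + (VV (X / d) : ℝ) := by exact_mod_cast hC.1
        nlinarith
      · have h4 : d % 4 = 4 - b := by omega
        simp only [h2, if_false, if_neg h3, if_pos h4]
        rw [C3_eq]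
        have : ((C3 (X / d) : ℤ) : ℝ) ≤ (VV (X / d) : ℝ) := by exact_mod_cast hC.2
        nlinarith
  have hpsi : ∀ k : ℕ, 0 < k → ∑ d ∈ Ioc 0 X, Λ d * (if k ≤ X / d then (1 : ℝ) else 0) =
      Chebyshev.psi ((X : ℝ) / k) := by
    intro k hk
    unfold Chebyshev.psi
    rw [Nat.floor_div_natCast, Nat.floor_natCast]
    simp only [mul_ite, mul_one, mul_zero]
    rw [← Finset.sum_filter]
    apply Finset.sum_congr _ (fun _ _ => rfl)
    ext d
    simp only [mem_filter, mem_Ioc]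
    constructor
    · rintro ⟨⟨h0, h1⟩, h2⟩
      rw [Nat.le_div_iff_mul_le h0] at h2
      refine ⟨h0, ?_⟩
      rw [Nat.le_div_iff_mul_le hk, mul_comm]; exact h2
    · rintro ⟨h0, h1⟩
      refine ⟨⟨h0, h1.trans (Nat.div_le_self _ _)⟩, ?_⟩
      rw [Nat.le_div_iff_mul_le hk] at h1
      rw [Nat.le_div_iff_mul_le h0, mul_comm]; exact h1
  have hT : ∑ j ∈ Sj, ((al j : ℝ) * TT b (X / j) + (be j : ℝ) * TT (4 - b) (X / j)) =
      ∑ d ∈ Ioc 0 X, ∑ j ∈ Sj, ((al j : ℝ) * (Λ d * (NN b d (X / j / d) : ℝ)) +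
      (be j : ℝ) * (Λ d * (NN (4 - b) d (X / j / d) : ℝ))) := by
    rw [Finset.sum_comm]
    apply Finset.sum_congr rfl
    intro j _
    rw [TT_eq b X _ (Nat.div_le_self _ _), TT_eq (4 - b) X _ (Nat.div_le_self _ _),
      Finset.mul_sum, Finset.mul_sum, ← Finset.sum_add_distrib]
  rw [hT]
  refine (Finset.sum_le_sum key).trans (le_of_eq ?_)
  have p1 := hpsi 83 (by norm_num)
  have p2 := hpsi 163 (by norm_num)
  have p3 := hpsi 200 (by norm_num)
  push_cast at p1 p2 p3
  rw [← p1, ← p2, ← p3, Finset.sum_filter, Finset.mul_sum, Finset.mul_sum, Finset.mul_sum,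
    Finset.mul_sum, ← Finset.sum_add_distrib, ← Finset.sum_add_distrib, ← Finset.sum_add_distrib]
  apply Finset.sum_congr rfl
  intro d _
  unfold VV
  push_cast
  split_ifs <;> ring

/-- The main term. -/
noncomputable def FF (y : ℝ) : ℝ := (y * Real.log y - y) / 4

theorem FF_le {u v : ℝ} (hu : 0 < u) (hv : 0 < v) : (v - u) / 4 * Real.log u ≤ FF v - FF u := by
  unfold FF
  have h := Real.one_sub_inv_le_log_of_pos (div_pos hv hu)
  rw [Real.log_div hv.ne' hu.ne', inv_div] at h
  have h2 := mul_le_mul_of_nonneg_left h hv.le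
  have h3 : v * (1 - u / v) = v - u := by field_simp
  rw [h3] at h2
  linarith

theorem TT_step (b u : ℕ) (hb : b = 1 ∨ b = 3) :
    ∃ m : ℕ, u < m ∧ m ≤ u + 4 ∧ TT b (u + 4) = TT b u + Real.log m := by
  unfold TT
  simp only [Finset.sum_filter]
  rw [Finset.sum_Ioc_succ_top (by omega), Finset.sum_Ioc_succ_top (by omega),
    Finset.sum_Ioc_succ_top (by omega), Finset.sum_Ioc_succ_top (by omega)]
  have h : ∃ m, u < m ∧ m ≤ u + 4 ∧ m % 4 = b :=
    ⟨u + 1 + (b + 7 - (u % 4)) % 4, by omega, by omega, by omega⟩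
  obtain ⟨m, h1, h2, h3⟩ := h
  refine ⟨m, h1, h2, ?_⟩
  obtain h | h | h | h : m = u + 1 ∨ m = u + 2 ∨ m = u + 3 ∨ m = u + 4 := by omega
  · subst h
    rw [if_pos h3, if_neg (by omega), if_neg (by omega), if_neg (by omega)]; ring
  · subst h
    rw [if_pos h3, if_neg (by omega), if_neg (by omega), if_neg (by omega)]; ring
  · subst h
    rw [if_pos h3, if_neg (by omega), if_neg (by omega), if_neg (by omega)]; ring
  · subst h
    rw [if_pos h3, if_neg (by omega), if_neg (by omega), if_neg (by omega)]; ring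

theorem TT_est (b : ℕ) (hb : b = 1 ∨ b = 3) (u : ℕ) (hu : 1 ≤ u) :
    |TT b u - FF u| ≤ Real.log u + 2 := by
  induction u using Nat.strong_induction_on with
  | _ u ih =>
    rcases le_or_gt u 4 with h | h
    · have l2 := Real.log_two_gt_d9
      have l2' := Real.log_two_lt_d9
      have l3 : Real.log 3 ≤ 2 * Real.log 2 := by
        have h4 : Real.log 4 = 2 * Real.log 2 := by
          rw [show (4 : ℝ) = 2 ^ 2 by norm_num, Real.log_pow]; norm_num
        rw [← h4]
        exact Real.log_le_log (by norm_num) (by norm_num)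
      have l3' : Real.log 2 ≤ Real.log 3 := Real.log_le_log (by norm_num) (by norm_num)
      have l4 : Real.log 4 = 2 * Real.log 2 := by
        rw [show (4 : ℝ) = 2 ^ 2 by norm_num, Real.log_pow]; norm_num
      unfold TT FF
      rw [Finset.sum_filter]
      rcases hb with rfl | rfl <;> interval_cases u <;>
        simp [Finset.sum_Ioc_succ_top] <;> rw [abs_le] <;> constructor <;> linarith
    · obtain ⟨v, rfl⟩ : ∃ v, u = v + 4 := ⟨u - 4, by omega⟩
      have hv := ih v (by omega) (by omega)
      obtain ⟨m, h1, h2, h3⟩ := TT_step b v hb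
      have v0 : (0 : ℝ) < v := by exact_mod_cast (by omega : 0 < v)
      have m1 : Real.log v ≤ Real.log m := Real.log_le_log v0 (by exact_mod_cast h1.le)
      have m2 : Real.log m ≤ Real.log ((v : ℝ) + 4) :=
        Real.log_le_log (by exact_mod_cast (by omega : 0 < m)) (by exact_mod_cast h2)
      have f1 := FF_le v0 (show (0 : ℝ) < (v : ℝ) + 4 by linarith)
      have f2 := FF_le (show (0 : ℝ) < (v : ℝ) + 4 by linarith) v0
      rw [h3]
      push_cast
      rw [abs_le] at hv ⊢
      constructor <;> linarith [hv.1, hv.2]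

theorem TT_est' (b : ℕ) (hb : b = 1 ∨ b = 3) (X j : ℕ) (hj : 1 ≤ j) (hX : j ≤ X) :
    |TT b (X / j) - FF ((X : ℝ) / j)| ≤ 5 / 4 * Real.log X + 2 := by
  have h1 : 1 ≤ X / j := (Nat.one_le_div_iff (by omega)).mpr hX
  have h := TT_est b hb (X / j) h1
  have j0 : (1 : ℝ) ≤ j := by exact_mod_cast hj
  have u0 : (1 : ℝ) ≤ ((X / j : ℕ) : ℝ) := by exact_mod_cast h1
  have uy : ((X / j : ℕ) : ℝ) ≤ (X : ℝ) / j := Nat.cast_div_le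
  have yu : (X : ℝ) / j ≤ ((X / j : ℕ) : ℝ) + 1 := by
    rw [div_le_iff₀ (by linarith)]
    have : X ≤ (X / j + 1) * j := by
      have := Nat.lt_div_mul_add (a := X) (b := j) (by omega)
      rw [add_mul, one_mul]; omega
    exact_mod_cast this
  have yX : (X : ℝ) / j ≤ X := div_le_self (Nat.cast_nonneg _) j0
  set u : ℝ := ((X / j : ℕ) : ℝ)
  set y : ℝ := (X : ℝ) / j
  have ly : Real.log y ≤ Real.log X := Real.log_le_log (by linarith) yX
  have lu : Real.log u ≤ Real.log y := Real.log_le_log (by linarith) uy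
  have lu0 : 0 ≤ Real.log u := Real.log_nonneg u0
  have f1 := FF_le (show 0 < u by linarith) (show 0 < y by linarith)
  have f2 := FF_le (show 0 < y by linarith) (show 0 < u by linarith)
  have g1 : 0 ≤ (y - u) / 4 * Real.log u := mul_nonneg (by linarith) lu0
  have g2 : (y - u) / 4 * Real.log y ≤ 1 / 4 * Real.log y :=
    mul_le_mul_of_nonneg_right (by linarith) (by linarith)
  rw [abs_le] at h ⊢
  constructor <;> linarith [h.1, h.2]

theorem log_cmp {a b : ℝ} {m k : ℕ} (ha : 0 < a) (hb : 0 < b) (h : a ^ m ≤ b ^ k) :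
    m * Real.log a ≤ k * Real.log b := by
  have := Real.log_le_log (by positivity) h
  rwa [Real.log_pow, Real.log_pow] at this

theorem log3_bd : 1.09857 ≤ Real.log 3 ∧ Real.log 3 ≤ 1.09867 := by
  have l2 := Real.log_two_gt_d9
  have l2' := Real.log_two_lt_d9
  have h1 := log_cmp (a := 2) (b := 3) (m := 84) (k := 53) (by norm_num) (by norm_num) (by norm_num)
  have h2 := log_cmp (a := 3) (b := 2) (m := 147) (k := 233) (by norm_num) (by norm_num)
    (by norm_num)
  push_cast at h1 h2
  constructor <;> linarith

theorem log5_bd : 1.60909 ≤ Real.log 5 ∧ Real.log 5 ≤ 1.60952 := by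
  have l2 := Real.log_two_gt_d9
  have l2' := Real.log_two_lt_d9
  have h1 := log_cmp (a := 2) (b := 5) (m := 65) (k := 28) (by norm_num) (by norm_num) (by norm_num)
  have h2 := log_cmp (a := 5) (b := 2) (m := 59) (k := 137) (by norm_num) (by norm_num)
    (by norm_num)
  push_cast at h1 h2
  constructor <;> linarith

theorem log7_bd : 1.9458 ≤ Real.log 7 ∧ Real.log 7 ≤ 1.94615 := by
  have l2 := Real.log_two_gt_d9
  have l2' := Real.log_two_lt_d9
  have h1 := log_cmp (a := 2) (b := 7) (m := 233) (k := 83) (by norm_num) (by norm_num)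
    (by norm_num)
  have h2 := log_cmp (a := 7) (b := 2) (m := 26) (k := 73) (by norm_num) (by norm_num)
    (by norm_num)
  push_cast at h1 h2
  constructor <;> linarith

theorem log4_eq : Real.log 4 = 2 * Real.log 2 := by
  rw [show (4 : ℝ) = 2 ^ 2 by norm_num, Real.log_pow]; norm_num

theorem Sj_mem {j : ℕ} (h : j ∈ Sj) : 1 ≤ j ∧ j ≤ 420 := by
  revert j; decide

theorem comb_ge (b X : ℕ) (hb : b = 1 ∨ b = 3) (hX : 420 ≤ X) :
    2.2963 * (X : ℝ) - 133 * (5 / 4 * Real.log X + 2) ≤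
    ∑ j ∈ Sj, ((al j : ℝ) * TT b (X / j) + (be j : ℝ) * TT (4 - b) (X / j)) := by
  have hb' : 4 - b = 1 ∨ 4 - b = 3 := by omega
  set er := 5 / 4 * Real.log X + 2 with her
  have hX0 : (0 : ℝ) < X := by exact_mod_cast (by omega : 0 < X)
  have key : ∀ j ∈ Sj, ((al j + be j : ℤ) : ℝ) * FF ((X : ℝ) / j) -
      ((|al j| + |be j| : ℤ) : ℝ) * er ≤
      (al j : ℝ) * TT b (X / j) + (be j : ℝ) * TT (4 - b) (X / j) := by
    intro j hj
    obtain ⟨h1, h2⟩ := Sj_mem hj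
    have t1 := TT_est' b hb X j h1 (by omega)
    have t2 := TT_est' (4 - b) hb' X j h1 (by omega)
    have a1 : |(al j : ℝ) * (TT b (X / j) - FF ((X : ℝ) / j))| ≤ |(al j : ℝ)| * er := by
      rw [abs_mul]; exact mul_le_mul_of_nonneg_left t1 (abs_nonneg _)
    have a2 : |(be j : ℝ) * (TT (4 - b) (X / j) - FF ((X : ℝ) / j))| ≤ |(be j : ℝ)| * er := by
      rw [abs_mul]; exact mul_le_mul_of_nonneg_left t2 (abs_nonneg _)
    push_cast
    have b1 := (abs_le.mp a1).1
    have b2 := (abs_le.mp a2).1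
    linarith
  refine le_trans ?_ (Finset.sum_le_sum key)
  rw [Finset.sum_sub_distrib, ← Finset.sum_mul, ← Int.cast_sum,
    show ∑ j ∈ Sj, (|al j| + |be j|) = 133 by decide]
  have e1 : ∀ j ∈ Sj, ((al j + be j : ℤ) : ℝ) * FF ((X : ℝ) / j) =
      (X : ℝ) / 4 * (((al j + be j : ℤ) : ℝ) / j) * (Real.log X - 1) -
        (X : ℝ) / 4 * (((al j + be j : ℤ) : ℝ) / j * Real.log j) := by
    intro j hj
    have hj0 : (0 : ℝ) < j := by exact_mod_cast (Sj_mem hj).1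
    unfold FF
    rw [Real.log_div hX0.ne' hj0.ne']
    ring
  rw [Finset.sum_congr rfl e1, Finset.sum_sub_distrib, ← Finset.sum_mul, ← Finset.mul_sum,
    ← Finset.mul_sum]
  have z : ∑ j ∈ Sj, (((al j + be j : ℤ) : ℝ) / j) = 0 := by
    simp [Sj, al, be]
    norm_num
  have lg : ∀ a b c d : ℕ, Real.log ((2 : ℝ) ^ a * 3 ^ b * 5 ^ c * 7 ^ d) =
      a * Real.log 2 + b * Real.log 3 + c * Real.log 5 + d * Real.log 7 := by
    intro a b c d
    rw [Real.log_mul (by positivity) (by positivity), Real.log_mul (by positivity) (by positivity),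
      Real.log_mul (by positivity) (by positivity), Real.log_pow, Real.log_pow, Real.log_pow,
      Real.log_pow]
  have g10 := lg 1 0 1 0
  have g12 := lg 2 1 0 0
  have g15 := lg 0 1 1 0
  have g28 := lg 2 0 0 1
  have g30 := lg 1 1 1 0
  have g35 := lg 0 0 1 1
  have g60 := lg 2 1 1 0
  have g70 := lg 1 0 1 1
  have g84 := lg 2 1 0 1
  have g105 := lg 0 1 1 1
  have g140 := lg 2 0 1 1
  have g210 := lg 1 1 1 1
  have g420 := lg 2 1 1 1
  norm_num at g10 g12 g15 g28 g30 g35 g60 g70 g84 g105 g140 g210 g420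
  have w : ∑ j ∈ Sj, (((al j + be j : ℤ) : ℝ) / j * Real.log j) =
      -4 * (19 / 42 * Real.log 2 + 339 / 560 * Real.log 3 + 59 / 112 * Real.log 5 +
        29 / 120 * Real.log 7) := by
    simp [Sj, al, be]
    rw [g10, g12, g15, g28, g30, g35, g60, g70, g84, g105, g140, g210, g420]
    ring
  rw [z, w]
  have l2 := Real.log_two_gt_d9
  have l3 := log3_bd.1
  have l5 := log5_bd.1
  have l7 := log7_bd.1
  push_cast
  have : (2.2963 : ℝ) ≤ 19 / 42 * Real.log 2 + 339 / 560 * Real.log 3 + 59 / 112 * Real.log 5 +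
        29 / 120 * Real.log 7 := by
    linarith
  nlinarith

theorem psi_bd (X : ℕ) (k c : ℝ) (hX : 1 ≤ X) (hc : 0 < c) (hck : c ^ 2 ≤ k) (hk : 1 ≤ k)
    (hkX : k ≤ X) :
    Chebyshev.psi ((X : ℝ) / k) ≤ Real.log 4 * X / k + 2 / c * (Real.sqrt X * Real.log X) := by
  have h := Chebyshev.psi_le (x := (X : ℝ) / k) (by rw [le_div_iff₀ (by linarith)]; linarith)
  have X1 : (1 : ℝ) ≤ X := by exact_mod_cast hX
  have h1 : Real.sqrt ((X : ℝ) / k) ≤ Real.sqrt X / c := by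
    rw [Real.sqrt_le_iff]
    refine ⟨by positivity, ?_⟩
    rw [div_pow, Real.sq_sqrt (by linarith)]
    exact div_le_div_of_nonneg_left (by linarith) (by positivity) hck
  have h2 : Real.log ((X : ℝ) / k) ≤ Real.log X :=
    Real.log_le_log (by positivity) (div_le_self (by linarith) hk)
  have h3 : 0 ≤ Real.log ((X : ℝ) / k) :=
    Real.log_nonneg (by rw [le_div_iff₀ (by linarith)]; linarith)
  have h4 : Real.sqrt ((X : ℝ) / k) * Real.log ((X : ℝ) / k) ≤ Real.sqrt X / c * Real.log X :=
    mul_le_mul h1 h2 h3 (by positivity)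
  calc _ ≤ _ := h
    _ = Real.log 4 * X / k + 2 * (Real.sqrt ((X : ℝ) / k) * Real.log ((X : ℝ) / k)) := by ring
    _ ≤ Real.log 4 * X / k + 2 * (Real.sqrt X / c * Real.log X) := by gcongr
    _ = _ := by ring

theorem psi_theta (X : ℕ) (hX : 1 ≤ X) :
    Chebyshev.psi X - Chebyshev.theta X ≤ 16.2 * Real.sqrt X := by
  have X1 : (1 : ℝ) ≤ X := by exact_mod_cast hX
  have h := Chebyshev.psi_sub_theta_le_psi_add_psi_add_psi X
  have e : ∀ t : ℝ, t ≤ 1 / 2 → Chebyshev.psi ((X : ℝ) ^ t) ≤ 5.4 * Real.sqrt X := by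
    intro t ht
    have h1 : (X : ℝ) ^ t ≤ Real.sqrt X := by
      rw [Real.sqrt_eq_rpow]
      exact Real.rpow_le_rpow_of_exponent_le X1 ht
    have h2 := Chebyshev.psi_le_const_mul_self (x := (X : ℝ) ^ t) (by positivity)
    have l4 := log4_eq
    have l2' := Real.log_two_lt_d9
    have h0 : 0 ≤ (X : ℝ) ^ t := by positivity
    nlinarith
  have e1 := e (2 : ℝ)⁻¹ (by norm_num)
  have e2 := e (3 : ℝ)⁻¹ (by norm_num)
  have e3 := e (5 : ℝ)⁻¹ (by norm_num)
  linarith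

theorem lower_main (b X : ℕ) (hb : b = 1 ∨ b = 3) (hX : 420 ≤ X) :
    0.436 * (X : ℝ) - 0.4125 * (Real.sqrt X * Real.log X) - 16.2 * Real.sqrt X
      - 34 * Real.log X - 54 ≤ ∑ p ∈ Ioc 0 X with p.Prime ∧ p % 4 = b, Real.log p := by
  have h1 := comb_ge b X hb hX
  have h2 := comb_le b X hb
  have X1 : (420 : ℝ) ≤ X := by exact_mod_cast hX
  have p1 := psi_bd X 83 9.1 (by omega) (by norm_num) (by norm_num) (by norm_num) (by linarith)
  have p2 := psi_bd X 163 12.7 (by omega) (by norm_num) (by norm_num) (by norm_num) (by linarith)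
  have p3 := psi_bd X 200 14.1 (by omega) (by norm_num) (by norm_num) (by norm_num) (by linarith)
  have pt := psi_theta X (by omega)
  rw [Chebyshev.psi_sub_theta_eq_sum_not_prime, Nat.floor_natCast] at pt
  have hs : ∑ d ∈ Ioc 0 X with d % 4 = b, Λ d ≤
      ∑ p ∈ Ioc 0 X with p.Prime ∧ p % 4 = b, Real.log p +
      ∑ d ∈ Ioc 0 X with ¬ d.Prime, Λ d := by
    simp only [Finset.sum_filter]
    rw [← Finset.sum_add_distrib]
    apply Finset.sum_le_sum
    intro d _
    have hL : 0 ≤ Λ d := vonMangoldt_nonneg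
    by_cases hp : d.Prime
    · simp [hp, vonMangoldt_apply_prime hp]
    · simp only [hp, false_and, if_false, not_false_eq_true, if_true, zero_add]
      split_ifs <;> linarith
  have l4 := log4_eq
  have l2' := Real.log_two_lt_d9
  have l4' : Real.log 4 * X ≤ 1.3862944 * X := by
    apply mul_le_mul_of_nonneg_right _ (by linarith); linarith
  have sl : 0 ≤ Real.sqrt X * Real.log X :=
    mul_nonneg (Real.sqrt_nonneg _) (Real.log_nonneg (by linarith))
  have ll : 0 ≤ Real.log X := Real.log_nonneg (by linarith)
  have hsq := Real.sqrt_nonneg X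
  set A := Real.log 4 * X
  set B := Real.sqrt X * Real.log X
  norm_num at p1 p2 p3 ⊢
  linarith

end PSF
namespace PSF
open Finset ArithmeticFunction

/-! ### Part 4: large `n` -/

/-- The primes under consideration. -/
def SM (n b : ℕ) : Finset ℕ :=
  (Ioc 0 n).filter (fun p => p.Prime ∧ p % 4 = b ∧ n / 1296 < p ∧ p < n)

theorem div_div_le (n K : ℕ) (hK : 36 ≤ K) : n / K / K ≤ n / 1296 := by
  rw [Nat.div_div_eq_div_mul]
  exact Nat.div_le_div_left (by nlinarith) (by norm_num)

theorem A_bound (n b k : ℕ) (hn : 2 ^ 24 ≤ n) (hk5 : 5 ≤ k) (h3 : Nat.Coprime 3 k)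
    (h4 : Nat.Coprime 4 k) :
    ∑ p ∈ SM n b with k ∣ n - p, Real.log p ≤
      (n : ℝ) * (wt (12 * k) / (6 * k) * (1 + 1 / (12 * k))) + 4 * Real.log (13 * n) := by
  have hn0 : (1 : ℝ) ≤ n := by exact_mod_cast (by omega : 1 ≤ n)
  have hw := wt_nonneg (12 * k)
  have hl : 0 ≤ Real.log (13 * n) := Real.log_nonneg (by linarith)
  rcases lt_or_ge n k with hkn | hkn
  · have : (SM n b).filter (fun p => k ∣ n - p) = ∅ := by
      rw [Finset.filter_eq_empty_iff]
      intro p hp hd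
      simp only [SM, mem_filter] at hp
      have := Nat.le_of_dvd (by omega) hd
      omega
    rw [this, Finset.sum_empty]
    positivity
  have hcl : ∀ c : ℕ, ∑ p ∈ ((SM n b).filter (fun p => k ∣ n - p)).filter (fun p => p % 3 = c),
      Real.log p ≤ (n : ℝ) * (wt (12 * k) / ((12 * k : ℕ) : ℝ) * (1 + 1 / ((12 * k : ℕ) : ℝ)))
        + 2 * Real.log (n + (12 * k : ℕ)) := by
    intro c
    apply upper_two (12 * k) n (by omega)
    · intro p hp
      simp only [SM, mem_filter] at hp
      refine ⟨hp.1.1.2.1, ?_, by omega⟩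
      have := div_div_le n (12 * k) (by omega)
      omega
    · intro p hp p' hp'
      simp only [SM, mem_filter] at hp hp'
      have e1 : p ≡ p' [MOD k] :=
        ((Nat.modEq_iff_dvd' (by omega)).mpr hp.1.2).trans
          ((Nat.modEq_iff_dvd' (by omega)).mpr hp'.1.2).symm
      have e2 : p ≡ p' [MOD 3] := by unfold Nat.ModEq; omega
      have e3 : p ≡ p' [MOD 4] := by unfold Nat.ModEq; omega
      have e4 := (Nat.modEq_and_modEq_iff_modEq_mul (show Nat.Coprime 3 4 by norm_num)).mp ⟨e2, e3⟩
      have hc : Nat.Coprime (3 * 4) k := Nat.Coprime.mul_left h3 h4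
      exact (Nat.modEq_and_modEq_iff_modEq_mul hc).mp ⟨e4, e1⟩
  have hlog : Real.log (n + (12 * k : ℕ)) ≤ Real.log (13 * n) := by
    apply Real.log_le_log
    · have : (0 : ℝ) ≤ ((12 * k : ℕ) : ℝ) := Nat.cast_nonneg _
      linarith
    · push_cast
      have : (k : ℝ) ≤ n := by exact_mod_cast hkn
      linarith
  have hsplit : ∑ p ∈ SM n b with k ∣ n - p, Real.log p ≤
      ∑ p ∈ ((SM n b).filter (fun p => k ∣ n - p)).filter (fun p => p % 3 = 1), Real.log p +
      ∑ p ∈ ((SM n b).filter (fun p => k ∣ n - p)).filter (fun p => p % 3 = 2), Real.log p := by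
    rw [Finset.sum_filter (fun p => p % 3 = 1), Finset.sum_filter (fun p => p % 3 = 2),
      ← Finset.sum_add_distrib]
    apply Finset.sum_le_sum
    intro p hp
    simp only [SM, mem_filter] at hp
    have hp3 : p % 3 ≠ 0 := by
      intro h
      have := (Nat.prime_dvd_prime_iff_eq Nat.prime_three hp.1.2.1).mp (Nat.dvd_of_mod_eq_zero h)
      omega
    have : p % 3 = 1 ∨ p % 3 = 2 := by omega
    rcases this with h | h <;> simp [h]
  have h1 := hcl 1
  have h2 := hcl 2
  have e : (n : ℝ) * (wt (12 * k) / (6 * k) * (1 + 1 / (12 * k))) =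
      2 * ((n : ℝ) * (wt (12 * k) / ((12 * k : ℕ) : ℝ) * (1 + 1 / ((12 * k : ℕ) : ℝ)))) := by
    have : (0 : ℝ) < k := by exact_mod_cast (by omega : 0 < k)
    push_cast
    field_simp
    ring
  rw [e]
  linarith

theorem pf12 : Nat.primeFactors 12 = {2, 3} := by
  rw [show 12 = 2 ^ 2 * 3 by norm_num, Nat.primeFactors_mul (by norm_num) (by norm_num),
    Nat.primeFactors_prime_pow (by norm_num) Nat.prime_two, Nat.prime_three.primeFactors]
  rfl

theorem log_12 : Real.log 12 = 2 * Real.log 2 + Real.log 3 := by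
  rw [show (12 : ℝ) = 2 ^ 2 * 3 by norm_num, Real.log_mul (by norm_num) (by norm_num), Real.log_pow]
  norm_num

theorem wt_val (r e : ℕ) (hr : r.Prime) (hr5 : 5 ≤ r) (he : e ≠ 0) :
    wt (12 * r ^ e) = 3 * Real.log 2 + 3 / 2 * Real.log 3 + e * Real.log r +
      Real.log r / ((r : ℝ) - 1) := by
  have r0 : (0 : ℝ) < r := by exact_mod_cast hr.pos
  unfold wt
  rw [Nat.primeFactors_mul (by norm_num) (pow_ne_zero _ hr.ne_zero),
    Nat.primeFactors_prime_pow he hr, pf12, Finset.union_comm, Finset.singleton_union,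
    Finset.sum_insert (by simp; omega), Finset.sum_insert (by simp), Finset.sum_singleton]
  push_cast
  rw [Real.log_mul (by norm_num) (by positivity), Real.log_pow, log_12]
  ring

theorem A9_bound (n b : ℕ) (hn : 2 ^ 24 ≤ n) :
    ∑ p ∈ SM n b with 9 ∣ n - p, Real.log p ≤ (n : ℝ) * 0.1378 + 2 * Real.log (13 * n) := by
  have hn0 : (2 : ℝ) ^ 24 ≤ n := by exact_mod_cast hn
  have h := upper_two 36 n (by norm_num) ((SM n b).filter (fun p => 9 ∣ n - p)) (by
      intro p hp
      simp only [SM, mem_filter] at hp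
      refine ⟨hp.1.2.1, ?_, by omega⟩
      have := div_div_le n 36 (by omega)
      omega) (by
      intro p hp p' hp'
      simp only [SM, mem_filter] at hp hp'
      omega)
  have e : wt 36 = 3 * Real.log 2 + 5 / 2 * Real.log 3 := by
    unfold wt
    rw [show 36 = 2 ^ 2 * 3 ^ 2 by norm_num, Nat.primeFactors_mul (by norm_num) (by norm_num),
      Nat.primeFactors_prime_pow (by norm_num) Nat.prime_two,
      Nat.primeFactors_prime_pow (by norm_num) Nat.prime_three, Finset.singleton_union,
      Finset.sum_insert (by simp), Finset.sum_singleton]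
    have l36 : Real.log 36 = 2 * Real.log 2 + 2 * Real.log 3 := by
      rw [show (36 : ℝ) = 2 ^ 2 * 3 ^ 2 by norm_num, Real.log_mul (by norm_num) (by norm_num),
        Real.log_pow, Real.log_pow]
      norm_num
    push_cast
    rw [l36]
    ring
  rw [e] at h
  have hl : Real.log ((n : ℝ) + (36 : ℕ)) ≤ Real.log (13 * n) :=
    Real.log_le_log (by positivity) (by push_cast; linarith)
  have l3 := log3_bd.2
  have l2' := Real.log_two_lt_d9
  have hh : (3 * Real.log 2 + 5 / 2 * Real.log 3) / ((36 : ℕ) : ℝ) * (1 + 1 / ((36 : ℕ) : ℝ)) ≤ 0.1378 := by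
    push_cast
    linarith
  have := mul_le_mul_of_nonneg_left hh (show (0 : ℝ) ≤ n by linarith)
  exact h.trans (add_le_add this (mul_le_mul_of_nonneg_left hl (by norm_num)))

/-- coefficient -/
noncomputable def hh (r e : ℕ) : ℝ :=
  (3 * Real.log 2 + 3 / 2 * Real.log 3 + e * Real.log r + Real.log r / ((r : ℝ) - 1)) /
    (6 * (r : ℝ) ^ e) * (1 + 1 / (12 * (r : ℝ) ^ e))

theorem Ar_bound (n b r e : ℕ) (hn : 2 ^ 24 ≤ n) (hr : r.Prime) (hr5 : 5 ≤ r) (he : e ≠ 0) :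
    ∑ p ∈ SM n b with r ^ e ∣ n - p, Real.log p ≤ (n : ℝ) * hh r e + 4 * Real.log (13 * n) := by
  have h3 : Nat.Coprime 3 r := by
    rw [Nat.coprime_primes Nat.prime_three hr]; omega
  have h2 : Nat.Coprime 2 r := by
    rw [Nat.coprime_primes Nat.prime_two hr]; omega
  have h := A_bound n b (r ^ e) hn (hr5.trans (Nat.le_self_pow he r)) (h3.pow_right e)
    ((h2.pow_left 2).pow_right e)
  rw [wt_val r e hr hr5 he] at h
  push_cast at h
  exact h

theorem hq_bound (q : ℕ) (hq : 7 ≤ q) : hh q 1 + hh 5 2 ≤ 0.1946 := by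
  have l2' := Real.log_two_lt_d9
  have l3 := log3_bd.2
  have l5 := log5_bd.2
  have l7 := log7_bd.2
  have q7 : (7 : ℝ) ≤ q := by exact_mod_cast hq
  have h5 : hh 5 2 ≤ 0.0492 := by
    unfold hh; push_cast; norm_num; linarith
  have hlq : Real.log q ≤ 1.94615 + (q - 7) / 7 := by
    have := Real.log_le_sub_one_of_pos (show (0 : ℝ) < q / 7 by positivity)
    rw [Real.log_div (by positivity) (by norm_num)] at this
    linarith
  have hlq0 : 0 ≤ Real.log q := Real.log_nonneg (by linarith)
  have h1 : hh q 1 ≤ 0.1453 := by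
    unfold hh
    rw [pow_one]
    have e1 : Real.log q / ((q : ℝ) - 1) ≤ Real.log q / 6 :=
      div_le_div_of_nonneg_left hlq0 (by norm_num) (by linarith)
    have e2 : (3 * Real.log 2 + 3 / 2 * Real.log 3 + (1 : ℕ) * Real.log q +
        Real.log q / ((q : ℝ) - 1)) / (6 * (q : ℝ)) ≤ 0.14285 := by
      rw [div_le_iff₀ (by positivity)]
      push_cast
      linarith
    have e3 : 1 + 1 / (12 * (q : ℝ)) ≤ 1 + 1 / 84 := by
      have : 1 / (12 * (q : ℝ)) ≤ 1 / 84 := one_div_le_one_div_of_le (by norm_num) (by linarith)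
      linarith
    calc _ ≤ (0.14285 : ℝ) * (1 + 1 / 84) := mul_le_mul e2 e3 (by positivity) (by norm_num)
      _ ≤ _ := by norm_num
  linarith

theorem h5_bound : hh 5 1 ≤ 0.1946 := by
  have l2' := Real.log_two_lt_d9
  have l3 := log3_bd.2
  have l5 := log5_bd.2
  unfold hh; push_cast; norm_num; linarith

theorem hsmall : hh 7 2 + hh 11 2 + hh 13 2 + hh 17 2 + hh 19 2 + hh 23 2 ≤ 0.0621 := by
  have l2' := Real.log_two_lt_d9
  have l3 := log3_bd.2
  have l5 := log5_bd.2
  have l7 := log7_bd.2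
  have l11 : Real.log 11 ≤ 2 * Real.log 2 + Real.log 3 := by
    rw [← log_12]; exact Real.log_le_log (by norm_num) (by norm_num)
  have l13 : Real.log 13 ≤ Real.log 2 + Real.log 7 := by
    rw [← Real.log_mul (by norm_num) (by norm_num)]
    exact Real.log_le_log (by norm_num) (by norm_num)
  have l17 : Real.log 17 ≤ Real.log 2 + Real.log 3 + Real.log 3 := by
    rw [← Real.log_mul (by norm_num) (by norm_num), ← Real.log_mul (by norm_num) (by norm_num)]
    exact Real.log_le_log (by norm_num) (by norm_num)
  have l19 : Real.log 19 ≤ Real.log 2 + Real.log 2 + Real.log 5 := by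
    rw [← Real.log_mul (by norm_num) (by norm_num), ← Real.log_mul (by norm_num) (by norm_num)]
    exact Real.log_le_log (by norm_num) (by norm_num)
  have l23 : Real.log 23 ≤ Real.log 2 + Real.log 12 := by
    rw [← Real.log_mul (by norm_num) (by norm_num)]
    exact Real.log_le_log (by norm_num) (by norm_num)
  rw [log_12] at l23
  unfold hh; push_cast; norm_num; linarith

/-- Telescoping majorant. -/
noncomputable def GG (k : ℕ) : ℝ := (9.5 + 2 * Real.log k) / ((k : ℝ) - 1 / 2)

theorem GG_step (k : ℕ) (hk : 1 ≤ k) :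
    (7.5 + 2 * Real.log k) / (k : ℝ) ^ 2 ≤ GG k - GG (k + 1) := by
  have k1 : (1 : ℝ) ≤ k := by exact_mod_cast hk
  have hl : 0 ≤ Real.log k := Real.log_nonneg k1
  have h1 : Real.log ((k : ℝ) + 1) ≤ Real.log k + 1 / k := by
    have := Real.log_le_sub_one_of_pos (show (0 : ℝ) < ((k : ℝ) + 1) / k by positivity)
    rw [Real.log_div (by positivity) (by positivity)] at this
    have e : ((k : ℝ) + 1) / k - 1 = 1 / k := by field_simp; ring
    linarith
  unfold GG
  push_cast
  set x : ℝ := (k : ℝ) with hx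
  set l := Real.log x
  have a1 : (0 : ℝ) < x - 1 / 2 := by linarith
  have a2 : (0 : ℝ) < x + 1 / 2 := by linarith
  have a3 : x * 2 - 1 ≠ 0 := by intro h; linarith
  have a4 : 2 * x - 1 ≠ 0 := by intro h; linarith
  have e1 : (9.5 + 2 * Real.log (x + 1)) / (x + 1 - 1 / 2) ≤ (9.5 + 2 * (l + 1 / x)) / (x + 1 / 2) := by
    rw [show x + 1 - 1 / 2 = x + 1 / 2 by ring]
    gcongr
  have e2 : (9.5 + 2 * l) / (x - 1 / 2) - (9.5 + 2 * (l + 1 / x)) / (x + 1 / 2) -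
      (7.5 + 2 * l) / x ^ 2 = ((7.5 + 2 * l) / 4 + x) / (x ^ 2 * ((x - 1 / 2) * (x + 1 / 2))) := by
    field_simp
    ring
  have e3 : 0 ≤ ((7.5 + 2 * l) / 4 + x) / (x ^ 2 * ((x - 1 / 2) * (x + 1 / 2))) := by positivity
  linarith

theorem hh_tail (k : ℕ) (hk : 5 ≤ k) :
    hh (6 * k - 1) 2 + hh (6 * k + 1) 2 ≤ 1.0036 / 108 * (GG k - GG (k + 1)) := by
  refine le_trans ?_ (mul_le_mul_of_nonneg_left (GG_step k (by omega)) (by norm_num))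
  have k5 : (5 : ℝ) ≤ k := by exact_mod_cast hk
  have c1 : ((6 * k - 1 : ℕ) : ℝ) = 6 * (k : ℝ) - 1 := by
    rw [Nat.cast_sub (by omega)]; push_cast; ring
  have c2 : ((6 * k + 1 : ℕ) : ℝ) = 6 * (k : ℝ) + 1 := by push_cast; ring
  have l2' := Real.log_two_lt_d9
  have l3 := log3_bd.2
  have l5 := log5_bd.2
  have hlk : 0 ≤ Real.log k := Real.log_nonneg (by linarith)
  have main : ∀ r : ℝ, 29 ≤ r → r ≤ 6 * k + 1 →
      (3 * Real.log 2 + 3 / 2 * Real.log 3 + (2 : ℕ) * Real.log r + Real.log r / (r - 1)) /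
      (6 * r ^ 2) * (1 + 1 / (12 * r ^ 2)) ≤ (7.5 + 2 * Real.log k) * (1.0001 / (6 * r ^ 2)) := by
    intro r hr hrk
    have b1 : Real.log r ≤ Real.log 2 + Real.log 3 + Real.log k + 1 / 30 := by
      have := Real.log_le_sub_one_of_pos (show (0 : ℝ) < r / (2 * 3 * k) by positivity)
      rw [Real.log_div (by positivity) (by positivity), Real.log_mul (by norm_num) (by positivity),
        Real.log_mul (by norm_num) (by norm_num)] at this
      have e : r / (2 * 3 * k) ≤ 1 + 1 / 30 := by
        rw [div_le_iff₀ (by positivity)]; linarith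
      linarith
    have b2 : Real.log r / (r - 1) ≤ 0.1218 := by
      rw [div_le_iff₀ (by linarith)]
      have := Real.log_le_sub_one_of_pos (show (0 : ℝ) < r / (2 * 3 * 5) by positivity)
      rw [Real.log_div (by positivity) (by positivity), Real.log_mul (by norm_num) (by positivity),
        Real.log_mul (by norm_num) (by norm_num)] at this
      linarith
    have b3 : 3 * Real.log 2 + 3 / 2 * Real.log 3 + (2 : ℕ) * Real.log r + Real.log r / (r - 1) ≤
        7.5 + 2 * Real.log k := by
      push_cast; linarith
    have b4 : 1 + 1 / (12 * r ^ 2) ≤ 1.0001 := by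
      have : 1 / (12 * r ^ 2) ≤ 1 / 10000 := one_div_le_one_div_of_le (by norm_num) (by nlinarith)
      linarith
    calc _ ≤ (7.5 + 2 * Real.log k) / (6 * r ^ 2) * 1.0001 := by
          apply mul_le_mul _ b4 (by positivity) (by positivity)
          gcongr
      _ = _ := by ring
  unfold hh
  rw [c1, c2]
  have m1 := main (6 * k - 1) (by linarith) (by linarith)
  have m2 := main (6 * k + 1) (by linarith) (by linarith)
  refine (add_le_add m1 m2).trans ?_
  rw [← mul_add]
  have : 1.0001 / (6 * (6 * (k : ℝ) - 1) ^ 2) + 1.0001 / (6 * (6 * (k : ℝ) + 1) ^ 2) ≤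
      1.0036 / 108 / (k : ℝ) ^ 2 := by
    have a1 : (0 : ℝ) < 6 * k - 1 := by linarith
    rw [div_add_div _ _ (by positivity) (by positivity), div_div, div_le_div_iff₀ (by positivity) (by positivity)]
    have k2 : (25 : ℝ) ≤ (k : ℝ) ^ 2 := by nlinarith
    nlinarith [mul_nonneg (sub_nonneg.mpr k2) (sq_nonneg (k : ℝ))]
  calc _ ≤ (7.5 + 2 * Real.log k) * (1.0036 / 108 / (k : ℝ) ^ 2) := by gcongr
    _ = _ := by ring

theorem GG5 : 1.0036 / 108 * GG 5 ≤ 0.0263 := by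
  have l5 := log5_bd.2
  unfold GG
  push_cast
  norm_num
  linarith

theorem GG_nonneg (k : ℕ) (hk : 1 ≤ k) : 0 ≤ GG k := by
  have k1 : (1 : ℝ) ≤ k := by exact_mod_cast hk
  have hl : 0 ≤ Real.log k := Real.log_nonneg k1
  unfold GG
  exact div_nonneg (by linarith) (by linarith)

end PSF
namespace PSF
open Finset ArithmeticFunction

/-- Indicator weight. -/
noncomputable def gg (n r p : ℕ) : ℝ := if r.Prime ∧ r ^ 2 ∣ n - p then Real.log p else 0

theorem gg_nonneg (n r p : ℕ) : 0 ≤ gg n r p := by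
  unfold gg; split_ifs
  · exact Real.log_natCast_nonneg p
  · exact le_rfl

theorem hh_nonneg (r e : ℕ) (hr : 5 ≤ r) : 0 ≤ hh r e := by
  unfold hh
  have r5 : (5 : ℝ) ≤ r := by exact_mod_cast hr
  have h1 : 0 ≤ Real.log r := Real.log_natCast_nonneg r
  have h2 : 0 ≤ Real.log 2 := Real.log_nonneg (by norm_num)
  have h3 : 0 ≤ Real.log 3 := Real.log_nonneg (by norm_num)
  have h4 : 0 ≤ Real.log r / ((r : ℝ) - 1) := div_nonneg h1 (by linarith)
  positivity

theorem gg_sum (n b r : ℕ) (hn : 2 ^ 24 ≤ n) (hr5 : 5 ≤ r) :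
    ∑ p ∈ SM n b, gg n r p ≤ (n : ℝ) * hh r 2 + 4 * Real.log (13 * n) := by
  have hn0 : (1 : ℝ) ≤ n := by exact_mod_cast (by omega : 1 ≤ n)
  have hl : 0 ≤ Real.log (13 * n) := Real.log_nonneg (by linarith)
  by_cases hr : r.Prime
  · have h := Ar_bound n b r 2 hn hr hr5 (by norm_num)
    rw [Finset.sum_filter] at h
    simpa [gg, hr] using h
  · have := hh_nonneg r 2 hr5
    simp only [gg, hr, false_and, if_false, Finset.sum_const_zero]
    positivity

theorem SM_pointwise (q n b p : ℕ) (hp : p ∈ SM n b)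
    (H : q ∣ n - p ∨ ∃ r, r.Prime ∧ r ≠ 2 ∧ r ^ 2 ∣ n - p) :
    Real.log p ≤ (if q ^ 1 ∣ n - p then Real.log p else 0) +
      (if q = 5 then 0 else gg n 5 p) + (if 9 ∣ n - p then Real.log p else 0) +
      (gg n 7 p + gg n 11 p + gg n 13 p + gg n 17 p + gg n 19 p + gg n 23 p) +
      ∑ k ∈ Ico 5 ((n.sqrt + 1) / 6 + 1), (gg n (6 * k - 1) p + gg n (6 * k + 1) p) := by
  have hlp : 0 ≤ Real.log p := Real.log_natCast_nonneg p
  have g7 := gg_nonneg n 7 p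
  have g11 := gg_nonneg n 11 p
  have g13 := gg_nonneg n 13 p
  have g17 := gg_nonneg n 17 p
  have g19 := gg_nonneg n 19 p
  have g23 := gg_nonneg n 23 p
  have n1 : (0 : ℝ) ≤ if q ^ 1 ∣ n - p then Real.log p else 0 := by
    split_ifs <;> linarith
  have n2 : (0 : ℝ) ≤ if q = 5 then 0 else gg n 5 p := by
    have := gg_nonneg n 5 p
    split_ifs <;> linarith
  have n3 : (0 : ℝ) ≤ if 9 ∣ n - p then Real.log p else 0 := by
    split_ifs <;> linarith
  have nn : ∀ k ∈ Ico 5 ((n.sqrt + 1) / 6 + 1), 0 ≤ gg n (6 * k - 1) p + gg n (6 * k + 1) p :=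
    fun k _ => add_nonneg (gg_nonneg _ _ _) (gg_nonneg _ _ _)
  have n4 := Finset.sum_nonneg nn
  rcases H with h | ⟨r, hr, hr2, hd⟩
  · have : (if q ^ 1 ∣ n - p then Real.log p else 0) = Real.log p := by
      rw [pow_one, if_pos h]
    linarith
  have hg : gg n r p = Real.log p := by
    unfold gg; rw [if_pos ⟨hr, hd⟩]
  have r2 := hr.two_le
  rcases lt_or_ge r 29 with hlt | hge
  · have hmem : r ∈ [3, 5, 7, 11, 13, 17, 19, 23] := by
      clear hg hd
      interval_cases r <;> revert hr hr2 <;> norm_num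
    simp only [List.mem_cons, List.not_mem_nil, or_false] at hmem
    rcases hmem with rfl | rfl | rfl | rfl | rfl | rfl | rfl | rfl
    · have : (if 9 ∣ n - p then Real.log p else 0) = Real.log p := if_pos (by simpa using hd)
      linarith
    · by_cases hq : q = 5
      · have : (if q ^ 1 ∣ n - p then Real.log p else 0) = Real.log p := by
          apply if_pos
          rw [hq]
          exact (pow_dvd_pow 5 (by norm_num)).trans hd
        linarith
      · have : (if q = 5 then 0 else gg n 5 p) = Real.log p := by rw [if_neg hq, hg]
        linarith
    all_goals linarith
  · simp only [SM, mem_filter, mem_Ioc] at hp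
    have hle : r ^ 2 ≤ n := (Nat.le_of_dvd (by omega) hd).trans (Nat.sub_le _ _)
    have hs : r ≤ n.sqrt := by rw [Nat.le_sqrt']; exact hle
    have h2 : r % 2 ≠ 0 := by
      intro h
      have := (Nat.prime_dvd_prime_iff_eq Nat.prime_two hr).mp (Nat.dvd_of_mod_eq_zero h)
      omega
    have h3 : r % 3 ≠ 0 := by
      intro h
      have := (Nat.prime_dvd_prime_iff_eq Nat.prime_three hr).mp (Nat.dvd_of_mod_eq_zero h)
      omega
    have hmem : (r + 1) / 6 ∈ Ico 5 ((n.sqrt + 1) / 6 + 1) := by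
      rw [mem_Ico]; omega
    have hsin := Finset.single_le_sum nn hmem
    have ga := gg_nonneg n (6 * ((r + 1) / 6) - 1) p
    have gb := gg_nonneg n (6 * ((r + 1) / 6) + 1) p
    have : 6 * ((r + 1) / 6) - 1 = r ∨ 6 * ((r + 1) / 6) + 1 = r := by omega
    rcases this with e | e
    · rw [e, hg] at hsin
      linarith
    · rw [e, hg] at hsin
      linarith

theorem SM_sum (q n b : ℕ) (hq : q.Prime) (hq3 : 3 < q) (hn : 2 ^ 24 ≤ n)
    (H : ∀ p ∈ SM n b, q ∣ n - p ∨ ∃ r, r.Prime ∧ r ≠ 2 ∧ r ^ 2 ∣ n - p) :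
    ∑ p ∈ SM n b, Real.log p ≤ (n : ℝ) * 0.4208 +
      (4 / 3 * Real.sqrt n + 4) * Real.log (13 * n) := by
  have hn0 : (1 : ℝ) ≤ n := by exact_mod_cast (by omega : 1 ≤ n)
  have hl : 0 ≤ Real.log (13 * n) := Real.log_nonneg (by linarith)
  set L := Real.log (13 * n) with hL
  refine (Finset.sum_le_sum fun p hp => SM_pointwise q n b p hp (H p hp)).trans ?_
  simp only [Finset.sum_add_distrib]
  have hq5 : 5 ≤ q := by
    by_contra h
    have : q = 4 := by omega
    rw [this] at hq
    revert hq; norm_num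
  have a1 : ∑ p ∈ SM n b, (if q ^ 1 ∣ n - p then Real.log p else 0) +
      ∑ p ∈ SM n b, (if q = 5 then 0 else gg n 5 p) ≤ (n : ℝ) * 0.1946 + 8 * L := by
    have h1 := Ar_bound n b q 1 hn hq hq5 (by norm_num)
    rw [Finset.sum_filter] at h1
    by_cases h5 : q = 5
    · simp only [h5, if_true, Finset.sum_const_zero]
      rw [h5] at h1
      have := mul_le_mul_of_nonneg_left h5_bound (show (0 : ℝ) ≤ n by linarith)
      rw [add_zero]
      refine h1.trans ?_
      linarith
    · simp only [h5, if_false]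
      have h2 := gg_sum n b 5 hn (by norm_num)
      have h7 : 7 ≤ q := by
        by_contra h
        have : q = 6 := by omega
        rw [this] at hq
        revert hq; norm_num
      have := mul_le_mul_of_nonneg_left (hq_bound q h7) (show (0 : ℝ) ≤ n by linarith)
      linarith
  have a2 := A9_bound n b hn
  rw [Finset.sum_filter] at a2
  have s7 := gg_sum n b 7 hn (by norm_num)
  have s11 := gg_sum n b 11 hn (by norm_num)
  have s13 := gg_sum n b 13 hn (by norm_num)
  have s17 := gg_sum n b 17 hn (by norm_num)
  have s19 := gg_sum n b 19 hn (by norm_num)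
  have s23 := gg_sum n b 23 hn (by norm_num)
  have ss := mul_le_mul_of_nonneg_left hsmall (show (0 : ℝ) ≤ n by linarith)
  set M := (n.sqrt + 1) / 6 + 1 with hM
  have hM5 : 5 ≤ M := by
    have : 4096 ≤ n.sqrt := by rw [Nat.le_sqrt']; omega
    omega
  have a3 : ∑ p ∈ SM n b, ∑ k ∈ Ico 5 M, (gg n (6 * k - 1) p + gg n (6 * k + 1) p) ≤
      (n : ℝ) * 0.0263 + (M - 5) * (8 * L) := by
    rw [Finset.sum_comm]
    have : ∀ k ∈ Ico 5 M, ∑ p ∈ SM n b, (gg n (6 * k - 1) p + gg n (6 * k + 1) p) ≤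
        (n : ℝ) * (1.0036 / 108 * (GG k - GG (k + 1))) + 8 * L := by
      intro k hk
      rw [mem_Ico] at hk
      rw [Finset.sum_add_distrib]
      have t1 := gg_sum n b (6 * k - 1) hn (by omega)
      have t2 := gg_sum n b (6 * k + 1) hn (by omega)
      have t3 := mul_le_mul_of_nonneg_left (hh_tail k hk.1) (show (0 : ℝ) ≤ n by linarith)
      linarith
    refine (Finset.sum_le_sum this).trans ?_
    rw [Finset.sum_add_distrib, Finset.sum_const, Nat.card_Ico, nsmul_eq_mul, Nat.cast_sub hM5,
      ← Finset.mul_sum, ← Finset.mul_sum]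
    have tele : ∑ k ∈ Ico 5 M, (GG k - GG (k + 1)) = GG 5 - GG M := by
      have := Finset.sum_Ico_sub GG hM5
      have e : ∑ k ∈ Ico 5 M, (GG k - GG (k + 1)) = - ∑ k ∈ Ico 5 M, (GG (k + 1) - GG k) := by
        rw [← Finset.sum_neg_distrib]
        apply Finset.sum_congr rfl
        intro k _; ring
      rw [e, this]; ring
    rw [tele]
    have g0 := GG_nonneg M (by omega)
    have g5 := GG5
    have : (n : ℝ) * (1.0036 / 108 * (GG 5 - GG M)) ≤ n * 0.0263 := by
      apply mul_le_mul_of_nonneg_left _ (by linarith)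
      linarith
    push_cast
    linarith
  have hMle : (M : ℝ) ≤ (Real.sqrt n + 1) / 6 + 1 := by
    have h1 : ((n.sqrt : ℕ) : ℝ) ≤ Real.sqrt n := Real.nat_sqrt_le_real_sqrt
    have h2 : (((n.sqrt + 1) / 6 : ℕ) : ℝ) ≤ ((n.sqrt + 1 : ℕ) : ℝ) / ((6 : ℕ) : ℝ) := Nat.cast_div_le
    rw [hM]
    push_cast at h2 ⊢
    linarith
  have hML : (M : ℝ) * L ≤ ((Real.sqrt n + 1) / 6 + 1) * L := mul_le_mul_of_nonneg_right hMle hl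
  simp only [Finset.sum_add_distrib] at a3
  linarith

theorem S0_split (n b : ℕ) (hn : 2 ^ 24 ≤ n) :
    ∑ p ∈ Ioc 0 n with p.Prime ∧ p % 4 = b, Real.log p ≤
      ∑ p ∈ SM n b, Real.log p + 0.0011 * n + Real.log n := by
  have hth : Chebyshev.theta ((n : ℝ) / 1296) ≤ 0.0011 * n := by
    have h := Chebyshev.theta_le_log4_mul_x (x := (n : ℝ) / 1296) (by positivity)
    have l4 := log4_eq
    have l2 := Real.log_two_lt_d9
    have n0 : (0 : ℝ) ≤ n := Nat.cast_nonneg n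
    have : Real.log 4 * ((n : ℝ) / 1296) ≤ 1.387 * (n / 1296) :=
      mul_le_mul_of_nonneg_right (by linarith) (by positivity)
    linarith
  have hth' : Chebyshev.theta ((n : ℝ) / 1296) =
      ∑ p ∈ Ioc 0 n with p.Prime ∧ p ≤ n / 1296, Real.log p := by
    unfold Chebyshev.theta
    have : ⌊(n : ℝ) / 1296⌋₊ = n / 1296 := by
      have := Nat.floor_div_natCast (n : ℝ) 1296
      rw [Nat.floor_natCast] at this
      exact_mod_cast this
    rw [this]
    apply Finset.sum_congr _ (fun _ _ => rfl)
    ext p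
    simp only [mem_filter, mem_Ioc]
    have := Nat.div_le_self n 1296
    constructor
    · rintro ⟨⟨h1, h2⟩, h3⟩
      exact ⟨⟨h1, by omega⟩, h3, h2⟩
    · rintro ⟨⟨h1, h2⟩, h3, h4⟩
      exact ⟨⟨h1, h4⟩, h3⟩
  have hln : Real.log n = ∑ p ∈ Ioc 0 n, if p = n then Real.log p else 0 := by
    rw [Finset.sum_ite_eq' (Ioc 0 n) n (fun p => Real.log (p : ℝ)),
      if_pos (mem_Ioc.mpr ⟨by omega, le_rfl⟩)]
  have key : ∑ p ∈ Ioc 0 n with p.Prime ∧ p % 4 = b, Real.log p ≤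
      ∑ p ∈ SM n b, Real.log p + ∑ p ∈ Ioc 0 n with p.Prime ∧ p ≤ n / 1296, Real.log p +
      ∑ p ∈ Ioc 0 n, if p = n then Real.log p else 0 := by
    unfold SM
    simp only [Finset.sum_filter]
    rw [← Finset.sum_add_distrib, ← Finset.sum_add_distrib]
    apply Finset.sum_le_sum
    intro p hp
    rw [mem_Ioc] at hp
    have hlp : 0 ≤ Real.log p := Real.log_natCast_nonneg p
    by_cases h1 : p.Prime ∧ p % 4 = b
    · rw [if_pos h1]
      by_cases h2 : p ≤ n / 1296
      · rw [if_pos (⟨h1.1, h2⟩ : p.Prime ∧ p ≤ n / 1296)]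
        split_ifs <;> linarith
      · by_cases h3 : p = n
        · rw [if_pos h3]
          split_ifs <;> linarith
        · rw [if_pos (show p.Prime ∧ p % 4 = b ∧ n / 1296 < p ∧ p < n from
            ⟨h1.1, h1.2, by omega, by omega⟩)]
          split_ifs <;> linarith
    · rw [if_neg h1]
      split_ifs <;> linarith
  rw [← hth', ← hln] at key
  linarith

theorem final_ineq (n : ℕ) (hn : 2 ^ 24 ≤ n) :
    (n : ℝ) * 0.4208 + (4 / 3 * Real.sqrt n + 4) * Real.log (13 * n) + 0.0011 * n + Real.log n <
    0.436 * (n : ℝ) - 0.4125 * (Real.sqrt n * Real.log n) - 16.2 * Real.sqrt n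
      - 34 * Real.log n - 54 := by
  have hn0 : (2 : ℝ) ^ 24 ≤ n := by exact_mod_cast hn
  have l2 := Real.log_two_lt_d9
  have l7 := log7_bd.2
  have l14 : Real.log 13 ≤ 2.64 := by
    have : Real.log 13 ≤ Real.log 2 + Real.log 7 := by
      rw [← Real.log_mul (by norm_num) (by norm_num)]
      exact Real.log_le_log (by norm_num) (by norm_num)
    linarith
  rw [Real.log_mul (by norm_num) (by positivity)]
  set s := Real.sqrt n with hs
  have hss : (n : ℝ) = s ^ 2 := (Real.sq_sqrt (by positivity)).symm
  have hs0 : (4096 : ℝ) ≤ s := by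
    rw [hs]; apply Real.le_sqrt_of_sq_le; linarith
  have hlog : Real.log n = 2 * Real.log s := by rw [hss, Real.log_pow]; norm_num
  have hlogs : Real.log s ≤ 12 * Real.log 2 + (s / 4096 - 1) := by
    have := Real.log_le_sub_one_of_pos (show (0 : ℝ) < s / 2 ^ 12 by positivity)
    rw [Real.log_div (by positivity) (by positivity), Real.log_pow] at this
    push_cast at this
    norm_num at this ⊢
    linarith
  set l := Real.log n with hl
  have hlb : l ≤ 14.6356 + s / 2048 := by rw [hlog]; linarith
  rw [hss]
  have h1 : s * l ≤ s * (14.6356 + s / 2048) := mul_le_mul_of_nonneg_left hlb (by linarith)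
  have h2 : (4 / 3 * s + 4) * (Real.log 13 + l) ≤ (4 / 3 * s + 4) * (2.64 + (14.6356 + s / 2048)) :=
    mul_le_mul_of_nonneg_left (by linarith) (by linarith)
  have h3 : 4096 * s ≤ s ^ 2 := by nlinarith
  nlinarith

theorem large_part (q : ℕ) (hq : q.Prime) (hq3 : 3 < q) (n : ℕ) (hn : 2 ^ 24 ≤ n) :
    ∃ p k : ℕ, p.Prime ∧ Squarefree k ∧ Nat.gcd k q = 1 ∧ n = p + k := by
  obtain ⟨b, hb, hnb⟩ : ∃ b, (b = 1 ∨ b = 3) ∧ n % 4 ≠ b := by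
    by_cases h : n % 4 = 1
    · exact ⟨3, by omega, by omega⟩
    · exact ⟨1, by omega, by omega⟩
  by_contra hcon
  have H : ∀ p ∈ SM n b, q ∣ n - p ∨ ∃ r, r.Prime ∧ r ≠ 2 ∧ r ^ 2 ∣ n - p := by
    intro p hp
    by_contra hh
    push Not at hh
    obtain ⟨h1, h2⟩ := hh
    simp only [SM, mem_filter, mem_Ioc] at hp
    apply hcon
    refine ⟨p, n - p, hp.2.1, ?_, ((hq.coprime_iff_not_dvd).mpr h1).symm, by omega⟩
    rw [Nat.squarefree_iff_prime_squarefree]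
    intro r hr hd
    by_cases hr2 : r = 2
    · subst hr2
      omega
    · exact h2 r hr hr2 (by rwa [pow_two])
  have h1 := SM_sum q n b hq hq3 hn H
  have h2 := S0_split n b hn
  have h3 := lower_main b n hb (by omega)
  have h4 := final_ineq n hn
  linarith

end PSF
/-- For every prime `q` with `3 < q < 10^5`, every integer greater than two can be
written as the sum of a prime and a square-free number co-prime to `q`. -/
theorem prime_add_squarefree_coprime (q : ℕ) (hq : q.Prime) (hq3 : 3 < q)
    (hq5 : q < 10 ^ 5) (n : ℕ) (hn : 2 < n) :
    ∃ p k : ℕ, p.Prime ∧ Squarefree k ∧ Nat.gcd k q = 1 ∧ n = p + k := by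
  rcases lt_or_ge n (2 ^ 24) with h | h
  · exact PSF.finite_part q hq hq3 n hn h
  · exact PSF.large_part q hq hq3 n h
end

section
/- For every prime q with 2 ≤ q < 10^5, every integer greater than four can be written as the sum of two primes and a square-free number co-prime to q. -/
/-- Bits at positions `k * i`, `i < 2 ^ j`. -/
def gmask (k : ℕ) : ℕ → ℕ
  | 0 => 1
  | j + 1 => gmask k j ||| (gmask k j <<< (k * 2 ^ j))

theorem gmask_testBit (k : ℕ) : ∀ j i : ℕ, i < 2 ^ j → (gmask k j).testBit (k * i) = true
  | 0, i, h => by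
    have : i = 0 := by simpa using h
    subst this; simp [gmask]
  | j + 1, i, h => by
    rw [gmask, Nat.testBit_or, Bool.or_eq_true]
    by_cases hi : i < 2 ^ j
    · exact Or.inl (gmask_testBit k j i hi)
    · right
      push Not at hi
      rw [Nat.testBit_shiftLeft]
      have h1 := gmask_testBit k j (i - 2 ^ j) (by rw [pow_succ] at h; omega)
      rw [Nat.mul_sub] at h1
      simp [h1, Nat.mul_le_mul_left k hi]

/-- Odd multiples of `r ^ 2` (encoded `2 * i + 1 ↦ i`) up to `B`. -/
def rmask (B r : ℕ) : ℕ := gmask (r * r) (Nat.log2 (B / (r * r)) + 1) <<< ((r * r - 1) / 2)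

theorem rmask_testBit (B r i : ℕ) (hr : r % 2 = 1) (hi : i < B) (h : r * r ∣ 2 * i + 1) :
    (rmask B r).testBit i = true := by
  obtain ⟨c, hc⟩ := h
  have hrr : (r * r) % 2 = 1 := by rw [Nat.mul_mod, hr]
  have hcodd : c % 2 = 1 := by
    by_contra hne
    have h0 : c % 2 = 0 := by omega
    have := congrArg (· % 2) hc
    simp only [Nat.mul_mod (r * r) c, h0] at this
    omega
  obtain ⟨d, rfl⟩ : ∃ d, c = 2 * d + 1 := ⟨c / 2, by omega⟩
  obtain ⟨e, he⟩ : ∃ e, r * r = 2 * e + 1 := ⟨r * r / 2, by omega⟩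
  have hi2 : i = e + r * r * d := by
    have : r * r * (2 * d + 1) = 2 * (r * r * d) + r * r := by ring
    omega
  have hpos : 0 < r * r := by omega
  have hd : d < 2 ^ (Nat.log2 (B / (r * r)) + 1) := by
    refine lt_of_le_of_lt ?_ Nat.lt_log2_self
    rw [Nat.le_div_iff_mul_le hpos, mul_comm]
    omega
  have := gmask_testBit (r * r) _ d hd
  rw [rmask, Nat.testBit_shiftLeft]
  have h3 : (r * r - 1) / 2 = e := by omega
  rw [h3, hi2]
  simp [this]

def rlist (R : ℕ) : List ℕ :=
  ((List.range R).map (fun i => 2 * i + 3)).filter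
    (fun r => [3, 5, 7, 11, 13, 17, 19, 23, 29, 31, 37].all (fun d => r % d != 0 || r == d))

theorem mem_rlist (R r : ℕ) (hr : r.Prime) (h2 : r % 2 = 1) (h : r < 2 * R + 3) : r ∈ rlist R := by
  rw [rlist, List.mem_filter, List.mem_map]
  have := hr.two_le
  refine ⟨⟨(r - 3) / 2, by rw [List.mem_range]; omega, by omega⟩, ?_⟩
  rw [List.all_eq_true]
  intro d hd
  by_cases hdr : r % d = 0
  · rcases (Nat.dvd_prime hr).1 (Nat.dvd_of_mod_eq_zero hdr) with h1 | h1
    · subst h1; simp at hd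
    · simp [h1]
  · simp [hdr]

def nsf (B R : ℕ) : ℕ := (rlist R).foldl (fun acc r => acc ||| rmask B r) 0

theorem foldl_or_testBit (f : ℕ → ℕ) (i : ℕ) : ∀ (l : List ℕ) (a : ℕ),
    (l.foldl (fun acc r => acc ||| f r) a).testBit i = true ↔
      a.testBit i = true ∨ ∃ r ∈ l, (f r).testBit i = true
  | [], a => by simp
  | x :: l, a => by
    rw [List.foldl_cons, foldl_or_testBit f i l, Nat.testBit_or, Bool.or_eq_true]
    simp [or_assoc]

theorem sf_of_nsf (B R i : ℕ) (hi : i < B) (hR : 2 * B ≤ (2 * R + 3) * (2 * R + 3))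
    (h : (nsf B R).testBit i = false) : Squarefree (2 * i + 1) := by
  rw [Nat.squarefree_iff_prime_squarefree]
  intro r hr hd
  have hodd : r % 2 = 1 := by
    rcases hr.eq_two_or_odd with h2 | h2
    · subst h2; omega
    · exact h2
  have hle := Nat.le_of_dvd (by omega) hd
  have hlt : r < 2 * R + 3 := by
    by_contra hc
    push Not at hc
    have := Nat.mul_le_mul hc hc
    omega
  have : (nsf B R).testBit i = true := by
    rw [nsf, foldl_or_testBit]
    exact Or.inr ⟨r, mem_rlist R r hr hodd hlt, rmask_testBit B r i hodd hi hd⟩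
  rw [h] at this
  exact absurd this (by simp)

def sfmask (B R : ℕ) : ℕ := (nsf B R % (1 <<< B)) ^^^ (1 <<< B - 1)

theorem sf_of_sfmask (B R i : ℕ) (hR : 2 * B ≤ (2 * R + 3) * (2 * R + 3))
    (h : (sfmask B R).testBit i = true) : Squarefree (2 * i + 1) := by
  rw [sfmask, Nat.one_shiftLeft, Nat.testBit_xor, Nat.testBit_mod_two_pow,
    Nat.testBit_two_pow_sub_one] at h
  by_cases hi : i < B
  · apply sf_of_nsf B R i hi hR
    simpa [hi] using h
  · simp [hi] at h

/-- The pairs of primes `(p, p')` with `p' - p` a power of two, encoded as `(p + 1) / 2`. -/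
def pairList : List (ℕ × ℕ) :=
  [(2, 10), (3, 4), (15, 16), (7, 9), (30, 31), (36, 37), (22, 24), (19, 21), (2, 4), (2, 3)]

def covered (S : ℕ) : ℕ := pairList.foldl (fun acc x => acc ||| ((S <<< x.1) &&& (S <<< x.2))) 7

theorem covered_check :
    (covered (sfmask 1000000 706) % (1 <<< 1000000) == 1 <<< 1000000 - 1) = true := by
  decide +kernel

theorem covered_testBit (S t : ℕ) (ht : 3 ≤ t) (h : (covered S).testBit t = true) :
    ∃ x ∈ pairList, x.1 ≤ t ∧ x.2 ≤ t ∧ S.testBit (t - x.1) = true ∧ S.testBit (t - x.2) = true := by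
  have key : ∀ (l : List (ℕ × ℕ)) (a : ℕ),
      (l.foldl (fun acc x => acc ||| ((S <<< x.1) &&& (S <<< x.2))) a).testBit t = true →
      a.testBit t = true ∨ ∃ x ∈ l, x.1 ≤ t ∧ x.2 ≤ t ∧
        S.testBit (t - x.1) = true ∧ S.testBit (t - x.2) = true := by
    intro l
    induction l with
    | nil => intro a h; exact Or.inl h
    | cons x l ih =>
      intro a h
      rw [List.foldl_cons] at h
      rcases ih _ h with h | ⟨y, hy, h⟩
      · rw [Nat.testBit_or, Bool.or_eq_true, Nat.testBit_and, Nat.testBit_shiftLeft,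
          Nat.testBit_shiftLeft] at h
        rcases h with h | h
        · exact Or.inl h
        · right
          simp only [Bool.and_eq_true, decide_eq_true_eq] at h
          exact ⟨x, by simp, h.1.1, h.2.1, h.1.2, h.2.2⟩
      · exact Or.inr ⟨y, by simp [hy], h⟩
  rcases key _ _ h with h | h
  · exfalso
    have h7 : (7 : ℕ) = 2 ^ 3 - 1 := by norm_num
    rw [h7, Nat.testBit_two_pow_sub_one] at h
    simp at h; omega
  · exact h

theorem pairList_spec : ∀ x ∈ pairList, (2 * x.1 - 1).Prime ∧ (2 * x.2 - 1).Prime ∧ 2 ≤ x.1 ∧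
    x.1 < x.2 ∧ ∃ e < 5, x.2 - x.1 = 2 ^ e := by
  intro x hx
  simp only [pairList, List.mem_cons, List.not_mem_nil, or_false] at hx
  rcases hx with rfl | rfl | rfl | rfl | rfl | rfl | rfl | rfl | rfl | rfl <;>
    refine ⟨by norm_num, by norm_num, by norm_num, by norm_num, by decide⟩

theorem finite_case (q : ℕ) (hq : q.Prime) (t : ℕ) (h2 : 2 ≤ t) (ht : t < 1000000) :
    ∃ p m : ℕ, p.Prime ∧ Squarefree m ∧ Nat.gcd m q = 1 ∧ 2 * t = p + m := by
  rcases Nat.eq_or_lt_of_le h2 with h2 | h3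
  · subst h2
    exact ⟨3, 1, by norm_num, squarefree_one, by simp, rfl⟩
  have hc := covered_check
  rw [beq_iff_eq, Nat.one_shiftLeft] at hc
  have hb : (covered (sfmask 1000000 706)).testBit t = true := by
    have := congrArg (fun z => Nat.testBit z t) hc
    simp only [Nat.testBit_mod_two_pow, Nat.testBit_two_pow_sub_one, ht] at this
    simpa using this
  obtain ⟨x, hx, hx1, hx2, hs1, hs2⟩ := covered_testBit _ t h3 hb
  have sf1 := sf_of_sfmask _ _ _ (by norm_num) hs1
  have sf2 := sf_of_sfmask _ _ _ (by norm_num) hs2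
  obtain ⟨p1, p2, hge, hlt, e, -, he⟩ := pairList_spec x hx
  by_cases h : Nat.gcd (2 * (t - x.1) + 1) q = 1
  · exact ⟨_, _, p1, sf1, h, by omega⟩
  · refine ⟨_, _, p2, sf2, ?_, by omega⟩
    by_contra h'
    have d1 : q ∣ 2 * (t - x.1) + 1 := by
      by_contra hn
      exact h (Nat.Coprime.symm ((Nat.Prime.coprime_iff_not_dvd hq).2 hn))
    have d2 : q ∣ 2 * (t - x.2) + 1 := by
      by_contra hn
      exact h' (Nat.Coprime.symm ((Nat.Prime.coprime_iff_not_dvd hq).2 hn))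
    have d3 := Nat.dvd_sub d1 d2
    have : 2 * (t - x.1) + 1 - (2 * (t - x.2) + 1) = 2 ^ (e + 1) := by
      rw [pow_succ]; omega
    rw [this] at d3
    have hq2 := (Nat.prime_dvd_prime_iff_eq hq Nat.prime_two).1 (hq.dvd_of_dvd_pow d3)
    subst hq2
    omega

section

open Finset

theorem ap_dvd (k s J M : ℕ) (hM : M.Coprime k) (hd : M ∣ J.factorial) :
    M ∣ ∏ j ∈ range J, (s + k * j) := by
  rw [← ZMod.natCast_eq_zero_iff]
  let u := ZMod.unitOfCoprime k hM.symm
  have hu : (u : ZMod M) = (k : ZMod M) := ZMod.coe_unitOfCoprime k hM.symm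
  by_cases hM0 : M = 0
  · subst hM0
    exact absurd (Nat.eq_zero_of_zero_dvd hd) (Nat.factorial_ne_zero J)
  haveI : NeZero M := ⟨hM0⟩
  obtain ⟨k', hk'⟩ : ∃ k' : ℕ, (k : ZMod M) * (k' : ZMod M) = 1 := by
    refine ⟨((u⁻¹ : (ZMod M)ˣ) : ZMod M).val, ?_⟩
    rw [ZMod.natCast_zmod_val, ← hu, Units.mul_inv]
  have h1 : ((∏ j ∈ range J, (s + k * j) : ℕ) : ZMod M)
      = (k : ZMod M) ^ J * (((k' * s).ascFactorial J : ℕ) : ZMod M) := by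
    rw [Nat.ascFactorial_eq_prod_range]
    push_cast
    rw [← card_range J, ← prod_const, card_range, ← prod_mul_distrib]
    refine prod_congr rfl fun j _ => ?_
    rw [mul_add, ← mul_assoc, hk', one_mul]
  rw [h1, (ZMod.natCast_eq_zero_iff _ _).2 (hd.trans (Nat.factorial_dvd_ascFactorial _ _)), mul_zero]

/-- The constant in the Chebyshev bound for arithmetic progressions. -/
noncomputable def gc (k : ℕ) : ℝ :=
  Real.log k + ∑ p ∈ k.primeFactors, Real.log p / ((p : ℝ) - 1)

/-- The Chebyshev function in an arithmetic progression. -/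
noncomputable def ath (k s x : ℕ) : ℝ :=
  ∑ p ∈ (range (x + 1)).filter (fun p => p.Prime ∧ p % k = s % k), Real.log p

theorem gc_nonneg (k : ℕ) : 0 ≤ gc k := by
  refine add_nonneg (Real.log_natCast_nonneg k) (sum_nonneg fun p hp => ?_)
  have := (Nat.prime_of_mem_primeFactors hp).one_lt
  have h1 : (1 : ℝ) < p := by exact_mod_cast this
  exact div_nonneg (Real.log_natCast_nonneg p) (by linarith)

theorem factorial_split (k J : ℕ) (hk : k ≠ 0) : ∃ K M : ℕ, J.factorial = K * M ∧ M.Coprime k ∧ 0 < K ∧ 0 < M ∧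
    Real.log K ≤ J * ∑ p ∈ k.primeFactors, Real.log p / ((p : ℝ) - 1) := by
  set f := J.factorial.factorization with hf
  set S := J.factorial.primeFactors with hS
  have hprod : ∏ p ∈ S, p ^ f p = J.factorial := by
    have := Nat.prod_factorization_pow_eq_self (Nat.factorial_ne_zero J)
    rw [Finsupp.prod, Nat.support_factorization] at this
    exact this
  have hpr : ∀ p ∈ S, p.Prime := fun p hp => Nat.prime_of_mem_primeFactors hp
  refine ⟨∏ p ∈ S.filter (· ∣ k), p ^ f p, ∏ p ∈ S.filter (fun p => ¬ p ∣ k), p ^ f p, ?_, ?_, ?_, ?_, ?_⟩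
  · rw [prod_filter_mul_prod_filter_not, hprod]
  · refine Nat.Coprime.prod_left fun p hp => Nat.Coprime.pow_left _ ?_
    rw [mem_filter] at hp
    exact (Nat.Prime.coprime_iff_not_dvd (hpr p hp.1)).2 hp.2
  · exact prod_pos fun p hp => pow_pos (hpr p (mem_filter.1 hp).1).pos _
  · exact prod_pos fun p hp => pow_pos (hpr p (mem_filter.1 hp).1).pos _
  · push_cast
    rw [Real.log_prod]
    · rw [mul_sum]
      calc ∑ p ∈ S.filter (· ∣ k), Real.log ((p : ℝ) ^ f p)
          ≤ ∑ p ∈ S.filter (· ∣ k), (J : ℝ) * (Real.log p / ((p : ℝ) - 1)) := by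
            refine sum_le_sum fun p hp => ?_
            have hp' := hpr p (mem_filter.1 hp).1
            haveI : Fact p.Prime := ⟨hp'⟩
            have h1 : (1 : ℝ) < p := by exact_mod_cast hp'.one_lt
            have hle : (p - 1) * f p ≤ J := by
              rw [hf, Nat.factorization_def _ hp', sub_one_mul_padicValNat_factorial]
              exact Nat.sub_le _ _
            have hle' : ((p : ℝ) - 1) * f p ≤ J := by
              have : (((p - 1) * f p : ℕ) : ℝ) ≤ J := by exact_mod_cast hle
              rwa [Nat.cast_mul, Nat.cast_sub hp'.one_le, Nat.cast_one] at this
            rw [Real.log_pow, mul_div_assoc', le_div_iff₀ (by linarith)]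
            nlinarith [Real.log_natCast_nonneg p]
        _ ≤ _ := by
            refine sum_le_sum_of_subset_of_nonneg ?_ ?_
            · intro p hp
              rw [mem_filter] at hp
              exact Nat.mem_primeFactors.2 ⟨hpr p hp.1, hp.2, hk⟩
            · intro p hp _
              have h1 : (1 : ℝ) < p := by
                exact_mod_cast (Nat.prime_of_mem_primeFactors hp).one_lt
              exact mul_nonneg (Nat.cast_nonneg _)
                (div_nonneg (Real.log_natCast_nonneg p) (by linarith))
    · intro p hp
      exact pow_ne_zero _ (by exact_mod_cast (hpr p (mem_filter.1 hp).1).ne_zero)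

theorem ath_step (k s x : ℕ) (hs : 1 ≤ s) (hsk : s ≤ k) (hsx : s ≤ x) :
    ath k s x ≤ ath k s ((x - s) / k + 1) + (((x - s) / k + 1 : ℕ) : ℝ) * gc k := by
  set J := (x - s) / k + 1 with hJ
  have hk : 0 < k := by omega
  obtain ⟨K, M, hKM, hcop, hK, hM, hlog⟩ := factorial_split k J hk.ne'
  set T := (range (x + 1)).filter (fun p => (p.Prime ∧ p % k = s % k) ∧ J < p) with hT
  have hTmem : ∀ p ∈ T, p.Prime ∧ J < p ∧ ∃ j < J, p = s + k * j := by
    intro p hp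
    rw [hT, mem_filter, mem_range] at hp
    obtain ⟨hpx, ⟨hpp, hmod⟩, hJp⟩ := hp
    refine ⟨hpp, hJp, ?_⟩
    have hge : s ≤ p := by
      by_contra hlt
      push Not at hlt
      rw [Nat.mod_eq_of_lt (by omega : p < k)] at hmod
      rcases Nat.eq_or_lt_of_le hsk with h | h
      · subst h; rw [Nat.mod_self] at hmod; exact hpp.ne_zero hmod
      · rw [Nat.mod_eq_of_lt h] at hmod; omega
    have hd : k ∣ p - s := (Nat.modEq_iff_dvd' hge).1 hmod.symm
    obtain ⟨j, hj⟩ := hd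
    refine ⟨j, ?_, by omega⟩
    rw [hJ, Nat.lt_succ_iff, Nat.le_div_iff_mul_le hk, mul_comm, ← hj]
    omega
  have hdvd1 : ∏ p ∈ T, p ∣ ∏ j ∈ range J, (s + k * j) := by
    refine Finset.prod_primes_dvd _ (fun p hp => (hTmem p hp).1.prime) fun p hp => ?_
    obtain ⟨_, _, j, hj, e⟩ := hTmem p hp
    conv_lhs => rw [e]
    exact dvd_prod_of_mem _ (mem_range.2 hj)
  have hdvd2 := ap_dvd k s J M hcop ⟨K, by rw [hKM, mul_comm]⟩
  have hcop2 : Nat.Coprime (∏ p ∈ T, p) M := by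
    refine Nat.Coprime.prod_left fun p hp => ?_
    obtain ⟨hpp, hJp, _⟩ := hTmem p hp
    rw [Nat.Prime.coprime_iff_not_dvd hpp]
    intro h
    have : p ∣ J.factorial := h.trans ⟨K, by rw [hKM, mul_comm]⟩
    rw [hpp.dvd_factorial] at this
    omega
  have hle1 : ∏ j ∈ range J, (s + k * j) ≤ k ^ J * J.factorial := by
    rw [← prod_range_add_one_eq_factorial]
    calc ∏ j ∈ range J, (s + k * j) ≤ ∏ j ∈ range J, (k * (j + 1)) :=
          prod_le_prod' fun j _ => by rw [mul_add]; omega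
      _ = _ := by rw [prod_mul_distrib, prod_const, card_range]
  have hpos : 0 < ∏ j ∈ range J, (s + k * j) := prod_pos fun j _ => by omega
  have hle2 := Nat.le_of_dvd hpos (Nat.Coprime.mul_dvd_of_dvd_of_dvd hcop2 hdvd1 hdvd2)
  have hle3 : ∏ p ∈ T, p ≤ k ^ J * K := by
    refine Nat.le_of_mul_le_mul_right ?_ hM
    calc _ ≤ _ := hle2.trans hle1
      _ = _ := by rw [hKM]; ring
  have hTlog : ∑ p ∈ T, Real.log p ≤ J * gc k := by
    rw [← Real.log_prod (fun p hp => by exact_mod_cast (hTmem p hp).1.ne_zero)]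
    have hposT : 0 < ∏ p ∈ T, p := prod_pos fun p hp => (hTmem p hp).1.pos
    have : Real.log ((∏ p ∈ T, p : ℕ) : ℝ) ≤ Real.log ((k ^ J * K : ℕ) : ℝ) :=
      Real.log_le_log (by exact_mod_cast hposT) (by exact_mod_cast hle3)
    push_cast at this
    rw [Real.log_mul (by positivity) (by positivity), Real.log_pow] at this
    rw [gc, mul_add]
    linarith
  have hsplit : ath k s x ≤ ath k s J + ∑ p ∈ T, Real.log p := by
    unfold ath
    rw [← sum_filter_add_sum_filter_not ((range (x + 1)).filter _) (fun p => J < p), add_comm]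
    refine add_le_add ?_ (le_of_eq ?_)
    · refine sum_le_sum_of_subset_of_nonneg ?_ fun p _ _ => Real.log_natCast_nonneg p
      intro p hp
      simp only [mem_filter, mem_range] at hp ⊢
      exact ⟨by omega, hp.1.2⟩
    · rw [filter_filter]
  linarith

theorem ath_le_one (k s x : ℕ) (hx : x ≤ 1) : ath k s x = 0 := by
  unfold ath
  refine sum_eq_zero fun p hp => ?_
  simp only [mem_filter, mem_range] at hp
  have := hp.2.1.two_le
  omega

theorem ath_lt (k s x : ℕ) (hs : 1 ≤ s) (hsk : s ≤ k) (hsx : x < s) : ath k s x = 0 := by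
  unfold ath
  refine sum_eq_zero fun p hp => ?_
  simp only [mem_filter, mem_range] at hp
  exfalso
  obtain ⟨h1, hpp, hmod⟩ := hp
  rw [Nat.mod_eq_of_lt (by omega : p < k)] at hmod
  rcases Nat.eq_or_lt_of_le hsk with h | h
  · subst h; rw [Nat.mod_self] at hmod; exact hpp.ne_zero hmod
  · rw [Nat.mod_eq_of_lt h] at hmod; omega

theorem ath_bound (k s : ℕ) (hs : 1 ≤ s) (hsk : s ≤ k) (hk : 6 ≤ k) : ∀ x : ℕ, 1 ≤ x →
    ath k s x ≤ gc k * (x / ((k : ℝ) - 1) + 6 / 5 * (1 + Real.log x / Real.log (k / 2))) := by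
  intro x
  induction x using Nat.strong_induction_on with
  | _ x ih =>
  intro hx
  have hk' : (6 : ℝ) ≤ k := by exact_mod_cast hk
  have hx' : (1 : ℝ) ≤ x := by exact_mod_cast hx
  have hL : 0 < Real.log ((k : ℝ) / 2) := Real.log_pos (by linarith)
  have hlx : 0 ≤ Real.log x := Real.log_natCast_nonneg x
  have hg := gc_nonneg k
  by_cases hsx : x < s
  · rw [ath_lt k s x hs hsk hsx]
    have : 0 < (k : ℝ) - 1 := by linarith
    positivity
  push Not at hsx
  have hstep := ath_step k s x hs hsk hsx
  set J := (x - s) / k + 1 with hJ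
  have hq0 : 0 ≤ Real.log x / Real.log (k / 2) := div_nonneg hlx hL.le
  have hx0 : 0 ≤ (x : ℝ) / ((k : ℝ) - 1) := div_nonneg (by linarith) (by linarith)
  by_cases hJ1 : J ≤ 1
  · rw [ath_le_one k s J hJ1] at hstep
    have hJ' : (J : ℝ) ≤ 1 := by exact_mod_cast hJ1
    calc ath k s x ≤ J * gc k := by linarith
      _ ≤ gc k * 1 := by nlinarith
      _ ≤ _ := mul_le_mul_of_nonneg_left (by linarith) hg
  · push Not at hJ1
    have hkx : k * (J - 1) ≤ x - 1 := by
      have := Nat.mul_div_le (x - s) k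
      rw [hJ, Nat.add_sub_cancel]; omega
    have hkx' : (k : ℝ) * (J - 1) ≤ x - 1 := by
      have : ((k * (J - 1) : ℕ) : ℝ) ≤ ((x - 1 : ℕ) : ℝ) := by exact_mod_cast hkx
      rwa [Nat.cast_mul, Nat.cast_sub hJ1.le, Nat.cast_sub hx, Nat.cast_one] at this
    have hJ2 : (2 : ℝ) ≤ J := by exact_mod_cast hJ1
    have hJx : (J : ℝ) * (k / 2) ≤ x := by nlinarith
    have hJlt : J < x := by
      have : (J : ℝ) < x := by nlinarith
      exact_mod_cast this
    have h1 := ih J hJlt (by omega)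
    have hlog : Real.log J + Real.log (k / 2) ≤ Real.log x := by
      rw [← Real.log_mul (by linarith) (by linarith)]
      exact Real.log_le_log (by nlinarith) hJx
    have hlog' : 1 + Real.log J / Real.log (k / 2) ≤ Real.log x / Real.log (k / 2) := by
      rw [le_div_iff₀ hL, add_mul, div_mul_cancel₀ _ hL.ne']; linarith
    have hmain : (J : ℝ) / ((k : ℝ) - 1) + J ≤ x / ((k : ℝ) - 1) + 6 / 5 := by
      have hk1 : 0 < (k : ℝ) - 1 := by linarith
      rw [div_add' _ _ _ hk1.ne', div_add' _ _ _ hk1.ne']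
      refine div_le_div_of_nonneg_right ?_ hk1.le
      nlinarith
    calc ath k s x ≤ gc k * (J / ((k : ℝ) - 1) + 6 / 5 * (1 + Real.log J / Real.log (k / 2))) + J * gc k := by linarith
      _ = gc k * ((J / ((k : ℝ) - 1) + J) + 6 / 5 * (1 + Real.log J / Real.log (k / 2))) := by ring
      _ ≤ _ := mul_le_mul_of_nonneg_left (by nlinarith) hg


theorem log_le_of_pow {r a b : ℕ} (hr : 0 < r) (ha : 0 < a) (h : r ^ a ≤ 2 ^ b) :
    Real.log r ≤ b / a * 0.6931471808 := by
  have h1 : Real.log ((r : ℝ) ^ a) ≤ Real.log ((2 : ℝ) ^ b) :=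
    Real.log_le_log (by positivity) (by exact_mod_cast h)
  rw [Real.log_pow, Real.log_pow] at h1
  have ha' : (0 : ℝ) < a := by exact_mod_cast ha
  rw [div_mul_eq_mul_div, le_div_iff₀ ha', mul_comm]
  have := Real.log_two_lt_d9
  have hb : (0 : ℝ) ≤ b := Nat.cast_nonneg b
  nlinarith

theorem le_log_of_pow {r a b : ℕ} (ha : 0 < a) (h : 2 ^ b ≤ r ^ a) :
    b / a * 0.6931471803 ≤ Real.log r := by
  have h1 : Real.log ((2 : ℝ) ^ b) ≤ Real.log ((r : ℝ) ^ a) :=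
    Real.log_le_log (by positivity) (by exact_mod_cast h)
  rw [Real.log_pow, Real.log_pow] at h1
  have ha' : (0 : ℝ) < a := by exact_mod_cast ha
  rw [div_mul_eq_mul_div, div_le_iff₀ ha', mul_comm (Real.log r)]
  have := Real.log_two_gt_d9
  have hb : (0 : ℝ) ≤ b := Nat.cast_nonneg b
  nlinarith

theorem log_factorial_eq (X : ℕ) : ∀ n : ℕ, n ≤ X →
    Real.log (n.factorial : ℝ) = ∑ m ∈ Ioc 0 X, ArithmeticFunction.vonMangoldt m * ((n / m : ℕ) : ℝ)
  | 0, _ => by simp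
  | n + 1, h => by
    have ih := log_factorial_eq X n (by omega)
    rw [Nat.factorial_succ, Nat.cast_mul, Real.log_mul (by positivity) (by positivity), ih,
      ← ArithmeticFunction.vonMangoldt_sum]
    have : (n + 1).divisors = (Ioc 0 X).filter (fun m => m ∣ n + 1) := by
      ext m
      simp only [Nat.mem_divisors, mem_filter, mem_Ioc]
      constructor
      · rintro ⟨hd, _⟩
        have := Nat.le_of_dvd (by omega) hd
        exact ⟨⟨Nat.pos_of_dvd_of_pos hd (by omega), by omega⟩, hd⟩
      · rintro ⟨_, hd⟩
        exact ⟨hd, by omega⟩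
    rw [this, sum_filter, ← sum_add_distrib]
    refine sum_congr rfl fun m _ => ?_
    rw [Nat.succ_div]
    split_ifs <;> push_cast <;> ring

theorem psi_ge_factorials (N : ℕ) :
    Real.log (N.factorial : ℝ) - Real.log ((N / 2).factorial : ℝ) - Real.log ((N / 3).factorial : ℝ)
      - Real.log ((N / 5).factorial : ℝ) + Real.log ((N / 30).factorial : ℝ) ≤ Chebyshev.psi N := by
  rw [log_factorial_eq N N le_rfl, log_factorial_eq N _ (Nat.div_le_self N 2),
    log_factorial_eq N _ (Nat.div_le_self N 3), log_factorial_eq N _ (Nat.div_le_self N 5),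
    log_factorial_eq N _ (Nat.div_le_self N 30), ← sum_sub_distrib, ← sum_sub_distrib,
    ← sum_sub_distrib, ← sum_add_distrib, Chebyshev.psi, Nat.floor_natCast]
  refine sum_le_sum fun m _ => ?_
  rw [Nat.div_div_eq_div_mul, Nat.div_div_eq_div_mul, Nat.div_div_eq_div_mul,
    Nat.div_div_eq_div_mul, mul_comm 2, mul_comm 3, mul_comm 5, mul_comm 30,
    ← Nat.div_div_eq_div_mul, ← Nat.div_div_eq_div_mul, ← Nat.div_div_eq_div_mul,
    ← Nat.div_div_eq_div_mul]
  set u := N / m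
  have h : u + u / 30 ≤ 1 + u / 2 + u / 3 + u / 5 := by omega
  have h' : (u : ℝ) + (u / 30 : ℕ) ≤ 1 + (u / 2 : ℕ) + (u / 3 : ℕ) + (u / 5 : ℕ) := by exact_mod_cast h
  have := ArithmeticFunction.vonMangoldt_nonneg (n := m)
  nlinarith

theorem log_factorial_ge (n : ℕ) (hn : 1 ≤ n) : n * Real.log n - n ≤ Real.log (n.factorial : ℝ) := by
  have h := Stirling.le_log_factorial_stirling (n := n) (by omega)
  have h1 := Real.log_natCast_nonneg n
  have h2 : 0 ≤ Real.log (2 * Real.pi) := Real.log_nonneg (by linarith [Real.pi_gt_three])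
  linarith

theorem log_factorial_le (n : ℕ) (hn : 1 ≤ n) :
    Real.log (n.factorial : ℝ) ≤ n * Real.log n - n + 1 + Real.log n := by
  induction n, hn using Nat.le_induction with
  | base => simp
  | succ n hn ih =>
    have hn' : (1 : ℝ) ≤ n := by exact_mod_cast hn
    rw [Nat.factorial_succ, Nat.cast_mul, Real.log_mul (by positivity) (by positivity)]
    have h := Real.one_sub_inv_le_log_of_pos (x := ((n : ℝ) + 1) / n) (by positivity)
    rw [Real.log_div (by positivity) (by positivity), inv_div] at h
    have h2 : 1 - (n : ℝ) / (n + 1) = 1 / (n + 1) := by field_simp; ring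
    rw [h2, div_le_iff₀ (by positivity)] at h
    push_cast
    nlinarith

theorem log_fact_floor_le (N d : ℕ) (hd : 1 ≤ d) (hN : d ≤ N) :
    Real.log ((N / d).factorial : ℝ) ≤ (N : ℝ) / d * (Real.log N - Real.log d) - N / d + 1 + Real.log N := by
  set n := N / d with hn
  have hn1 : 1 ≤ n := (Nat.one_le_div_iff (by omega)).2 hN
  have h1 := log_factorial_le n hn1
  have hd' : (1 : ℝ) ≤ d := by exact_mod_cast hd
  have hN' : (1 : ℝ) ≤ N := by exact_mod_cast (hd.trans hN)
  rw [← Real.log_div (by positivity) (by positivity)]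
  set y : ℝ := (N : ℝ) / d with hy
  have hny : (n : ℝ) ≤ y := Nat.cast_div_le
  have hn' : (1 : ℝ) ≤ n := by exact_mod_cast hn1
  have hyN : y ≤ N := div_le_self (by linarith) hd'
  have hl1 : Real.log n ≤ Real.log N := Real.log_le_log (by linarith) (by linarith)
  have hl2 := Real.one_sub_inv_le_log_of_pos (x := y / n) (by positivity)
  rw [Real.log_div (by linarith) (by positivity), inv_div] at hl2
  have hl3 : y - n ≤ y * (Real.log y - Real.log n) := by
    have : y * (1 - n / y) = y - n := by
      have : y ≠ 0 := by linarith
      field_simp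
    rw [← this]
    exact mul_le_mul_of_nonneg_left hl2 (by linarith)
  have := Real.log_natCast_nonneg n
  nlinarith

theorem log_fact_floor_ge (N d : ℕ) (hd : 1 ≤ d) (hN : d ≤ N) :
    (N : ℝ) / d * (Real.log N - Real.log d) - N / d - Real.log N ≤ Real.log ((N / d).factorial : ℝ) := by
  set n := N / d with hn
  have hn1 : 1 ≤ n := (Nat.one_le_div_iff (by omega)).2 hN
  have h1 := log_factorial_ge n hn1
  have hd' : (1 : ℝ) ≤ d := by exact_mod_cast hd
  have hN' : (1 : ℝ) ≤ N := by exact_mod_cast (hd.trans hN)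
  rw [← Real.log_div (by positivity) (by positivity)]
  set y : ℝ := (N : ℝ) / d with hy
  have hny : (n : ℝ) ≤ y := Nat.cast_div_le
  have hny2 : y ≤ n + 1 := by
    rw [hy, div_le_iff₀ (by linarith)]
    have h0 : N < n * d + d := Nat.lt_div_mul_add (a := N) (b := d) (by omega)
    have : N ≤ (n + 1) * d := by rw [add_mul]; omega
    exact_mod_cast this
  have hn' : (1 : ℝ) ≤ n := by exact_mod_cast hn1
  have hyN : y ≤ N := div_le_self (by linarith) hd'
  have hl1 : Real.log y ≤ Real.log N := Real.log_le_log (by linarith) hyN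
  have hl0 : 0 ≤ Real.log y := Real.log_nonneg (by linarith)
  have hl2 := Real.log_le_sub_one_of_pos (x := y / n) (by positivity)
  rw [Real.log_div (by linarith) (by positivity)] at hl2
  have hl3 : (n : ℝ) * (Real.log y - Real.log n) ≤ y - n := by
    have : (n : ℝ) * (y / n - 1) = y - n := by
      have : (n : ℝ) ≠ 0 := by linarith
      field_simp
    rw [← this]
    exact mul_le_mul_of_nonneg_left hl2 (by linarith)
  nlinarith

theorem theta_lower (N : ℕ) (hN : 30 ≤ N) :
    0.9212 * N - 4 * Real.log N - 3 - 2 * Real.sqrt N * Real.log N ≤ Chebyshev.theta N := by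
  have hN' : (30 : ℝ) ≤ N := by exact_mod_cast hN
  have h0 := psi_ge_factorials N
  have h1 := log_factorial_ge N (by omega)
  have h2 := log_fact_floor_le N 2 (by omega) (by omega)
  have h3 := log_fact_floor_le N 3 (by omega) (by omega)
  have h5 := log_fact_floor_le N 5 (by omega) (by omega)
  have h30 := log_fact_floor_ge N 30 (by omega) (by omega)
  have hp := Chebyshev.psi_sub_theta_le (x := N) (by linarith)
  have l2 := Real.log_two_gt_d9
  have l3 := le_log_of_pow (r := 3) (a := 53) (b := 84) (by norm_num) (by norm_num)
  have l5 := le_log_of_pow (r := 5) (a := 28) (b := 65) (by norm_num) (by norm_num)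
  have e30 : Real.log 30 = Real.log 2 + Real.log 3 + Real.log 5 := by
    rw [← Real.log_mul (by norm_num) (by norm_num), ← Real.log_mul (by norm_num) (by norm_num)]
    norm_num
  push_cast at h2 h3 h5 h30 l3 l5
  rw [e30] at h30
  have key : 0.9212 ≤ 7 / 15 * Real.log 2 + 3 / 10 * Real.log 3 + 1 / 6 * Real.log 5 := by
    norm_num at l2 l3 l5 ⊢
    linarith
  have key2 := mul_le_mul_of_nonneg_left key (by linarith : (0 : ℝ) ≤ N)
  ring_nf at h0 h1 h2 h3 h5 h30 hp key2 ⊢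
  linarith

theorem gc_two_mul (q : ℕ) (hq : q.Prime) (h2 : q ≠ 2) :
    gc (2 * q) = Real.log q + 2 * Real.log 2 + Real.log q / ((q : ℝ) - 1) := by
  have hpf : (2 * q).primeFactors = {2, q} := by
    rw [Nat.primeFactors_mul (by norm_num) hq.ne_zero, Nat.prime_two.primeFactors, hq.primeFactors]
    rfl
  have hq0 : (q : ℝ) ≠ 0 := by exact_mod_cast hq.ne_zero
  rw [gc, hpf, sum_pair (Ne.symm h2)]
  push_cast
  rw [Real.log_mul (by norm_num) hq0]
  norm_num
  ring

theorem gc_two_sq (r : ℕ) (hr : r.Prime) (h2 : r ≠ 2) :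
    gc (2 * (r * r)) = 2 * Real.log r + 2 * Real.log 2 + Real.log r / ((r : ℝ) - 1) := by
  have hpf : (2 * (r * r)).primeFactors = {2, r} := by
    rw [Nat.primeFactors_mul (by norm_num) (mul_ne_zero hr.ne_zero hr.ne_zero),
      Nat.primeFactors_mul hr.ne_zero hr.ne_zero, Nat.prime_two.primeFactors, hr.primeFactors,
      union_self]
    rfl
  have hr0 : (r : ℝ) ≠ 0 := by exact_mod_cast hr.ne_zero
  rw [gc, hpf, sum_pair (Ne.symm h2)]
  push_cast
  rw [Real.log_mul (by norm_num) (mul_ne_zero hr0 hr0), Real.log_mul hr0 hr0]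
  norm_num
  ring

theorem gc_six_sq (r : ℕ) (hr : r.Prime) (h2 : r ≠ 2) (h3 : r ≠ 3) :
    gc (6 * (r * r)) = gc (2 * (r * r)) + 3 / 2 * Real.log 3 := by
  have hpf : (6 * (r * r)).primeFactors = {2, 3, r} := by
    rw [Nat.primeFactors_mul (by norm_num) (mul_ne_zero hr.ne_zero hr.ne_zero),
      Nat.primeFactors_mul hr.ne_zero hr.ne_zero, hr.primeFactors, (by norm_num : 6 = 2 * 3),
      Nat.primeFactors_mul (by norm_num) (by norm_num), Nat.prime_two.primeFactors,
      Nat.prime_three.primeFactors, union_self, union_assoc]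
    rfl
  have hr0 : (r : ℝ) ≠ 0 := by exact_mod_cast hr.ne_zero
  have h6 : Real.log 6 = Real.log 2 + Real.log 3 := by
    rw [← Real.log_mul (by norm_num) (by norm_num)]; norm_num
  rw [gc_two_sq r hr h2, gc, hpf, sum_insert (by simp [Ne.symm h2]), sum_pair (Ne.symm h3)]
  push_cast
  rw [Real.log_mul (by norm_num) (mul_ne_zero hr0 hr0), Real.log_mul hr0 hr0, h6]
  norm_num
  ring

theorem log_three_le : Real.log 3 ≤ 1.0989 := by
  have := log_le_of_pow (r := 3) (a := 41) (b := 65) (by norm_num) (by norm_num) (by norm_num)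
  norm_num at this ⊢; linarith

theorem log_three_ge : 1.0985 ≤ Real.log 3 := by
  have := le_log_of_pow (r := 3) (a := 53) (b := 84) (by norm_num) (by norm_num)
  norm_num at this ⊢; linarith

theorem log_five_le : Real.log 5 ≤ 1.60995 := by
  have := log_le_of_pow (r := 5) (a := 31) (b := 72) (by norm_num) (by norm_num) (by norm_num)
  norm_num at this ⊢; linarith

theorem log_five_ge : 1.609 ≤ Real.log 5 := by
  have := le_log_of_pow (r := 5) (a := 28) (b := 65) (by norm_num) (by norm_num)
  norm_num at this ⊢; linarith

theorem log_seven_le : Real.log 7 ≤ 1.9463 := by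
  have := log_le_of_pow (r := 7) (a := 26) (b := 73) (by norm_num) (by norm_num) (by norm_num)
  norm_num at this ⊢; linarith

/-- A set of primes up to `N` in a single residue class. -/
theorem cluster (N k : ℕ) (T : Finset ℕ) (hT : ∀ p ∈ T, p.Prime ∧ p ≤ N)
    (hc : ∀ p ∈ T, ∀ p' ∈ T, p ≡ p' [MOD k]) (hk : 6 ≤ k) (hN : 1 ≤ N) :
    ∑ p ∈ T, Real.log p ≤
      gc k * (N / ((k : ℝ) - 1) + 6 / 5 * (1 + Real.log N / Real.log (k / 2))) := by
  obtain ⟨a, ha⟩ : ∃ a, ∀ p ∈ T, p % k = a % k := by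
    rcases T.eq_empty_or_nonempty with h | ⟨a, h⟩
    · exact ⟨0, by simp [h]⟩
    · exact ⟨a, fun p hp => hc p hp a h⟩
  obtain ⟨s, hs1, hsk, hs⟩ : ∃ s, 1 ≤ s ∧ s ≤ k ∧ s % k = a % k := by
    by_cases h : a % k = 0
    · exact ⟨k, by omega, le_rfl, by rw [Nat.mod_self, h]⟩
    · exact ⟨a % k, by omega, (Nat.mod_lt _ (by omega)).le, Nat.mod_mod _ _⟩
  refine le_trans ?_ (ath_bound k s hs1 hsk hk N hN)
  refine sum_le_sum_of_subset_of_nonneg ?_ fun p _ _ => Real.log_natCast_nonneg p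
  intro p hp
  rw [mem_filter, mem_range, hs]
  have := (hT p hp).2
  exact ⟨by omega, (hT p hp).1, ha p hp⟩

theorem cluster' (N k : ℕ) (T : Finset ℕ) (hT : ∀ p ∈ T, p.Prime ∧ p ≤ N)
    (hc : ∀ p ∈ T, ∀ p' ∈ T, p ≡ p' [MOD k]) (hk : 6 ≤ k) (hN : 13.5 ≤ Real.log N)
    (hkN : k ≤ 6 * N) (hg : gc k ≤ 2.8 * Real.log (k / 2)) :
    ∑ p ∈ T, Real.log p ≤ gc k / ((k : ℝ) - 1) * N + 7 * Real.log N := by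
  have hN1 : 1 ≤ N := by
    by_contra h
    have : N = 0 := by omega
    subst this
    norm_num at hN
  refine (cluster N k T hT hc hk hN1).trans ?_
  have hk' : (6 : ℝ) ≤ k := by exact_mod_cast hk
  have hN' : (1 : ℝ) ≤ N := by exact_mod_cast hN1
  have hkN' : (k : ℝ) ≤ 6 * N := by exact_mod_cast hkN
  have hL : 0 < Real.log ((k : ℝ) / 2) := Real.log_pos (by linarith)
  have hL2 : Real.log ((k : ℝ) / 2) ≤ Real.log 3 + Real.log N := by
    rw [← Real.log_mul (by norm_num) (by linarith)]
    exact Real.log_le_log (by linarith) (by linarith)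
  have h3 := log_three_le
  have e1 : gc k * (1 + Real.log N / Real.log (k / 2)) ≤
      2.8 * (Real.log (k / 2) + Real.log N) := by
    have : (2.8 : ℝ) * (Real.log (k / 2) + Real.log N) =
        (2.8 * Real.log (k / 2)) * (1 + Real.log N / Real.log (k / 2)) := by
      field_simp
    rw [this]
    refine mul_le_mul_of_nonneg_right hg ?_
    have : 0 ≤ Real.log N / Real.log (k / 2) := div_nonneg (by linarith) hL.le
    linarith
  have e2 : gc k * (N / ((k : ℝ) - 1) + 6 / 5 * (1 + Real.log N / Real.log (k / 2))) =
    gc k / ((k : ℝ) - 1) * N + 6 / 5 * (gc k * (1 + Real.log N / Real.log (k / 2))) := by ring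
  rw [e2]
  norm_num at e1 hN h3 ⊢
  linarith

theorem sum_cover (P : Finset ℕ) (w : ℕ → ℝ) (hw : ∀ p, 0 ≤ w p) (A₀ A₁ : ℕ → Prop) (I : Finset ℕ)
    (B : ℕ → ℕ → Prop) [DecidablePred A₀] [DecidablePred A₁] [∀ r, DecidablePred (B r)]
    (h : ∀ p ∈ P, A₀ p ∨ A₁ p ∨ ∃ r ∈ I, B r p) :
    ∑ p ∈ P, w p ≤ ∑ p ∈ P.filter A₀, w p + ∑ p ∈ P.filter A₁, w p +
      ∑ r ∈ I, ∑ p ∈ P.filter (B r), w p := by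
  simp only [sum_filter]
  rw [sum_comm (s := I), ← sum_add_distrib, ← sum_add_distrib]
  refine sum_le_sum fun p hp => ?_
  have n0 : 0 ≤ (if A₀ p then w p else 0) := by split_ifs <;> simp [hw]
  have n1 : 0 ≤ (if A₁ p then w p else 0) := by split_ifs <;> simp [hw]
  have n2 : ∀ r ∈ I, 0 ≤ (if B r p then w p else 0) := fun r _ => by split_ifs <;> simp [hw]
  have n3 := sum_nonneg n2
  rcases h p hp with h | h | ⟨r, hr, h⟩
  · rw [if_pos h] at n0 ⊢; linarith
  · rw [if_pos h] at n1 ⊢; linarith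
  · have := single_le_sum n2 hr
    rw [if_pos h] at this; linarith

/-- The weight of an odd prime `r`. -/
noncomputable def W (r : ℕ) : ℝ := gc (2 * (r * r)) / ((2 * (r * r) : ℕ) - 1 : ℝ)

theorem W_nonneg (r : ℕ) (hr : 3 ≤ r) : 0 ≤ W r := by
  refine div_nonneg (gc_nonneg _) ?_
  have : 1 ≤ 2 * (r * r) := by nlinarith
  have : (1 : ℝ) ≤ ((2 * (r * r) : ℕ) : ℝ) := by exact_mod_cast this
  linarith

theorem W_le (r a b : ℕ) (hr : r.Prime) (h2 : r ≠ 2) (ha : 0 < a) (h : r ^ a ≤ 2 ^ b) :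
    W r ≤ ((2 + 1 / ((r : ℝ) - 1)) * (b / a * 0.6931471808) + 1.3862944) / (2 * ((r : ℝ) * r) - 1) := by
  have h3 : 3 ≤ r := by have := hr.two_le; omega
  have h3' : (3 : ℝ) ≤ r := by exact_mod_cast h3
  rw [W, gc_two_sq r hr h2]
  push_cast
  refine div_le_div_of_nonneg_right ?_ (by nlinarith)
  have hl := log_le_of_pow hr.pos ha h
  have l2 := Real.log_two_lt_d9
  have hi : 0 ≤ 2 + 1 / ((r : ℝ) - 1) := by
    have : 0 ≤ 1 / ((r : ℝ) - 1) := div_nonneg (by norm_num) (by linarith)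
    linarith
  have := mul_le_mul_of_nonneg_left hl hi
  have e : (2 + 1 / ((r : ℝ) - 1)) * Real.log r = 2 * Real.log r + Real.log r / ((r : ℝ) - 1) := by ring
  rw [e] at this
  norm_num at l2 this ⊢
  linarith

theorem W_three : W 3 ≤ 0.2433 := by
  have := W_le 3 41 65 (by norm_num) (by norm_num) (by norm_num) (by norm_num)
  norm_num at this ⊢; linarith

theorem W_five : W 5 ≤ 0.1024 := by
  have := W_le 5 31 72 (by norm_num) (by norm_num) (by norm_num) (by norm_num)
  norm_num at this ⊢; linarith

noncomputable def Ftail (x : ℝ) : ℝ := (Real.log x + 1.8) / (2 * x)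

theorem W_tail (r : ℕ) (hr : r.Prime) (h : 101 ≤ r) : W r ≤ Ftail ((r : ℝ) - 2) - Ftail r := by
  have hx : (101 : ℝ) ≤ r := by exact_mod_cast h
  rw [W, gc_two_sq r hr (by omega)]
  push_cast
  set x : ℝ := (r : ℝ) with hxdef
  set L := Real.log x with hL
  have hL0 : 0 ≤ L := Real.log_nonneg (by linarith)
  have l2 := Real.log_two_lt_d9
  have hlog : L - 2 / (x - 2) ≤ Real.log (x - 2) := by
    have := Real.one_sub_inv_le_log_of_pos (x := (x - 2) / x) (div_pos (by linarith) (by linarith))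
    rw [Real.log_div (by linarith) (by linarith), inv_div] at this
    have e : 1 - x / (x - 2) = - (2 / (x - 2)) := by
      have : x - 2 ≠ 0 := by linarith
      field_simp; ring
    rw [e] at this
    linarith
  have h1 : (L + 1.8) / (x * (x - 2)) - 1 / (x - 2) ^ 2 ≤ Ftail (x - 2) - Ftail x := by
    unfold Ftail
    have : (L - 2 / (x - 2) + 1.8) / (2 * (x - 2)) ≤ (Real.log (x - 2) + 1.8) / (2 * (x - 2)) :=
      div_le_div_of_nonneg_right (by linarith) (by linarith)
    refine le_trans (le_of_eq ?_) (sub_le_sub_right this _)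
    have h2 : x - 2 ≠ 0 := by linarith
    have h3 : x ≠ 0 := by linarith
    rw [← hL]
    field_simp
    ring
  refine le_trans ?_ h1
  have hA : (2 * L + L / (x - 1)) / (2 * (x * x) - 1) ≤ L / (x * (x - 2)) := by
    have h3 : 2 * L + L / (x - 1) = L * (2 * x - 1) / (x - 1) := by
      have : x - 1 ≠ 0 := by linarith
      field_simp; ring
    rw [h3, div_div, div_le_div_iff₀ (by apply mul_pos <;> nlinarith) (by apply mul_pos <;> linarith), mul_assoc]
    refine mul_le_mul_of_nonneg_left ?_ hL0
    nlinarith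
  have hB : 2 * Real.log 2 / (2 * (x * x) - 1) ≤ 1.8 / (x * (x - 2)) - 1 / (x - 2) ^ 2 := by
    have e : 1.8 / (x * (x - 2)) - 1 / (x - 2) ^ 2 = (0.8 * x - 3.6) / (x * (x - 2) ^ 2) := by
      have h2 : x - 2 ≠ 0 := by linarith
      have h3 : x ≠ 0 := by linarith
      field_simp; ring
    have hden : 0 < 2 * (x * x) - 1 := by nlinarith
    have hl : 2 * Real.log 2 ≤ 1.4 := by norm_num at l2 ⊢; linarith
    rw [e]
    refine (div_le_div_of_nonneg_right hl hden.le).trans ?_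
    rw [div_le_div_iff₀ hden (by have : 0 < x - 2 := by linarith
                                 positivity)]
    nlinarith [mul_pos (show (0 : ℝ) < x by linarith) (show (0 : ℝ) < x - 100 by linarith),
      mul_nonneg (show (0 : ℝ) ≤ x by linarith) (mul_nonneg (show (0 : ℝ) ≤ x by linarith) (show (0 : ℝ) ≤ x - 100 by linarith))]
  have e1 : (2 * L + 2 * Real.log 2 + L / (x - 1)) / (2 * (x * x) - 1) =
      (2 * L + L / (x - 1)) / (2 * (x * x) - 1) + 2 * Real.log 2 / (2 * (x * x) - 1) := by ring
  have e2 : (L + 1.8) / (x * (x - 2)) = L / (x * (x - 2)) + 1.8 / (x * (x - 2)) := by ring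
  rw [e1, e2]
  linarith

theorem Ftail_nonneg (x : ℝ) (hx : 1 ≤ x) : 0 ≤ Ftail x := by
  have := Real.log_nonneg hx
  unfold Ftail
  positivity

theorem tail_sum (m : ℕ) (hm : 49 ≤ m) :
    ∑ r ∈ (range (2 * m + 2)).filter (fun r => r.Prime ∧ 101 ≤ r), W r ≤
      Ftail 99 - Ftail ((2 * m + 1 : ℕ) : ℝ) := by
  induction m, hm using Nat.le_induction with
  | base =>
    rw [filter_eq_empty_iff.2]
    · norm_num
    · intro r hr
      rw [mem_range] at hr
      omega
  | succ m hm ih =>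
    have hpe : ¬ (2 * m + 2).Prime := by
      intro h
      rcases h.eq_two_or_odd with h | h <;> omega
    have e : 2 * (m + 1) + 2 = 2 * m + 2 + 1 + 1 := by ring
    rw [e, range_add_one, range_add_one, filter_insert, filter_insert]
    rw [if_neg (show ¬ ((2 * m + 2).Prime ∧ 101 ≤ 2 * m + 2) from fun h => hpe h.1)]
    have hF : Ftail ((2 * (m + 1) + 1 : ℕ) : ℝ) = Ftail ((2 * m + 3 : ℕ) : ℝ) := by
      congr 2
    have hF2 : ((2 * m + 3 : ℕ) : ℝ) - 2 = ((2 * m + 1 : ℕ) : ℝ) := by push_cast; ring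
    rw [hF]
    split_ifs with hp
    · rw [sum_insert (by simp)]
      have := W_tail (2 * m + 3) hp.1 (by omega)
      rw [hF2] at this
      have e3 : 2 * m + 2 + 1 = 2 * m + 3 := rfl
      rw [e3]
      linarith
    · have h49 : (49 : ℝ) ≤ m := by exact_mod_cast hm
      have hmono : Ftail ((2 * m + 3 : ℕ) : ℝ) ≤ Ftail ((2 * m + 1 : ℕ) : ℝ) := by
        unfold Ftail
        push_cast
        set y : ℝ := 2 * m + 1 with hy
        have e4 : (2 * (m : ℝ) + 3) = y + 2 := by rw [hy]; ring
        rw [e4]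
        have hy99 : (99 : ℝ) ≤ y := by rw [hy]; linarith
        have hll := Real.log_le_sub_one_of_pos (x := (y + 2) / y) (by positivity)
        rw [Real.log_div (by linarith) (by linarith)] at hll
        have e5 : (y + 2) / y - 1 = 2 / y := by field_simp; ring
        rw [e5] at hll
        have hlg : 0 ≤ Real.log y := Real.log_nonneg (by linarith)
        have hyl : y * (Real.log (y + 2) - Real.log y) ≤ 2 := by
          have := mul_le_mul_of_nonneg_left hll (by linarith : 0 ≤ y)
          rwa [mul_div_cancel₀ _ (by linarith : y ≠ 0)] at this
        rw [div_le_div_iff₀ (by linarith) (by linarith)]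
        nlinarith
      linarith

theorem Ftail_99 : Ftail 99 ≤ 0.0324 := by
  have := log_le_of_pow (r := 99) (a := 20) (b := 133) (by norm_num) (by norm_num) (by norm_num)
  unfold Ftail
  rw [div_le_iff₀ (by norm_num)]
  norm_num at this ⊢
  linarith


theorem W_num {r : ℕ} (b : ℕ) (c : ℝ) (hr : r.Prime) (h2 : r ≠ 2) (h : r ^ 20 ≤ 2 ^ b)
    (hc : ((2 + 1 / ((r : ℝ) - 1)) * (b / (20 : ℕ) * 0.6931471808) + 1.3862944) /
      (2 * ((r : ℝ) * r) - 1) ≤ c) : W r ≤ c :=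
  (W_le r 20 b hr h2 (by norm_num) h).trans hc

theorem mid_set : (range 101).filter (fun r => r.Prime ∧ 7 ≤ r) =
    {7, 11, 13, 17, 19, 23, 29, 31, 37, 41, 43, 47, 53, 59, 61, 67, 71, 73, 79, 83, 89, 97} := by
  decide +kernel

theorem mid_sum : ∑ r ∈ (range 101).filter (fun r => r.Prime ∧ 7 ≤ r), W r ≤ 0.1665 := by
  rw [mid_set]
  have h7 := W_num (r := 7) 57 ((58418 : ℝ) / 1000000) (by norm_num) (by norm_num) (by norm_num) (by norm_num)
  have h11 := W_num (r := 11) 70 ((26892 : ℝ) / 1000000) (by norm_num) (by norm_num) (by norm_num) (by norm_num)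
  have h13 := W_num (r := 13) 75 ((20183 : ℝ) / 1000000) (by norm_num) (by norm_num) (by norm_num) (by norm_num)
  have h17 := W_num (r := 17) 82 ((12562 : ℝ) / 1000000) (by norm_num) (by norm_num) (by norm_num) (by norm_num)
  have h19 := W_num (r := 19) 85 ((10322 : ℝ) / 1000000) (by norm_num) (by norm_num) (by norm_num) (by norm_num)
  have h23 := W_num (r := 23) 91 ((7415 : ℝ) / 1000000) (by norm_num) (by norm_num) (by norm_num) (by norm_num)
  have h29 := W_num (r := 29) 98 ((4938 : ℝ) / 1000000) (by norm_num) (by norm_num) (by norm_num) (by norm_num)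
  have h31 := W_num (r := 31) 100 ((4391 : ℝ) / 1000000) (by norm_num) (by norm_num) (by norm_num) (by norm_num)
  have h37 := W_num (r := 37) 105 ((3203 : ℝ) / 1000000) (by norm_num) (by norm_num) (by norm_num) (by norm_num)
  have h41 := W_num (r := 41) 108 ((2668 : ℝ) / 1000000) (by norm_num) (by norm_num) (by norm_num) (by norm_num)
  have h43 := W_num (r := 43) 109 ((2443 : ℝ) / 1000000) (by norm_num) (by norm_num) (by norm_num) (by norm_num)
  have h47 := W_num (r := 47) 112 ((2091 : ℝ) / 1000000) (by norm_num) (by norm_num) (by norm_num) (by norm_num)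
  have h53 := W_num (r := 53) 115 ((1680 : ℝ) / 1000000) (by norm_num) (by norm_num) (by norm_num) (by norm_num)
  have h59 := W_num (r := 59) 118 ((1385 : ℝ) / 1000000) (by norm_num) (by norm_num) (by norm_num) (by norm_num)
  have h61 := W_num (r := 61) 119 ((1305 : ℝ) / 1000000) (by norm_num) (by norm_num) (by norm_num) (by norm_num)
  have h67 := W_num (r := 67) 122 ((1104 : ℝ) / 1000000) (by norm_num) (by norm_num) (by norm_num) (by norm_num)
  have h71 := W_num (r := 71) 123 ((990 : ℝ) / 1000000) (by norm_num) (by norm_num) (by norm_num) (by norm_num)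
  have h73 := W_num (r := 73) 124 ((943 : ℝ) / 1000000) (by norm_num) (by norm_num) (by norm_num) (by norm_num)
  have h79 := W_num (r := 79) 127 ((821 : ℝ) / 1000000) (by norm_num) (by norm_num) (by norm_num) (by norm_num)
  have h83 := W_num (r := 83) 128 ((749 : ℝ) / 1000000) (by norm_num) (by norm_num) (by norm_num) (by norm_num)
  have h89 := W_num (r := 89) 130 ((660 : ℝ) / 1000000) (by norm_num) (by norm_num) (by norm_num) (by norm_num)
  have h97 := W_num (r := 97) 132 ((563 : ℝ) / 1000000) (by norm_num) (by norm_num) (by norm_num) (by norm_num)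
  repeat rw [sum_insert (by decide)]
  rw [sum_singleton]
  norm_num
  linarith

theorem seven_sum (I : Finset ℕ) (hI : ∀ r ∈ I, r.Prime ∧ 7 ≤ r) : ∑ r ∈ I, W r ≤ 0.199 := by
  obtain ⟨R, hR⟩ : ∃ R, ∀ r ∈ I, r ≤ R := ⟨I.sup id, fun r hr => le_sup (f := id) hr⟩
  have ht := tail_sum (R + 49) (by omega)
  have hn := Ftail_nonneg ((2 * (R + 49) + 1 : ℕ) : ℝ) (by push_cast; linarith [(Nat.cast_nonneg R : (0 : ℝ) ≤ R)])
  have hm := mid_sum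
  have hF := Ftail_99
  have hW : ∀ r, r.Prime ∧ 7 ≤ r → 0 ≤ W r := fun r hr => W_nonneg r (by omega)
  rw [← sum_filter_add_sum_filter_not I (fun r => r < 101)]
  have h1 : ∑ r ∈ I.filter (fun r => r < 101), W r ≤
      ∑ r ∈ (range 101).filter (fun r => r.Prime ∧ 7 ≤ r), W r := by
    refine sum_le_sum_of_subset_of_nonneg ?_ fun r hr _ => hW r (mem_filter.1 hr).2
    intro r hr
    rw [mem_filter] at hr ⊢
    exact ⟨mem_range.2 hr.2, hI r hr.1⟩
  have h2 : ∑ r ∈ I.filter (fun r => ¬ r < 101), W r ≤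
      ∑ r ∈ (range (2 * (R + 49) + 2)).filter (fun r => r.Prime ∧ 101 ≤ r), W r := by
    refine sum_le_sum_of_subset_of_nonneg ?_ fun r hr _ => W_nonneg r ?_
    · intro r hr
      rw [mem_filter] at hr ⊢
      have := hR r hr.1
      exact ⟨mem_range.2 (by omega), (hI r hr.1).1, by omega⟩
    · have := (mem_filter.1 hr).2.2
      omega
  norm_num at *
  linarith

theorem I_sum (q : ℕ) (I : Finset ℕ) (hI : ∀ r ∈ I, r.Prime ∧ 3 ≤ r ∧ r ≠ q) :
    ∑ r ∈ I, W r ≤ (if q = 3 then 0 else 0.2433) + (if q = 5 then 0 else 0.1024) + 0.199 := by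
  rw [← sum_filter_not_add_sum_filter I (fun r => 7 ≤ r)]
  refine add_le_add ?_ (seven_sum _ fun r hr => ?_)
  · have hsub : I.filter (fun r => ¬ 7 ≤ r) ⊆ ({3, 5} : Finset ℕ).filter (fun r => ¬ q = r) := by
      intro r hr
      rw [mem_filter] at hr
      obtain ⟨hp, h3, hq⟩ := hI r hr.1
      have h7 : r < 7 := by omega
      rw [mem_filter]
      refine ⟨?_, fun h => hq h.symm⟩
      interval_cases r
      · simp
      · exact absurd hp (by norm_num)
      · simp
      · exact absurd hp (by norm_num)
    refine (sum_le_sum_of_subset_of_nonneg hsub fun r hr _ => W_nonneg r ?_).trans ?_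
    · have := (mem_filter.1 hr).1
      simp at this
      omega
    · rw [sum_filter, sum_pair (by norm_num)]
      have := W_three
      have := W_five
      refine add_le_add ?_ ?_ <;> split_ifs <;> simp_all
  · rw [mem_filter] at hr
    exact ⟨(hI r hr.1).1, hr.2⟩

theorem log_le_sqrt (N : ℕ) (hN : 2000000 ≤ N) : Real.log N ≤ 0.01027 * Real.sqrt N := by
  have hN' : (2000000 : ℝ) ≤ N := by exact_mod_cast hN
  have hy : (1414 : ℝ) ≤ Real.sqrt N := Real.le_sqrt_of_sq_le (by norm_num; linarith)
  set y := Real.sqrt N with hydef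
  have hsq : (N : ℝ) = y * y := (Real.mul_self_sqrt (by linarith)).symm
  have h1 := log_le_of_pow (r := 1414) (a := 15) (b := 157) (by norm_num) (by norm_num) (by norm_num)
  have h2 := Real.log_le_sub_one_of_pos (x := y / 1414) (by positivity)
  rw [Real.log_div (by linarith) (by norm_num)] at h2
  rw [hsq, Real.log_mul (by linarith) (by linarith)]
  norm_num at h1 h2 ⊢
  linarith

theorem log_N_ge (N : ℕ) (hN : 2000000 ≤ N) : 13.5 ≤ Real.log N := by
  have := le_log_of_pow (r := N) (a := 1) (b := 20) (by norm_num) (by norm_num; omega)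
  norm_num at this ⊢
  linarith

theorem final_ineq (N : ℕ) (hN : 2000000 ≤ N) (μ : ℝ) (hμ : μ ≤ 0.86) (c : ℕ)
    (hc : (c : ℝ) ≤ Real.sqrt N / 2)
    (h : Chebyshev.theta N ≤ 2 + μ * N + 7 * Real.log N + c * (7 * Real.log N)) : False := by
  have h1 := theta_lower N (by omega)
  have h2 := log_le_sqrt N hN
  have h3 := log_N_ge N hN
  have hN' : (2000000 : ℝ) ≤ N := by exact_mod_cast hN
  have hy : (1414 : ℝ) ≤ Real.sqrt N := Real.le_sqrt_of_sq_le (by norm_num; linarith)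
  set y := Real.sqrt N with hydef
  have hsq : (N : ℝ) = y * y := (Real.mul_self_sqrt (by linarith)).symm
  have h4 : c * (7 * Real.log N) ≤ y / 2 * (7 * Real.log N) :=
    mul_le_mul_of_nonneg_right hc (by norm_num at h3; linarith)
  have h5 : y * Real.log N ≤ 0.01027 * N := by
    rw [hsq] at h2 ⊢; nlinarith
  have h6 : μ * N ≤ 0.86 * N := mul_le_mul_of_nonneg_right hμ (by linarith)
  have h7 : 1414 * y ≤ N := by rw [hsq]; nlinarith
  norm_num at *
  linarith

theorem card_I (N : ℕ) (I : Finset ℕ) (hI : ∀ r ∈ I, r.Prime ∧ 3 ≤ r ∧ r * r ≤ N) :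
    (I.card : ℝ) ≤ Real.sqrt N / 2 := by
  have h1 : I.card ≤ (Icc 1 (Nat.sqrt N / 2)).card := by
    refine card_le_card_of_injOn (fun r => r / 2) ?_ ?_
    · intro r hr
      obtain ⟨_, h3, hle⟩ := hI r hr
      have := Nat.le_sqrt.2 hle
      simp only [coe_Icc, Set.mem_Icc]
      omega
    · intro r hr r' hr' h
      obtain ⟨hp, h3, _⟩ := hI r hr
      obtain ⟨hp', h3', _⟩ := hI r' hr'
      have := hp.eq_two_or_odd
      have := hp'.eq_two_or_odd
      simp only at h
      omega
  rw [Nat.card_Icc, Nat.add_sub_cancel] at h1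
  have h2 : (I.card : ℝ) * 2 ≤ Nat.sqrt N := by
    have : I.card * 2 ≤ Nat.sqrt N := by omega
    exact_mod_cast this
  have := Real.nat_sqrt_le_real_sqrt (a := N)
  linarith

theorem modEq_of_dvd_sub {N d p p' : ℕ} (hp : p ≤ N) (hp' : p' ≤ N) (h : d ∣ N - p) (h' : d ∣ N - p') :
    p ≡ p' [MOD d] :=
  ((Nat.modEq_iff_dvd' hp).2 h).trans ((Nat.modEq_iff_dvd' hp').2 h').symm

theorem modEq_two_mul {d p p' : ℕ} (hd : d % 2 = 1) (hp : p % 2 = 1) (hp' : p' % 2 = 1)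
    (h : p ≡ p' [MOD d]) : p ≡ p' [MOD 2 * d] := by
  have hco : Nat.Coprime 2 d := (Nat.coprime_two_left).2 (Nat.odd_iff.2 hd)
  exact (Nat.modEq_and_modEq_iff_modEq_mul hco).1 ⟨by rw [Nat.ModEq, hp, hp'], h⟩

theorem gc_two_sq_cond (r : ℕ) (hr : r.Prime) (h3 : 3 ≤ r) :
    gc (2 * (r * r)) ≤ 2.8 * Real.log (((2 * (r * r) : ℕ) : ℝ) / 2) := by
  have h3' : (3 : ℝ) ≤ r := by exact_mod_cast h3
  rw [gc_two_sq r hr (by omega)]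
  have e : (((2 * (r * r) : ℕ) : ℝ) / 2) = (r : ℝ) * r := by push_cast; ring
  rw [e, Real.log_mul (by linarith) (by linarith)]
  have hl : Real.log 3 ≤ Real.log r := Real.log_le_log (by norm_num) h3'
  have h33 := log_three_ge
  have l2 := Real.log_two_lt_d9
  have : Real.log r / ((r : ℝ) - 1) ≤ Real.log r / 1 :=
    div_le_div_of_nonneg_left (by norm_num at *; linarith) (by norm_num) (by linarith)
  norm_num at *
  linarith

theorem gc_six_sq_cond (r : ℕ) (hr : r.Prime) (h5 : 5 ≤ r) :
    gc (6 * (r * r)) ≤ 2.8 * Real.log (((6 * (r * r) : ℕ) : ℝ) / 2) := by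
  have h5' : (5 : ℝ) ≤ r := by exact_mod_cast h5
  rw [gc_six_sq r hr (by omega) (by omega)]
  have h := gc_two_sq_cond r hr (by omega)
  have e : (((6 * (r * r) : ℕ) : ℝ) / 2) = 3 * ((((2 * (r * r) : ℕ) : ℝ) / 2)) := by push_cast; ring
  rw [e, Real.log_mul (by norm_num) (by push_cast; positivity)]
  have h33 := log_three_ge
  norm_num at *
  linarith

theorem six_le_W (r : ℕ) (hr : r.Prime) (h5 : 5 ≤ r) :
    gc (6 * (r * r)) / (((6 * (r * r) : ℕ) : ℝ) - 1) ≤ 1 / 2 * W r := by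
  have h5' : (5 : ℝ) ≤ r := by exact_mod_cast h5
  have hg : 4 ≤ gc (2 * (r * r)) := by
    rw [gc_two_sq r hr (by omega)]
    have hl : Real.log 5 ≤ Real.log r := Real.log_le_log (by norm_num) h5'
    have h55 := log_five_ge
    have l2 := Real.log_two_gt_d9
    have : 0 ≤ Real.log r / ((r : ℝ) - 1) :=
      div_nonneg (Real.log_natCast_nonneg r) (by linarith)
    norm_num at *
    linarith
  rw [gc_six_sq r hr (by omega) (by omega), W]
  have l3 := log_three_le
  set g := gc (2 * (r * r))
  push_cast
  set x : ℝ := (r : ℝ) * r with hx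
  have hx25 : 25 ≤ x := by rw [hx]; nlinarith
  rw [← mul_div_assoc, div_le_div_iff₀ (by linarith) (by linarith)]
  have hl : 3 / 2 * Real.log 3 ≤ 1.65 := by norm_num at *; linarith
  have : (g + 3 / 2 * Real.log 3) * (2 * x - 1) ≤ (g + 1.65) * (2 * x - 1) :=
    mul_le_mul_of_nonneg_right (by linarith) (by linarith)
  refine this.trans ?_
  nlinarith

theorem gc_two_mul_cond (q : ℕ) (hq : q.Prime) (h3 : 3 ≤ q) :
    gc (2 * q) ≤ 2.8 * Real.log (((2 * q : ℕ) : ℝ) / 2) := by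
  have h3' : (3 : ℝ) ≤ q := by exact_mod_cast h3
  rw [gc_two_mul q hq (by omega)]
  have e : (((2 * q : ℕ) : ℝ) / 2) = (q : ℝ) := by push_cast; ring
  rw [e]
  have hl : Real.log 3 ≤ Real.log q := Real.log_le_log (by norm_num) h3'
  have h33 := log_three_ge
  have l2 := Real.log_two_lt_d9
  have : Real.log q / ((q : ℝ) - 1) ≤ Real.log q / 2 :=
    div_le_div_of_nonneg_left (by norm_num at *; linarith) (by norm_num) (by linarith)
  norm_num at *
  linarith

theorem V_three : gc (2 * 3) / (((2 * 3 : ℕ) : ℝ) - 1) ≤ 0.6075 := by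
  rw [gc_two_mul 3 (by norm_num) (by norm_num)]
  have := log_three_le
  have l2 := Real.log_two_lt_d9
  norm_num at *
  linarith

theorem V_five : gc (2 * 5) / (((2 * 5 : ℕ) : ℝ) - 1) ≤ 0.378 := by
  rw [gc_two_mul 5 (by norm_num) (by norm_num)]
  have := log_five_le
  have l2 := Real.log_two_lt_d9
  norm_num at *
  linarith

theorem V_seven (q : ℕ) (hq : q.Prime) (h7 : 7 ≤ q) :
    gc (2 * q) / (((2 * q : ℕ) : ℝ) - 1) ≤ 0.283 := by
  have h7' : (7 : ℝ) ≤ q := by exact_mod_cast h7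
  rw [gc_two_mul q hq (by omega)]
  push_cast
  have l7 := log_seven_le
  have l2 := Real.log_two_lt_d9
  have h2 := Real.log_le_sub_one_of_pos (x := (q : ℝ) / 7) (by positivity)
  rw [Real.log_div (by linarith) (by norm_num)] at h2
  set x : ℝ := (q : ℝ) with hx
  have h3 : Real.log x / (x - 1) ≤ Real.log x / 6 :=
    div_le_div_of_nonneg_left (Real.log_nonneg (by linarith)) (by norm_num) (by linarith)
  rw [div_le_iff₀ (by linarith)]
  norm_num at *
  linarith

theorem large_case (q : ℕ) (hq : q.Prime) (hq5 : q < 10 ^ 5) (N : ℕ) (hN : 2000000 ≤ N)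
    (hev : N % 2 = 0) :
    ∃ p m : ℕ, p.Prime ∧ Squarefree m ∧ Nat.gcd m q = 1 ∧ N = p + m := by
  by_contra hbad
  push Not at hbad
  set P : Finset ℕ := (Ioc 0 N).filter Nat.Prime with hP
  have memP : ∀ p ∈ P, p.Prime ∧ p ≤ N := by
    intro p hp
    simp only [hP, mem_filter, mem_Ioc] at hp
    exact ⟨hp.2, hp.1.2⟩
  have odd_of : ∀ p : ℕ, p.Prime → 3 < p → p % 2 = 1 := by
    intro p hp h3
    rcases hp.eq_two_or_odd with h | h
    · omega
    · exact h
  set I : Finset ℕ := (range (N + 1)).filter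
    (fun r => r.Prime ∧ 3 ≤ r ∧ r ≠ q ∧ r * r ≤ N) with hI
  have memI : ∀ r ∈ I, r.Prime ∧ 3 ≤ r ∧ r ≠ q ∧ r * r ≤ N := by
    intro r hr
    simp only [hI, mem_filter] at hr
    exact hr.2
  set A₁ : Finset ℕ := P.filter (fun p => 3 < p ∧ q ∣ N - p) with hA
  set B : ℕ → Finset ℕ := fun r => P.filter (fun p => 3 < p ∧ r * r ∣ N - p ∧ ¬ q ∣ N - p) with hB
  have memA : ∀ p ∈ A₁, (p.Prime ∧ p ≤ N) ∧ 3 < p ∧ q ∣ N - p := by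
    intro p hp
    rw [hA, mem_filter] at hp
    exact ⟨memP p hp.1, hp.2⟩
  have memB : ∀ r, ∀ p ∈ B r, (p.Prime ∧ p ≤ N) ∧ 3 < p ∧ r * r ∣ N - p ∧ ¬ q ∣ N - p := by
    intro r p hp
    simp only [hB] at hp
    rw [mem_filter] at hp
    exact ⟨memP p hp.1, hp.2⟩
  have hlog := log_N_ge N hN
  have hNr : (2000000 : ℝ) ≤ N := by exact_mod_cast hN
  have cov : ∑ p ∈ P, Real.log p ≤ ∑ p ∈ P.filter (fun p => p ≤ 3), Real.log p +
      ∑ p ∈ A₁, Real.log p + ∑ r ∈ I, ∑ p ∈ B r, Real.log p := by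
    refine sum_cover P (fun p => Real.log p) (fun p => Real.log_natCast_nonneg p) (fun p => p ≤ 3)
      (fun p => 3 < p ∧ q ∣ N - p) I (fun r p => 3 < p ∧ r * r ∣ N - p ∧ ¬ q ∣ N - p) ?_
    intro p hp
    obtain ⟨hpp, hpN⟩ := memP p hp
    by_cases h3 : p ≤ 3
    · exact Or.inl h3
    right
    by_cases hqd : q ∣ N - p
    · exact Or.inl ⟨by omega, hqd⟩
    right
    have ho := odd_of p hpp (by omega)
    have hco : Nat.gcd (N - p) q = 1 := ((Nat.Prime.coprime_iff_not_dvd hq).2 hqd).symm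
    have hns : ¬ Squarefree (N - p) := fun hs => hbad p (N - p) hpp hs hco (by omega)
    rw [Nat.squarefree_iff_prime_squarefree] at hns
    push Not at hns
    obtain ⟨r, hr, hrd⟩ := hns
    have hle : r * r ≤ N - p := Nat.le_of_dvd (by omega) hrd
    have hrd1 : r ∣ N - p := (Dvd.intro _ rfl).trans hrd
    have hr2 : r ≠ 2 := by
      rintro rfl
      omega
    have hrq : r ≠ q := by
      rintro rfl
      exact hqd hrd1
    have := hr.two_le
    refine ⟨r, ?_, by omega, hrd, hqd⟩
    simp only [hI, mem_filter, mem_range]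
    refine ⟨?_, hr, by omega, hrq, by omega⟩
    have : r ≤ r * r := Nat.le_mul_self r
    omega
  have h0 : ∑ p ∈ P.filter (fun p => p ≤ 3), Real.log p ≤ 2 := by
    have hs : P.filter (fun p => p ≤ 3) ⊆ ({2, 3} : Finset ℕ) := by
      intro p hp
      rw [mem_filter] at hp
      have := (memP p hp.1).1.two_le
      have h3 := hp.2
      simp only [mem_insert, mem_singleton]
      omega
    refine (sum_le_sum_of_subset_of_nonneg hs fun p _ _ => Real.log_natCast_nonneg p).trans ?_
    rw [sum_pair (by norm_num)]
    have := log_three_le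
    have := Real.log_two_lt_d9
    push_cast
    linarith
  have core : ∀ (v : ℝ) (M : ℕ → ℝ), ∑ p ∈ A₁, Real.log p ≤ v * N + 7 * Real.log N →
      (∀ r ∈ I, ∑ p ∈ B r, Real.log p ≤ M r * N + 7 * Real.log N) →
      v + ∑ r ∈ I, M r ≤ 0.86 → False := by
    intro v M hv hM hs
    refine final_ineq N hN (v + ∑ r ∈ I, M r) hs I.card
      (card_I N I fun r hr => ⟨(memI r hr).1, (memI r hr).2.1, (memI r hr).2.2.2⟩) ?_
    have e : Chebyshev.theta N = ∑ p ∈ P, Real.log p := by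
      rw [Chebyshev.theta, Nat.floor_natCast]
    have hsum := sum_le_sum hM
    rw [sum_add_distrib, ← sum_mul, sum_const, nsmul_eq_mul] at hsum
    rw [e]
    linarith
  have hW : ∀ r ∈ I, ∑ p ∈ B r, Real.log p ≤ W r * N + 7 * Real.log N := by
    intro r hr
    obtain ⟨hrp, hr3, -, hrN⟩ := memI r hr
    refine cluster' N (2 * (r * r)) (B r) (fun p hp => (memB r p hp).1) ?_ (by nlinarith) hlog
      (by omega) (gc_two_sq_cond r hrp hr3)
    intro p hp p' hp'
    obtain ⟨⟨a1, a2⟩, a3, a4, -⟩ := memB r p hp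
    obtain ⟨⟨b1, b2⟩, b3, b4, -⟩ := memB r p' hp'
    have hro : r % 2 = 1 := by
      rcases hrp.eq_two_or_odd with h | h
      · omega
      · exact h
    exact modEq_two_mul (by rw [Nat.mul_mod, hro]) (odd_of p a1 a3) (odd_of p' b1 b3)
      (modEq_of_dvd_sub a2 b2 a4 b4)
  have hS := I_sum q I (fun r hr => ⟨(memI r hr).1, (memI r hr).2.1, (memI r hr).2.2.1⟩)
  have hA0 : A₁ = ∅ → ∑ p ∈ A₁, Real.log p ≤ 0 * (N : ℝ) + 7 * Real.log N := by
    intro h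
    rw [h, sum_empty]
    linarith
  have hV : 3 ≤ q → ∑ p ∈ A₁, Real.log p ≤
      gc (2 * q) / (((2 * q : ℕ) : ℝ) - 1) * N + 7 * Real.log N := by
    intro h3
    refine cluster' N (2 * q) A₁ (fun p hp => (memA p hp).1) ?_ (by omega) hlog
      (by omega) (gc_two_mul_cond q hq h3)
    intro p hp p' hp'
    obtain ⟨⟨a1, a2⟩, a3, a4⟩ := memA p hp
    obtain ⟨⟨b1, b2⟩, b3, b4⟩ := memA p' hp'
    have hqo : q % 2 = 1 := by
      rcases hq.eq_two_or_odd with h | h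
      · omega
      · exact h
    exact modEq_two_mul hqo (odd_of p a1 a3) (odd_of p' b1 b3) (modEq_of_dvd_sub a2 b2 a4 b4)
  have not3 : ∀ p : ℕ, p.Prime → 3 < p → p % 3 ≠ 0 := by
    intro p hp h3 h
    have := (Nat.prime_dvd_prime_iff_eq Nat.prime_three hp).1 (Nat.dvd_of_mod_eq_zero h)
    omega
  by_cases q2 : q = 2
  · refine core 0 W (hA0 ?_) hW ?_
    · refine eq_empty_of_forall_notMem fun p hp => ?_
      obtain ⟨⟨a1, a2⟩, a3, a4⟩ := memA p hp
      have := odd_of p a1 a3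
      rw [q2] at a4
      omega
    · rw [if_neg (by omega), if_neg (by omega)] at hS
      norm_num at hS ⊢
      linarith
  have hq3 : 3 ≤ q := by
    have := hq.two_le
    omega
  by_cases q3 : q = 3
  · rw [if_pos q3, if_neg (by omega)] at hS
    by_cases hN3 : N % 3 = 0
    · refine core 0 W (hA0 ?_) hW ?_
      · refine eq_empty_of_forall_notMem fun p hp => ?_
        obtain ⟨⟨a1, a2⟩, a3, a4⟩ := memA p hp
        have := not3 p a1 a3
        rw [q3] at a4
        omega
      · norm_num at hS ⊢
        linarith
    · refine core _ (fun r => 1 / 2 * W r) (hV hq3) ?_ ?_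
      · intro r hr
        obtain ⟨hrp, hr3, hrq, hrN⟩ := memI r hr
        have hr5 : 5 ≤ r := by
          have : r ≠ 4 := by
            rintro rfl
            norm_num at hrp
          omega
        have hro : r % 2 = 1 := by
          rcases hrp.eq_two_or_odd with h | h
          · omega
          · exact h
        refine (cluster' N (6 * (r * r)) (B r) (fun p hp => (memB r p hp).1) ?_ (by nlinarith) hlog
          (by omega) (gc_six_sq_cond r hrp hr5)).trans ?_
        · intro p hp p' hp'
          obtain ⟨⟨a1, a2⟩, a3, a4, a5⟩ := memB r p hp
          obtain ⟨⟨b1, b2⟩, b3, b4, b5⟩ := memB r p' hp'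
          have c1 := not3 p a1 a3
          have c2 := not3 p' b1 b3
          rw [q3] at a5 b5
          have m3 : p ≡ p' [MOD 3] := by
            have d1 : p % 3 ≠ N % 3 := by omega
            have d2 : p' % 3 ≠ N % 3 := by omega
            clear a5 b5
            unfold Nat.ModEq
            have e0 := Nat.mod_lt N (y := 3) (by norm_num)
            have e1 := Nat.mod_lt p (y := 3) (by norm_num)
            have e2 := Nat.mod_lt p' (y := 3) (by norm_num)
            generalize N % 3 = x at *
            generalize p % 3 = y at *
            generalize p' % 3 = z at *
            omega
          have hco : Nat.Coprime 3 (r * r) := by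
            have : Nat.Coprime 3 r := (Nat.coprime_primes Nat.prime_three hrp).2 (by omega)
            exact this.mul_right this
          have m := (Nat.modEq_and_modEq_iff_modEq_mul hco).1 ⟨m3, modEq_of_dvd_sub a2 b2 a4 b4⟩
          have := modEq_two_mul (by simp [Nat.mul_mod, hro]) (odd_of p a1 a3) (odd_of p' b1 b3) m
          rwa [← mul_assoc] at this
        · have := six_le_W r hrp hr5
          gcongr
      · rw [← mul_sum]
        have := V_three
        rw [q3]
        norm_num at hS this ⊢
        linarith
  rw [if_neg q3] at hS
  refine core _ W (hV hq3) hW ?_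
  by_cases q5 : q = 5
  · rw [if_pos q5] at hS
    have := V_five
    rw [q5]
    norm_num at hS this ⊢
    linarith
  · have hq7 : 7 ≤ q := by
      have : q ≠ 4 := by
        rintro rfl
        norm_num at hq
      have : q ≠ 6 := by
        rintro rfl
        norm_num at hq
      omega
    rw [if_neg q5] at hS
    have := V_seven q hq hq7
    norm_num at hS this ⊢
    linarith

theorem even_case (q : ℕ) (hq : q.Prime) (hq5 : q < 10 ^ 5) (N : ℕ) (hN : 4 ≤ N)
    (hev : N % 2 = 0) :
    ∃ p m : ℕ, p.Prime ∧ Squarefree m ∧ Nat.gcd m q = 1 ∧ N = p + m := by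
  by_cases h : 2000000 ≤ N
  · exact large_case q hq hq5 N h hev
  · obtain ⟨p, m, a, b, c, d⟩ := finite_case q hq (N / 2) (by omega) (by omega)
    exact ⟨p, m, a, b, c, by omega⟩

end

/-- For every prime `q` with `2 ≤ q < 10^5`, every integer greater than four can be
written as the sum of two primes and a square-free number co-prime to `q`. -/
theorem two_primes_add_squarefree_coprime (q : ℕ) (hq : q.Prime) (hq2 : 2 ≤ q)
    (hq5 : q < 10 ^ 5) (n : ℕ) (hn : 4 < n) :
    ∃ p₁ p₂ k : ℕ, p₁.Prime ∧ p₂.Prime ∧ Squarefree k ∧ Nat.gcd k q = 1 ∧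
      n = p₁ + p₂ + k := by
  by_cases h5 : n = 5
  · exact ⟨2, 2, 1, Nat.prime_two, Nat.prime_two, squarefree_one, Nat.gcd_one_left q, h5⟩
  · rcases Nat.mod_two_eq_zero_or_one n with h | h
    · obtain ⟨p, m, a, b, c, d⟩ := even_case q hq hq5 (n - 2) (by omega) (by omega)
      exact ⟨2, p, m, Nat.prime_two, a, b, c, by omega⟩
    · obtain ⟨p, m, a, b, c, d⟩ := even_case q hq hq5 (n - 3) (by omega) (by omega)
      exact ⟨3, p, m, Nat.prime_three, a, b, c, by omega⟩
end

section
/- Artin's constant exceeds 0.37395; that is, ∏_p (1 − 1/(p(p−1))) > 0.37395, where the product runs over all primes p. -/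
/-- The accelerated factor, extended by `1` off the primes. -/
noncomputable def accFactor (n : ℕ) : ℝ :=
  if n.Prime then 1 - 1 / (((n : ℝ) - 1) ^ 2 * ((n : ℝ) + 1)) else 1

theorem artin_multipliable :
    Multipliable (fun p : Nat.Primes => (1 - 1 / ((p : ℝ) * ((p : ℝ) - 1)))) := by
  have hs : Summable (fun p : Nat.Primes => -(1 / ((p : ℝ) * ((p : ℝ) - 1)))) := by
    apply Summable.neg
    have h2 : Summable (fun n : ℕ => 2 * (1 / (n : ℝ) ^ 2)) :=
      (Real.summable_one_div_nat_pow.mpr (by norm_num)).mul_left 2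
    refine Summable.of_nonneg_of_le ?_ ?_ (h2.comp_injective Nat.Primes.coe_nat_injective)
    · intro p
      have : (2 : ℝ) ≤ p := by exact_mod_cast p.2.two_le
      have : (0 : ℝ) ≤ (p : ℝ) - 1 := by linarith
      positivity
    · intro p
      have : (2 : ℝ) ≤ p := by exact_mod_cast p.2.two_le
      simp only [Function.comp]
      rw [← mul_div_assoc, mul_one, div_le_div_iff₀ (by nlinarith) (by positivity)]
      nlinarith
  have := Real.multipliable_one_add_of_summable hs
  simpa [sub_eq_add_neg] using this

theorem zeta_two_prod :
    HasProd (fun p : Nat.Primes => (1 - ((p : ℝ) ^ 2)⁻¹)⁻¹) (Real.pi ^ 2 / 6) := by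
  let f : ℕ →*₀ ℝ :=
    { toFun := fun n => ((n : ℝ) ^ 2)⁻¹
      map_zero' := by simp
      map_one' := by simp
      map_mul' := by intro a b; push_cast; rw [mul_pow, mul_inv] }
  have hz : HasSum (fun n : ℕ => f n) (Real.pi ^ 2 / 6) := by
    simpa [f] using hasSum_zeta_two
  have hsum : Summable (fun n => ‖f n‖) := hz.summable.norm
  have := EulerProduct.eulerProduct_completely_multiplicative_hasProd hsum
  rw [hz.tsum_eq] at this
  exact this

theorem acc_hasProd :
    HasProd accFactor ((∏' p : Nat.Primes, (1 - 1 / ((p : ℝ) * ((p : ℝ) - 1)))) *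
      (Real.pi ^ 2 / 6)) := by
  have h := artin_multipliable.hasProd.mul zeta_two_prod
  have h2 : HasProd (accFactor ∘ ((↑) : {n : ℕ | n.Prime} → ℕ))
      ((∏' p : Nat.Primes, (1 - 1 / ((p : ℝ) * ((p : ℝ) - 1)))) * (Real.pi ^ 2 / 6)) := by
    have hfun : (accFactor ∘ ((↑) : {n : ℕ | n.Prime} → ℕ)) = (fun p : Nat.Primes =>
        (1 - 1 / ((p : ℝ) * ((p : ℝ) - 1))) * (1 - ((p : ℝ) ^ 2)⁻¹)⁻¹) := ?_
    · rw [hfun]; exact h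
    funext p
    have hp : (p : ℕ).Prime := p.2
    have : (2 : ℝ) ≤ (p : ℕ) := by exact_mod_cast hp.two_le
    simp only [Function.comp, accFactor, if_pos hp]
    generalize ((p : ℕ) : ℝ) = x at *
    have h0 : x ≠ 0 := by linarith
    have h1 : x - 1 ≠ 0 := by intro h; linarith
    have h3 : x + 1 ≠ 0 := by intro h; linarith
    have h4 : x ^ 2 - 1 ≠ 0 := by
      have : x ^ 2 - 1 = (x - 1) * (x + 1) := by ring
      rw [this]; exact mul_ne_zero h1 h3
    have h5 : (1 - (x ^ 2)⁻¹)⁻¹ = x ^ 2 / ((x - 1) * (x + 1)) := by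
      rw [show 1 - (x ^ 2)⁻¹ = ((x - 1) * (x + 1)) / x ^ 2 by field_simp; ring, inv_div]
    rw [h5]
    field_simp
    ring
  rw [hasProd_subtype_iff_mulIndicator] at h2
  convert h2 using 1
  funext n
  by_cases hn : n.Prime <;> simp [Set.mulIndicator, accFactor, hn]

theorem acc_bound (N : ℕ) (hN : 2 ≤ N) (hpos : 0 ≤ ∏ k ∈ Finset.range (N + 1), accFactor k) (m : ℕ) :
    (∏ k ∈ Finset.range (N + 1), accFactor k) *
      (1 - 1 / (2 * (N : ℝ) * (N - 1)) + 1 / (2 * ((N + m : ℕ) : ℝ) * ((N + m : ℕ) - 1))) ≤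
    ∏ k ∈ Finset.range (N + m + 1), accFactor k := by
  induction m with
  | zero => simp
  | succ m ih =>
    rw [show N + (m + 1) + 1 = (N + m + 1) + 1 by ring, Finset.prod_range_succ _ (N + m + 1)]
    set P := ∏ k ∈ Finset.range (N + 1), accFactor k
    have hx : (N : ℝ) ≤ (N + m : ℕ) := by push_cast; linarith [(Nat.cast_nonneg m : (0 : ℝ) ≤ m)]
    have hN' : (2 : ℝ) ≤ N := by exact_mod_cast hN
    rw [show N + (m + 1) = (N + m) + 1 by ring]
    generalize N + m = M at *
    have hA : accFactor (M + 1) ≥ 1 - 1 / ((M : ℝ) ^ 2 * (M + 2)) := by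
      unfold accFactor
      split_ifs
      · push_cast
        rw [show (M : ℝ) + 1 - 1 = M by ring, show (M : ℝ) + 1 + 1 = M + 2 by ring]
      · have : (0 : ℝ) ≤ 1 / ((M : ℝ) ^ 2 * (M + 2)) := by positivity
        linarith
    push_cast
    generalize (M : ℝ) = x at *
    have hx2 : 2 ≤ x := by linarith
    have ha1 : 1 / (x ^ 2 * (x + 2)) ≤ 1 / (2 * x * (x - 1)) - 1 / (2 * (x + 1) * (x + 1 - 1)) := by
      have h1 : x - 1 ≠ 0 := by intro h; linarith
      have h2 : x ≠ 0 := by intro h; linarith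
      have h3 : x + 1 ≠ 0 := by intro h; linarith
      have : 1 / (2 * x * (x - 1)) - 1 / (2 * (x + 1) * (x + 1 - 1)) = 1 / (x * ((x - 1) * (x + 1))) := by
        rw [show x + 1 - 1 = x by ring]
        field_simp
        ring
      rw [this]
      apply one_div_le_one_div_of_le
      · have : 0 < x - 1 := by linarith
        positivity
      · nlinarith
    have ha0 : 0 ≤ 1 / (x ^ 2 * (x + 2)) := by positivity
    have ha2 : 1 / (x ^ 2 * (x + 2)) ≤ 1 := by
      rw [div_le_one (by positivity)]; nlinarith
    have hb : 1 / (2 * x * (x - 1)) ≤ 1 / (2 * (N : ℝ) * (N - 1)) := by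
      apply one_div_le_one_div_of_le
      · nlinarith
      · nlinarith
    have hb2 : 1 / (2 * (N : ℝ) * (N - 1)) ≤ 1 := by
      rw [div_le_one (by nlinarith)]; nlinarith
    have hb3 : 0 ≤ 1 / (2 * x * (x - 1)) := by
      have : 0 < x - 1 := by linarith
      positivity
    generalize 1 / (2 * (N : ℝ) * (N - 1)) = bN at *
    generalize 1 / (2 * x * (x - 1)) = bx at *
    generalize 1 / (2 * (x + 1) * (x + 1 - 1)) = bnext at *
    generalize 1 / (x ^ 2 * (x + 2)) = a at *
    generalize (∏ k ∈ Finset.range (M + 1), accFactor k) = Q at *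
    calc P * (1 - bN + bnext) ≤ P * ((1 - bN + bx) * (1 - a)) := by
          apply mul_le_mul_of_nonneg_left _ hpos
          nlinarith
      _ = P * (1 - bN + bx) * (1 - a) := by ring
      _ ≤ Q * (1 - a) := mul_le_mul_of_nonneg_right ih (by linarith)
      _ ≤ Q * accFactor (M + 1) := by
          apply mul_le_mul_of_nonneg_left hA
          exact le_trans (mul_nonneg hpos (by linarith)) ih

set_option maxRecDepth 100000 in
theorem acc_num : (0.61513 : ℝ) ≤ ∏ k ∈ Finset.range (256 + 1), accFactor k := by
  simp only [Finset.prod_range_succ, Finset.prod_range_zero, accFactor]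
  norm_num

/-- Artin's constant `∏_p (1 − 1/(p(p−1)))`, the product running over all primes,
converges and exceeds `0.37395`. -/
theorem artin_constant_gt :
    Multipliable (fun p : Nat.Primes => (1 - 1 / ((p : ℝ) * ((p : ℝ) - 1)))) ∧
      (∏' p : Nat.Primes, (1 - 1 / ((p : ℝ) * ((p : ℝ) - 1)))) > 0.37395 := by
  refine ⟨artin_multipliable, ?_⟩
  have hn := acc_num
  have hb := acc_bound 256 (by norm_num) (by linarith)
  have ht := acc_hasProd.tendsto_prod_nat
  generalize (∏' p : Nat.Primes, (1 - 1 / ((p : ℝ) * ((p : ℝ) - 1)))) = A at *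
  have hle : (0.61513 : ℝ) * (1 - 1 / (2 * 256 * 255)) ≤ A * (Real.pi ^ 2 / 6) := by
    refine ge_of_tendsto ht ?_
    filter_upwards [Filter.eventually_ge_atTop 257] with n hn'
    obtain ⟨m, rfl⟩ := Nat.exists_eq_add_of_le hn'
    have h := hb m
    rw [show 257 + m = 256 + m + 1 by ring]
    refine le_trans ?_ h
    apply mul_le_mul hn _ (by norm_num) (by linarith)
    have : (0 : ℝ) ≤ 1 / (2 * ((256 + m : ℕ) : ℝ) * ((256 + m : ℕ) - 1)) := by
      push_cast
      have : (0 : ℝ) ≤ 256 + (m : ℝ) - 1 := by linarith [(Nat.cast_nonneg m : (0 : ℝ) ≤ m)]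
      positivity
    norm_num at this ⊢
    linarith
  have hpi := Real.pi_lt_d6
  have hpi0 := Real.pi_pos
  have hsq : Real.pi ^ 2 < 3.141593 ^ 2 := by gcongr
  by_contra hcon
  have hA : A ≤ 0.37395 := not_lt.mp hcon
  have : A * (Real.pi ^ 2 / 6) ≤ 0.37395 * (3.141593 ^ 2 / 6) := by
    apply mul_le_mul hA (by linarith) (by positivity) (by norm_num)
  norm_num at this hle
  linarith
end

section
/- The sum over all square-free integers a > 316 of 1/φ(a²) is less than 0.0096; that is, ∑_{a > 316} μ²(a)/φ(a²) < 0.0096. -/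
lemma totient_mul_self_eq (a : ℕ) : Nat.totient (a * a) = a * Nat.totient a := by
  rcases Nat.eq_zero_or_pos a with rfl | h
  · simp
  · have e := Nat.totient_gcd_mul_totient_mul a a
    rw [Nat.gcd_self] at e
    have h' := Nat.totient_pos.2 h
    refine Nat.eq_of_mul_eq_mul_left h' ?_
    rw [e]; ring

/-- Numbers that survive sieving by the primes below 20 (a superset of the primes). -/
def sieveTest (n : ℕ) : Bool :=
  n == 2 || n == 3 || n == 5 || n == 7 || n == 11 || n == 13 || n == 17 || n == 19 ||
    (Nat.gcd n 9699690 == 1 && decide (2 ≤ n))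

lemma sieveTest_of_prime {p : ℕ} (hp : p.Prime) : sieveTest p = true := by
  by_cases h : p ∣ 9699690
  · have h' : p ∈ Nat.primeFactorsList 9699690 := by
      rw [Nat.mem_primeFactorsList (by norm_num)]; exact ⟨hp, h⟩
    have e : Nat.primeFactorsList 9699690 = [2,3,5,7,11,13,17,19] := by
      simp
    rw [e] at h'
    simp only [List.mem_cons, List.not_mem_nil, or_false] at h'
    rcases h' with h | h | h | h | h | h | h | h <;> subst h <;> rfl
  · have := (Nat.Prime.coprime_iff_not_dvd hp).2 h
    have h2 := hp.two_le
    simp [sieveTest, Nat.Coprime] at *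
    tauto

/-- A quick square-freeness test for numbers below 400. -/
def sqfTest (n : ℕ) : Bool :=
  decide (n ≠ 0) && (List.range 18).all fun k => decide (n % ((k + 2) * (k + 2)) ≠ 0)

lemma squarefree_of_sqfTest {n : ℕ} (hn : n < 400) (h : sqfTest n = true) : Squarefree n := by
  simp only [sqfTest, Bool.and_eq_true, decide_eq_true_eq, List.all_eq_true, List.mem_range] at h
  obtain ⟨h0, h⟩ := h
  intro x hx
  have hle := Nat.le_of_dvd (Nat.pos_of_ne_zero h0) hx
  have hx20 : x < 20 := by nlinarith
  by_contra hu
  have hx1 : x ≠ 1 := by simpa using hu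
  have hx0 : x ≠ 0 := by rintro rfl; simp at hx; exact h0 hx
  refine h (x - 2) (by omega) ?_
  rw [Nat.sub_add_cancel (by omega)]
  exact Nat.mod_eq_zero_of_dvd hx

noncomputable def sqfTerm (a : ℕ) : ℝ := if Squarefree a then (1 : ℝ) / (Nat.totient (a ^ 2)) else 0

lemma sqfTerm_nonneg (a : ℕ) : 0 ≤ sqfTerm a := by
  unfold sqfTerm; split_ifs <;> positivity

lemma sqfTerm_eq {a : ℕ} (h : Squarefree a) :
    sqfTerm a = ∏ p ∈ a.primeFactors, (1 : ℝ) / (p * (p - 1)) := by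
  have h0 : 0 < a := Nat.pos_of_ne_zero h.ne_zero
  have e1 : ∏ p ∈ a.primeFactors, p = a := Nat.prod_primeFactors_of_squarefree h
  have e2 := Nat.totient_mul_prod_primeFactors a
  rw [e1, mul_comm] at e2
  have e3 := Nat.eq_of_mul_eq_mul_left h0 e2
  have e4 : Nat.totient (a ^ 2) = a * Nat.totient a := by
    rw [pow_two, totient_mul_self_eq]
  have e5 : ((∏ p ∈ a.primeFactors, (p - 1) : ℕ) : ℝ) = ∏ p ∈ a.primeFactors, ((p : ℝ) - 1) := by
    push_cast
    refine Finset.prod_congr rfl fun p hp => ?_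
    rw [Nat.cast_sub (Nat.prime_of_mem_primeFactors hp).one_le]; simp
  have e6 : ((∏ p ∈ a.primeFactors, p : ℕ) : ℝ) = a := by rw [e1]
  rw [sqfTerm, if_pos h, e4, e3, Nat.cast_mul, e5, ← e6]
  push_cast
  rw [Finset.prod_div_distrib, Finset.prod_mul_distrib]; simp

lemma sum_le_prod (N : ℕ) : ∑ a ∈ Finset.range N, sqfTerm a ≤
    ∏ p ∈ (Finset.range N).filter Nat.Prime, (1 + (1 : ℝ) / (p * (p - 1))) := by
  rw [Finset.prod_one_add]
  have : ∑ a ∈ Finset.range N, sqfTerm a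
      = ∑ a ∈ (Finset.range N).filter Squarefree, sqfTerm a := by
    rw [Finset.sum_filter]
    refine Finset.sum_congr rfl fun a _ => ?_
    unfold sqfTerm; split_ifs <;> rfl
  rw [this, Finset.sum_congr rfl (fun a ha => sqfTerm_eq (Finset.mem_filter.1 ha).2)]
  have inj : Set.InjOn Nat.primeFactors ((Finset.range N).filter Squarefree : Finset ℕ) := by
    intro a ha b hb hab
    simp only [Finset.coe_filter, Set.mem_ofPred_eq] at ha hb
    rw [← Nat.prod_primeFactors_of_squarefree ha.2, ← Nat.prod_primeFactors_of_squarefree hb.2, hab]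
  rw [← Finset.sum_image (f := fun t : Finset ℕ => ∏ p ∈ t, (1 : ℝ) / (p * (p - 1))) inj]
  refine Finset.sum_le_sum_of_subset_of_nonneg ?_ ?_
  · intro t ht
    simp only [Finset.mem_image, Finset.mem_filter, Finset.mem_range] at ht
    obtain ⟨a, ⟨haN, ha⟩, rfl⟩ := ht
    rw [Finset.mem_powerset]
    intro p hp
    have := Nat.le_of_mem_primeFactors hp
    simp only [Finset.mem_filter, Finset.mem_range]
    exact ⟨by omega, Nat.prime_of_mem_primeFactors hp⟩
  · intro t ht _
    refine Finset.prod_nonneg fun p hp => ?_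
    have := (Finset.mem_filter.1 (Finset.mem_powerset.1 ht hp)).2.one_le
    have : (1 : ℝ) ≤ p := by exact_mod_cast this
    have : (0 : ℝ) ≤ p - 1 := by linarith
    positivity

lemma prod_tail (k : ℕ) :
    ∏ p ∈ (Finset.range (401 + k)).filter Nat.Prime, (1 + (1 : ℝ) / (p * (p - 1))) ≤
    (∏ p ∈ (Finset.range 401).filter Nat.Prime, (1 + (1 : ℝ) / (p * (p - 1)))) *
      (400 / 399 * ((399 + k) / (400 + k))) := by
  induction k with
  | zero => norm_num
  | succ k ih =>
    have hP : 0 ≤ ∏ p ∈ (Finset.range 401).filter Nat.Prime, (1 + (1 : ℝ) / (p * (p - 1))) := by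
      refine Finset.prod_nonneg fun p hp => ?_
      have := (Finset.mem_filter.1 hp).2.one_le
      have : (1 : ℝ) ≤ p := by exact_mod_cast this
      have : (0 : ℝ) ≤ p - 1 := by linarith
      positivity
    set P := ∏ p ∈ (Finset.range 401).filter Nat.Prime, (1 + (1 : ℝ) / (p * (p - 1)))
    have hk : (0 : ℝ) ≤ k := by positivity
    have key : ((399 + k) / (400 + k) : ℝ) * (1 + 1 / ((401 + k) * (400 + k)))
        ≤ (400 + k) / (401 + k) := by
      rw [div_mul_eq_mul_div, div_le_div_iff₀ (by positivity) (by positivity)]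
      have : (1 + 1 / ((401 + k) * (400 + k)) : ℝ) * (401 + k) = 401 + k + 1 / (400 + k) := by
        field_simp
      rw [mul_assoc, this]
      have h1 : (1 : ℝ) / (400 + k) * (400 + k) = 1 := by field_simp
      have h2 : (0 : ℝ) ≤ 1 / (400 + k) := by positivity
      nlinarith
    have hge : ((399 + k) / (400 + k) : ℝ) ≤ (400 + k) / (401 + k) := by
      rw [div_le_div_iff₀ (by positivity) (by positivity)]; nlinarith
    have hc : (400 / 399 * ((399 + (k + 1 : ℕ)) / (400 + (k + 1 : ℕ))) : ℝ)
        = 400 / 399 * ((400 + k) / (401 + k)) := by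
      push_cast; ring
    rw [hc, ← add_assoc, Finset.range_add_one, Finset.filter_insert]
    split_ifs with hp
    · rw [Finset.prod_insert (by simp)]
      have hx : (1 + (1 : ℝ) / (((401 + k : ℕ) : ℝ) * (((401 + k : ℕ) : ℝ) - 1)))
          = 1 + 1 / ((401 + k) * (400 + k)) := by
        push_cast; congr 3; ring
      rw [hx]
      calc _ ≤ (1 + 1 / ((401 + k) * (400 + k)) : ℝ) * (P * (400 / 399 * ((399 + k) / (400 + k)))) := by
            gcongr
        _ = P * (400 / 399 * (((399 + k) / (400 + k) : ℝ) * (1 + 1 / ((401 + k) * (400 + k))))) := by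
            ring
        _ ≤ _ := by gcongr
    · exact ih.trans (by gcongr)

lemma prod_num_le :
    (∏ n ∈ (Finset.range 401).filter (fun n => sieveTest n = true), (n * (n - 1) + 1)) * 1000 ≤
    (∏ n ∈ (Finset.range 401).filter (fun n => sieveTest n = true), (n * (n - 1))) * 1944 := by
  decide +kernel

lemma sum_num_ge : 19403000 ≤ ∑ a ∈ (Finset.range 317).filter (fun n => sqfTest n = true),
    10000000 / (a * Nat.totient a) := by
  decide +kernel

lemma prod_head : ∏ p ∈ (Finset.range 401).filter Nat.Prime, (1 + (1 : ℝ) / (p * (p - 1)))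
    ≤ 1.944 := by
  set S := (Finset.range 401).filter (fun n => sieveTest n = true) with hS
  have h2 : ∀ n ∈ S, 2 ≤ n := by
    intro n hn
    have := (Finset.mem_filter.1 hn).2
    simp only [sieveTest, Bool.or_eq_true, beq_iff_eq, Bool.and_eq_true, decide_eq_true_eq] at this
    omega
  have hpos : ∀ n ∈ S, (0 : ℝ) < ((n * (n - 1) : ℕ) : ℝ) := by
    intro n hn
    have := h2 n hn
    have : 0 < n * (n - 1) := Nat.mul_pos (by omega) (by omega)
    exact_mod_cast this
  have hcast : ∀ n ∈ S, (1 + (1 : ℝ) / (n * (n - 1)))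
      = ((n * (n - 1) + 1 : ℕ) : ℝ) / ((n * (n - 1) : ℕ) : ℝ) := by
    intro n hn
    have h0 := hpos n hn
    have e : ((n * (n - 1) : ℕ) : ℝ) = (n : ℝ) * (n - 1) := by
      rw [Nat.cast_mul, Nat.cast_sub (by have := h2 n hn; omega)]; simp
    rw [Nat.cast_add, add_div, div_self h0.ne', e]; simp
  calc _ ≤ ∏ n ∈ S, (1 + (1 : ℝ) / (n * (n - 1))) := by
        refine Finset.prod_le_prod_of_subset_of_one_le ?_ ?_ ?_
        · intro p hp
          rw [Finset.mem_filter] at hp ⊢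
          exact ⟨hp.1, sieveTest_of_prime hp.2⟩
        · intro p hp
          have := (Finset.mem_filter.1 hp).2.one_le
          have : (1 : ℝ) ≤ p := by exact_mod_cast this
          have : (0 : ℝ) ≤ p - 1 := by linarith
          positivity
        · intro n hn _
          have : (1 : ℝ) ≤ n := by exact_mod_cast (one_le_two.trans (h2 n hn))
          have : (0 : ℝ) ≤ n - 1 := by linarith
          have : (0 : ℝ) ≤ 1 / (n * (n - 1)) := by positivity
          linarith
    _ = ((∏ n ∈ S, (n * (n - 1) + 1) : ℕ) : ℝ) / ((∏ n ∈ S, (n * (n - 1)) : ℕ) : ℝ) := by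
        rw [Finset.prod_congr rfl hcast, Finset.prod_div_distrib, Nat.cast_prod, Nat.cast_prod]
    _ ≤ 1.944 := by
        rw [div_le_iff₀ (by rw [Nat.cast_prod]; exact Finset.prod_pos hpos)]
        have h : ((∏ n ∈ S, (n * (n - 1) + 1) : ℕ) : ℝ) * 1000
            ≤ ((∏ n ∈ S, (n * (n - 1)) : ℕ) : ℝ) * 1944 := by exact_mod_cast prod_num_le
        linarith

lemma sum_head : 1.9403 ≤ ∑ a ∈ Finset.range 317, sqfTerm a := by
  have h1 : ∑ a ∈ (Finset.range 317).filter (fun n => sqfTest n = true), sqfTerm a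
      ≤ ∑ a ∈ Finset.range 317, sqfTerm a :=
    Finset.sum_le_sum_of_subset_of_nonneg (Finset.filter_subset _ _) fun a _ _ => sqfTerm_nonneg a
  have h2 : ∑ a ∈ (Finset.range 317).filter (fun n => sqfTest n = true),
      ((10000000 / (a * Nat.totient a) : ℕ) : ℝ) / 10000000
      ≤ ∑ a ∈ (Finset.range 317).filter (fun n => sqfTest n = true), sqfTerm a := by
    refine Finset.sum_le_sum fun a ha => ?_
    rw [Finset.mem_filter, Finset.mem_range] at ha
    have hs := squarefree_of_sqfTest (by omega) ha.2
    rw [sqfTerm, if_pos hs, pow_two, totient_mul_self_eq, div_le_iff₀ (by norm_num)]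
    refine Nat.cast_div_le.trans (le_of_eq ?_)
    push_cast; ring
  have h3 : (19403000 : ℝ) ≤ ((∑ a ∈ (Finset.range 317).filter (fun n => sqfTest n = true),
    10000000 / (a * Nat.totient a) : ℕ) : ℝ) := by exact_mod_cast sum_num_ge
  rw [Nat.cast_sum] at h3
  rw [← Finset.sum_div] at h2
  have : (1.9403 : ℝ) ≤ (∑ a ∈ (Finset.range 317).filter (fun n => sqfTest n = true),
      ((10000000 / (a * Nat.totient a) : ℕ) : ℝ)) / 10000000 := by
    rw [le_div_iff₀ (by norm_num)]; linarith
  linarith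

lemma partial_bound (n : ℕ) : ∑ a ∈ Finset.range n,
    (if 316 < a ∧ Squarefree a then (1 : ℝ) / (Nat.totient (a ^ 2)) else 0) ≤ 0.0095 := by
  have e : ∀ a, (if 316 < a ∧ Squarefree a then (1 : ℝ) / (Nat.totient (a ^ 2)) else 0)
      = if 316 < a then sqfTerm a else 0 := by
    intro a; unfold sqfTerm; split_ifs <;> tauto
  simp only [e]
  have h1 : ∑ a ∈ Finset.range n, (if 316 < a then sqfTerm a else 0)
      ≤ ∑ a ∈ Finset.range (401 + n), (if 316 < a then sqfTerm a else 0) := by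
    refine Finset.sum_le_sum_of_subset_of_nonneg (by simp) fun a _ _ => ?_
    split_ifs
    · exact sqfTerm_nonneg a
    · exact le_rfl
  have h2 : ∑ a ∈ Finset.range (401 + n), (if 316 < a then sqfTerm a else 0)
      + ∑ a ∈ Finset.range 317, sqfTerm a = ∑ a ∈ Finset.range (401 + n), sqfTerm a := by
    have : Finset.range 317 = (Finset.range (401 + n)).filter (fun a => ¬ 316 < a) := by
      ext a; simp; omega
    rw [this, ← Finset.sum_filter, Finset.sum_filter_add_sum_filter_not]
  have h3 := sum_le_prod (401 + n)
  have h4 := prod_tail n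
  have h5 := prod_head
  have h6 := sum_head
  have h7 : (400 / 399 * ((399 + n) / (400 + n)) : ℝ) ≤ 400 / 399 := by
    have : ((399 + n) / (400 + n) : ℝ) ≤ 1 := by
      rw [div_le_one (by positivity)]; linarith
    linarith
  have h8 := mul_le_mul h5 h7 (by positivity) (by norm_num)
  have h9 : (1.944 * (400 / 399) - 1.9403 : ℝ) ≤ 0.0095 := by norm_num
  linarith

/-- The sum over all square-free integers `a > 316` of `1/φ(a²)` is less than `0.0096`:
`∑_{a > 316} μ²(a)/φ(a²) < 0.0096`. -/
theorem tsum_squarefree_inv_totient_sq_lt :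
    Summable (fun a : ℕ =>
        if 316 < a ∧ Squarefree a then (1 : ℝ) / (Nat.totient (a ^ 2)) else 0) ∧
    (∑' a : ℕ, if 316 < a ∧ Squarefree a then (1 : ℝ) / (Nat.totient (a ^ 2)) else 0)
      < 0.0096 := by
  have h0 : ∀ a : ℕ, 0 ≤
      (if 316 < a ∧ Squarefree a then (1 : ℝ) / (Nat.totient (a ^ 2)) else 0) := by
    intro a; split_ifs <;> positivity
  refine ⟨summable_of_sum_range_le h0 partial_bound, ?_⟩
  exact (Real.tsum_le_of_sum_range_le h0 partial_bound).trans_lt (by norm_num)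
end
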